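/- arXiv:1411.2397 — 2 statements merged into one kernel-verified Lean document; each statement's English description precedes it below -/
import Mathlib

section
/- Let K be a number field with ring of integers O_K, let I ⊆ O_K be a nonzero ideal, and let x ∈ O_K be coprime to I, i.e. the ideal generated by x together with I is all of O_K. Then there are infinitely many pairwise non-associated elements y ∈ O_K such that the principal ideal (y) is a prime ideal and y ≡ x (mod I); equivalently, the set of prime ideals of O_K of the form y·O_K with y ∈ O_K satisfying y ≡ x (mod I) is infinite. -/
open NumberField

section EM
open MeasureTheory intervalIntegral

lemma em_finite (g : ℝ → ℝ) (hg : ContDiff ℝ (⊤ : ℕ∞) g) (a : ℝ) (m : ℕ)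
    (h0 : ∀ j, iteratedDeriv j g a = 0) (h1 : ∀ j, iteratedDeriv j g (a + m) = 0) (k : ℕ) :
    (∑ i ∈ Finset.range m, g (a + i)) - ∫ x in a..(a + m), g x =
      ((-1) ^ k / (k + 1).factorial : ℝ) * ∑ i ∈ Finset.range m,
        ∫ x in (0:ℝ)..1, bernoulliFun (k + 1) x * iteratedDeriv (k + 1) g (a + i + x) := by
  have hd : ∀ j x, HasDerivAt (iteratedDeriv j g) (iteratedDeriv (j + 1) g x) x := by
    intro j x
    rw [iteratedDeriv_succ]
    exact ((hg.differentiable_iteratedDeriv j (by exact_mod_cast WithTop.coe_lt_top _)) x).hasDerivAt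
  have hc : ∀ j, Continuous (iteratedDeriv j g) := fun j =>
    hg.continuous_iteratedDeriv j (by exact_mod_cast le_top)
  have key : ∀ (j : ℕ) (b : ℝ), ∫ x in (0:ℝ)..1, bernoulliFun j x * iteratedDeriv j g (b + x) =
      (bernoulliFun (j + 1) 1 * iteratedDeriv j g (b + 1) -
        bernoulliFun (j + 1) 0 * iteratedDeriv j g b) / (j + 1) -
      (1 / (j + 1)) * ∫ x in (0:ℝ)..1, bernoulliFun (j + 1) x * iteratedDeriv (j + 1) g (b + x) := by
    intro j b
    have hj : (j + 1 : ℝ) ≠ 0 := by positivity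
    have := integral_mul_deriv_eq_deriv_mul (a := (0:ℝ)) (b := 1)
      (u := bernoulliFun (j + 1)) (u' := fun x => (j + 1) * bernoulliFun j x)
      (v := fun x => iteratedDeriv j g (b + x)) (v' := fun x => iteratedDeriv (j + 1) g (b + x))
      (fun x _ => by simpa using hasDerivAt_bernoulliFun (j + 1) x)
      (fun x _ => by simpa using (hd j (b + x)).comp_const_add b x)
      (Continuous.intervalIntegrable (continuous_const.mul (continuous_bernoulliFun _)) _ _)
      (Continuous.intervalIntegrable ((hc (j+1)).comp (by fun_prop)) _ _)
    rw [this]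
    simp only [mul_assoc, intervalIntegral.integral_const_mul, add_zero]
    field_simp
    ring
  induction k with
  | zero =>
    have hsum : ∫ x in a..(a + m), g x =
        ∑ i ∈ Finset.range m, ∫ x in (0:ℝ)..1, g (a + i + x) := by
      have := sum_integral_adjacent_intervals (f := g) (μ := volume) (a := fun i : ℕ => a + i)
        (n := m) (fun k _ => hg.continuous.intervalIntegrable _ _)
      simp only [Nat.cast_zero, add_zero] at this
      rw [← this]
      refine Finset.sum_congr rfl fun i _ => ?_
      rw [intervalIntegral.integral_comp_add_left]
      simp [add_assoc]
    rw [hsum]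
    have k0 := key 0
    simp only [bernoulliFun_zero, one_mul, iteratedDeriv_zero, zero_add, bernoulliFun_one,
      Nat.cast_zero, div_one] at k0
    simp only [k0, Finset.sum_sub_distrib]
    have t1 : ∑ i ∈ Finset.range m, ((1 - 1/2) * g (a + i + 1)) - ∑ i ∈ Finset.range m, ((0 - 1/2) * g (a + i)) = ∑ i ∈ Finset.range m, g (a + i) := by
      have := Finset.sum_range_sub (fun i : ℕ => (1/2 : ℝ) * g (a + i)) m
      have e0 := h0 0
      have e1 := h1 0
      simp only [iteratedDeriv_zero] at e0 e1
      simp only [e0, e1, Nat.cast_zero, add_zero, mul_zero, sub_zero, Nat.cast_add, Nat.cast_one, Finset.sum_sub_distrib] at this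
      simp only [← add_assoc] at this
      have e : ∑ i ∈ Finset.range m, g (a + i) = ∑ i ∈ Finset.range m, (1/2 * g (a + i)) + ∑ i ∈ Finset.range m, (1/2 * g (a + i)) := by
        rw [← Finset.sum_add_distrib]; exact Finset.sum_congr rfl fun i _ => by ring
      rw [e, ← Finset.sum_sub_distrib]
      have e2 : ∀ i ∈ Finset.range m, (1 - 1/2) * g (a + i + 1) - (0 - 1/2) * g (a + i) = 1/2 * g (a + i + 1) + 1/2 * g (a+i) := fun i _ => by ring
      rw [Finset.sum_congr rfl e2, Finset.sum_add_distrib]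
      linarith
    rw [t1]
    simp [bernoulliFun_one]
  | succ k ih =>
    rw [ih]
    simp only [key (k + 1), Finset.sum_sub_distrib]
    have : ∑ i ∈ Finset.range m, (bernoulliFun (k + 1 + 1) 1 * iteratedDeriv (k + 1) g (a + i + 1) -
        bernoulliFun (k + 1 + 1) 0 * iteratedDeriv (k + 1) g (a + i)) / ((k + 1 : ℕ) + 1 : ℝ) = 0 := by
      rw [← Finset.sum_div, bernoulliFun_endpoints_eq_of_ne_one (by omega)]
      have := Finset.sum_range_sub (fun i : ℕ => bernoulliFun (k + 1 + 1) 0 * iteratedDeriv (k + 1) g (a + i)) m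
      simp only [h0, h1, Nat.cast_zero, add_zero, mul_zero, sub_zero, Nat.cast_add, Nat.cast_one, ← add_assoc] at this
      rw [this, zero_div]
    rw [this, ← Finset.mul_sum]
    rw [Nat.factorial_succ (k + 1), pow_succ]
    push_cast
    have : ((k + 1).factorial : ℝ) ≠ 0 := by positivity
    field_simp
    ring

lemma em_unit (k : ℕ) : ∃ C : ℝ, 0 ≤ C ∧ ∀ g : ℝ → ℝ, ContDiff ℝ (⊤ : ℕ∞) g → HasCompactSupport g →
    |(∑' n : ℤ, g n) - ∫ x, g x| ≤ C * ∫ x, |iteratedDeriv (k + 1) g x| := by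
  obtain ⟨C, hC⟩ := (isCompact_Icc (a := (0:ℝ)) (b := 1)).exists_bound_of_continuousOn
    (f := bernoulliFun (k + 1)) (continuous_bernoulliFun _).continuousOn
  have hC0 : 0 ≤ C := (norm_nonneg _).trans (hC 0 (by simp))
  refine ⟨C, hC0, fun g hg hs => ?_⟩
  obtain ⟨R, hR⟩ := hs.isCompact.isBounded.subset_closedBall 0
  obtain ⟨N, hN⟩ := exists_nat_gt R
  have hout : ∀ x : ℝ, R < |x| → x ∉ tsupport g := fun x hx h => by
    have := hR h
    simp at this; linarith
  have hder : ∀ j (x : ℝ), R < |x| → iteratedDeriv j g x = 0 := by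
    intro j x hx
    have := mt (fun h => tsupport_iteratedFDeriv_subset (𝕜 := ℝ) (f := g) j (subset_tsupport _ h)) (hout x hx)
    simp only [Function.mem_support, not_not] at this
    rw [iteratedDeriv_eq_iteratedFDeriv, this]; rfl
  have hgz : ∀ x : ℝ, R < |x| → g x = 0 := fun x hx => by simpa using hder 0 x hx
  have hN0 : (0:ℝ) ≤ N := by positivity
  have em := em_finite g hg (-N) (2 * N) (fun j => hder j _ (by simpa using hN))
    (fun j => hder j _ (by push_cast; rw [show -(N:ℝ) + 2 * N = N by ring, abs_of_nonneg hN0]; exact hN)) k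
  have s1 : ∑' n : ℤ, g n = ∑ i ∈ Finset.range (2 * N), g (-N + i) := by
    have : ∑ i ∈ Finset.range (2 * N), g (-N + i) = ∑ n ∈ (Finset.range (2*N)).image (fun i : ℕ => (-N + i : ℤ)), g n := by
      rw [Finset.sum_image (by intro a _ b _ h; simpa using h)]
      simp
    rw [this]
    refine tsum_eq_sum fun n hn => hgz _ ?_
    by_contra hcon
    push Not at hcon
    apply hn
    have h2 := abs_lt.1 (hcon.trans_lt hN)
    have h3 : -(N:ℤ) < n := by exact_mod_cast h2.1
    have h4 : n < N := by exact_mod_cast h2.2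
    simp only [Finset.mem_image, Finset.mem_range]
    exact ⟨(n + N).toNat, by omega, by omega⟩
  have s2 : ∫ x, g x = ∫ x in (-N:ℝ)..(-N + (2*N : ℕ)), g x := by
    rw [intervalIntegral.integral_of_le (by push_cast; linarith), setIntegral_eq_integral_of_forall_compl_eq_zero]
    intro x hx
    apply hgz
    by_contra hcon
    push Not at hcon
    apply hx
    have h2 := abs_lt.1 (hcon.trans_lt hN)
    constructor
    · exact h2.1
    · push_cast; linarith
  rw [s1, s2, em, abs_mul]
  have hc : Continuous (iteratedDeriv (k+1) g) :=
    hg.continuous_iteratedDeriv _ (by exact_mod_cast le_top)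
  have e1 : |((-1) ^ k / (k + 1).factorial : ℝ)| ≤ 1 := by
    rw [abs_div, abs_pow, abs_neg, abs_one, one_pow, div_le_one (by positivity)]
    rw [Nat.abs_cast]
    exact_mod_cast Nat.one_le_iff_ne_zero.2 (Nat.factorial_ne_zero _)
  have e2 : |∑ i ∈ Finset.range (2 * N), ∫ x in (0:ℝ)..1, bernoulliFun (k + 1) x * iteratedDeriv (k + 1) g (-N + i + x)| ≤ C * ∫ x, |iteratedDeriv (k + 1) g x| := by
    have hint : Integrable (fun x => |iteratedDeriv (k + 1) g x|) := by
      refine hc.abs.integrable_of_hasCompactSupport (HasCompactSupport.intro (isCompact_closedBall 0 R) ?_)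
      intro x hx
      rw [hder _ _ (by simpa using hx), abs_zero]
    calc _ ≤ ∑ i ∈ Finset.range (2 * N), C * ∫ x in (0:ℝ)..1, |iteratedDeriv (k + 1) g (-N + i + x)| := by
          refine (Finset.abs_sum_le_sum_abs _ _).trans (Finset.sum_le_sum fun i _ => ?_)
          rw [← intervalIntegral.integral_const_mul, ← Real.norm_eq_abs]
          refine intervalIntegral.norm_integral_le_of_norm_le zero_le_one (Filter.Eventually.of_forall fun x hx => ?_) ?_
          · rw [norm_mul]
            exact mul_le_mul_of_nonneg_right (hC x ⟨hx.1.le, hx.2⟩) (norm_nonneg _)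
          · exact Continuous.intervalIntegrable (by fun_prop) _ _
      _ = C * ∫ x in (-N:ℝ)..(-N + (2*N : ℕ)), |iteratedDeriv (k + 1) g x| := by
          rw [← Finset.mul_sum]
          congr 1
          have := sum_integral_adjacent_intervals (f := fun x => |iteratedDeriv (k + 1) g x|) (μ := volume) (a := fun i : ℕ => (-N:ℝ) + i)
            (n := 2 * N) (fun k _ => hc.abs.intervalIntegrable _ _)
          simp only [Nat.cast_zero, add_zero] at this
          rw [← this]
          refine Finset.sum_congr rfl fun i _ => ?_
          rw [intervalIntegral.integral_comp_add_left (fun x => |iteratedDeriv (k + 1) g x|)]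
          simp [add_assoc]
      _ ≤ _ := by
          refine mul_le_mul_of_nonneg_left ?_ hC0
          rw [intervalIntegral.integral_of_le (by push_cast; linarith)]
          exact setIntegral_le_integral hint (Filter.Eventually.of_forall fun x => abs_nonneg _)
  calc _ ≤ 1 * _ := mul_le_mul_of_nonneg_right e1 (abs_nonneg _)
    _ ≤ _ := by rw [one_mul]; exact e2

end EM

section Lattice
open MeasureTheory

lemma iteratedDeriv_zero_out {g : ℝ → ℝ} {R : ℝ} (hz : ∀ x, R < |x| → g x = 0) (j : ℕ) (x : ℝ)
    (hx : R < |x|) : iteratedDeriv j g x = 0 := by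
  have hs : tsupport g ⊆ {x | |x| ≤ R} := by
    refine closure_minimal (fun y hy => ?_) (isClosed_le continuous_abs continuous_const)
    by_contra hcon
    exact hy (hz y (not_le.1 hcon))
  have := mt (fun h => hs (tsupport_iteratedFDeriv_subset (𝕜 := ℝ) (f := g) j (subset_tsupport _ h))) (not_le.2 hx)
  simp only [Function.mem_support, not_not] at this
  rw [iteratedDeriv_eq_iteratedFDeriv, this]; rfl

lemma hasCompactSupport_of_out {g : ℝ → ℝ} {R : ℝ} (hz : ∀ x, R < |x| → g x = 0) :
    HasCompactSupport g :=
  HasCompactSupport.intro (isCompact_closedBall 0 R) fun x hx => hz x (by simpa using hx)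

lemma oneD (k : ℕ) (R : ℝ) (hR : 0 ≤ R) : ∃ C : ℝ, 0 ≤ C ∧ ∀ (B : ℝ) (g : ℝ → ℝ), ContDiff ℝ (⊤ : ℕ∞) g →
    (∀ x, R < |x| → g x = 0) → (∀ x, |iteratedDeriv (k + 1) g x| ≤ B) → ∀ h : ℝ, 0 < h → ∀ v : ℝ,
    |h * (∑' n : ℤ, g (h * n + v)) - ∫ x, g x| ≤ C * B * h ^ (k + 1) := by
  obtain ⟨C, hC0, hC⟩ := em_unit k
  refine ⟨C * (2 * R), by positivity, fun B g hg hz hB h hh v => ?_⟩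
  have hg1 : ContDiff ℝ (⊤ : ℕ∞) (fun x => g (x + v)) := hg.comp (by fun_prop)
  have hg2 : ContDiff ℝ (⊤ : ℕ∞) (fun x => g (h * x + v)) := hg.comp (by fun_prop)
  have hs2 : HasCompactSupport (fun x => g (h * x + v)) := by
    refine hasCompactSupport_of_out (R := (R + |v|) / h) fun x hx => hz _ ?_
    rw [div_lt_iff₀ hh] at hx
    have : |h * x| ≤ |h * x + v| + |v| := by
      have := abs_sub (h * x + v) v
      simpa using this
    rw [abs_mul, abs_of_pos hh] at this
    linarith
  have key := hC _ hg2 hs2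
  have e1 : ∫ x, g (h * x + v) = h⁻¹ * ∫ x, g x := by
    rw [Measure.integral_comp_mul_left (fun y => g (y + v)) h, integral_add_right_eq_self g v]
    simp [abs_of_pos hh]
  have e2 : iteratedDeriv (k + 1) (fun x => g (h * x + v)) = fun x => h ^ (k + 1) * iteratedDeriv (k + 1) g (h * x + v) := by
    rw [iteratedDeriv_comp_const_mul (f := fun y => g (y + v)) (hg1.of_le (by exact_mod_cast le_top)),
      iteratedDeriv_comp_add_const]
  have e3 : ∫ x, |iteratedDeriv (k + 1) (fun x => g (h * x + v)) x| = h ^ k * ∫ x, |iteratedDeriv (k + 1) g x| := by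
    rw [e2]
    simp only [abs_mul, abs_pow, abs_of_pos hh]
    rw [integral_const_mul, Measure.integral_comp_mul_left (fun y => |iteratedDeriv (k + 1) g (y + v)|) h,
      integral_add_right_eq_self (fun y => |iteratedDeriv (k + 1) g y|) v]
    simp only [abs_inv, abs_of_pos hh, smul_eq_mul]
    field_simp
    ring
  have e4 : ∫ x, |iteratedDeriv (k + 1) g x| ≤ 2 * R * B := by
    have : ∫ x, |iteratedDeriv (k + 1) g x| = ∫ x in Set.Icc (-R) R, |iteratedDeriv (k + 1) g x| := by
      rw [setIntegral_eq_integral_of_forall_compl_eq_zero]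
      intro x hx
      rw [iteratedDeriv_zero_out hz _ _ (by rw [Set.mem_Icc, ← abs_le] at hx; exact not_le.1 hx), abs_zero]
    rw [this]
    have := norm_setIntegral_le_of_norm_le_const (μ := volume) (s := Set.Icc (-R) R) (f := fun x => |iteratedDeriv (k + 1) g x|) (C := B)
      (by simp) (fun x _ => by simpa using hB x)
    refine (le_abs_self _).trans (this.trans (le_of_eq ?_))
    simp [Measure.real, show (0:ℝ) ≤ R + R by linarith]
    ring
  rw [e1, e3] at key
  have e5 : h * (∑' n : ℤ, g (h * n + v)) - ∫ x, g x = h * ((∑' n : ℤ, g (h * n + v)) - h⁻¹ * ∫ x, g x) := by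
    field_simp
  rw [e5, abs_mul, abs_of_pos hh]
  calc _ ≤ h * (C * (h ^ k * (2 * R * B))) := by
        refine mul_le_mul_of_nonneg_left (key.trans ?_) hh.le
        gcongr
    _ = _ := by ring

lemma int_count (R h v : ℝ) (hR : 0 ≤ R) (hh : 0 < h) : ∃ F : Finset ℤ, (∀ n : ℤ, |h * n + v| ≤ R → n ∈ F) ∧
    h * F.card ≤ 2 * R + h := by
  refine ⟨Finset.Icc ⌈(-R - v) / h⌉ ⌊(R - v) / h⌋, fun n hn => ?_, ?_⟩
  · rw [abs_le] at hn
    rw [Finset.mem_Icc, Int.ceil_le, Int.le_floor, div_le_iff₀ hh, le_div_iff₀ hh]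
    constructor <;> nlinarith [hn.1, hn.2]
  · rw [Int.card_Icc]
    have h1 : (((⌊(R - v) / h⌋ + 1 - ⌈(-R - v) / h⌉).toNat : ℤ) : ℝ) ≤ 2 * R / h + 1 := by
      rw [Int.toNat_eq_max]
      push_cast
      apply max_le
      · have a1 := Int.floor_le ((R - v) / h)
        have a2 := Int.le_ceil ((-R - v) / h)
        have : (R - v) / h - (-R - v) / h = 2 * R / h := by ring
        linarith
      · positivity
    have h2 : (((⌊(R - v) / h⌋ + 1 - ⌈(-R - v) / h⌉).toNat : ℝ)) ≤ 2 * R / h + 1 := by exact_mod_cast h1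
    calc _ ≤ h * (2 * R / h + 1) := by gcongr
      _ = _ := by field_simp

lemma norm_iteratedFDeriv_comp_affine {E F : Type*} [NormedAddCommGroup E] [NormedSpace ℝ E]
    [NormedAddCommGroup F] [NormedSpace ℝ F] (G : F → ℝ) (hG : ContDiff ℝ (⊤ : ℕ∞) G) (L : E →L[ℝ] F)
    (hL : ‖L‖ ≤ 1) (c : F) (k : ℕ) (B : ℝ) (hB : ∀ x, ‖iteratedFDeriv ℝ k G x‖ ≤ B) (y : E) :
    ‖iteratedFDeriv ℝ k (fun y => G (L y + c)) y‖ ≤ B := by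
  have hG1 : ContDiff ℝ (⊤ : ℕ∞) (fun x => G (x + c)) := hG.comp (by fun_prop)
  have := L.iteratedFDeriv_comp_right (f := fun x => G (x + c)) hG1 y (i := k) (by exact_mod_cast le_top)
  change iteratedFDeriv ℝ k (fun y => G (L y + c)) y = _ at this
  rw [this, iteratedFDeriv_comp_add_right]
  refine (ContinuousMultilinearMap.norm_compContinuousLinearMap_le _ _).trans ?_
  calc _ ≤ ‖iteratedFDeriv ℝ k G (L y + c)‖ * 1 := by
        refine mul_le_mul_of_nonneg_left ?_ (norm_nonneg _)
        exact Finset.prod_le_one (fun _ _ => norm_nonneg _) fun _ _ => hL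
    _ ≤ B := by rw [mul_one]; exact hB _

lemma cons_zero_cons {d : ℕ} (x : ℝ) (y : Fin d → ℝ) :
    (Fin.cons x y : Fin (d+1) → ℝ) = (Fin.cons 0 y : Fin (d+1) → ℝ) + Fin.cons x 0 := by
  ext i; refine Fin.cases ?_ (fun i => ?_) i <;> simp

lemma cons_zero_cons' {d : ℕ} (x : ℝ) (y : Fin d → ℝ) :
    (Fin.cons x y : Fin (d+1) → ℝ) = (Fin.cons x 0 : Fin (d+1) → ℝ) + Fin.cons 0 y := by
  ext i; refine Fin.cases ?_ (fun i => ?_) i <;> simp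

noncomputable def consL (d : ℕ) : (Fin d → ℝ) →L[ℝ] (Fin (d+1) → ℝ) :=
  LinearMap.toContinuousLinearMap
  { toFun := fun y => Fin.cons 0 y
    map_add' := fun a b => by ext i; refine Fin.cases ?_ (fun i => ?_) i <;> simp
    map_smul' := fun a b => by ext i; refine Fin.cases ?_ (fun i => ?_) i <;> simp }

noncomputable def consR (d : ℕ) : ℝ →L[ℝ] (Fin (d+1) → ℝ) :=
  LinearMap.toContinuousLinearMap
  { toFun := fun y => Fin.cons y 0
    map_add' := fun a b => by ext i; refine Fin.cases ?_ (fun i => ?_) i <;> simp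
    map_smul' := fun a b => by ext i; refine Fin.cases ?_ (fun i => ?_) i <;> simp }

lemma consL_apply {d : ℕ} (y : Fin d → ℝ) : consL d y = Fin.cons 0 y := rfl
lemma consR_apply {d : ℕ} (y : ℝ) : consR d y = Fin.cons y 0 := rfl

lemma consL_fun {d : ℕ} (G : (Fin (d+1) → ℝ) → ℝ) (x : ℝ) :
    (fun y : Fin d → ℝ => G (Fin.cons x y)) = fun y => G (consL d y + Fin.cons x 0) := by
  funext y; rw [cons_zero_cons]; rfl
lemma consR_fun {d : ℕ} (G : (Fin (d+1) → ℝ) → ℝ) (y : Fin d → ℝ) :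
    (fun x : ℝ => G (Fin.cons x y)) = fun x => G (consR d x + Fin.cons 0 y) := by
  funext x; rw [cons_zero_cons']; rfl

lemma norm_consL (d : ℕ) : ‖consL d‖ ≤ 1 := by
  refine ContinuousLinearMap.opNorm_le_bound _ zero_le_one fun y => ?_
  rw [one_mul, pi_norm_le_iff_of_nonneg (norm_nonneg _)]
  intro i
  refine Fin.cases ?_ (fun i => ?_) i
  · simp [consL_apply]
  · simpa [consL_apply] using norm_le_pi_norm y i

lemma norm_consR (d : ℕ) : ‖consR d‖ ≤ 1 := by
  refine ContinuousLinearMap.opNorm_le_bound _ zero_le_one fun y => ?_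
  rw [one_mul, pi_norm_le_iff_of_nonneg (norm_nonneg _)]
  intro i
  refine Fin.cases ?_ (fun i => ?_) i
  · simp [consR_apply]
  · simp [consR_apply]

lemma lattice_sum (k : ℕ) (R : ℝ) (hR : 0 ≤ R) (h0 : ℝ) (d : ℕ) : ∃ C : ℝ, 0 ≤ C ∧ ∀ (B : ℝ) (G : (Fin d → ℝ) → ℝ),
    ContDiff ℝ (⊤ : ℕ∞) G → (∀ x, (∃ i, R < |x i|) → G x = 0) →
    (∀ x, ‖iteratedFDeriv ℝ (k + 1) G x‖ ≤ B) → ∀ h : ℝ, 0 < h → h ≤ h0 → ∀ v : Fin d → ℝ,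
    |h ^ d * (∑' n : Fin d → ℤ, G (fun i => h * n i + v i)) - ∫ x, G x| ≤ C * B * h ^ (k + 1) := by
  induction d with
  | zero =>
    refine ⟨0, le_rfl, fun B G hG hz hB h hh hh0 v => ?_⟩
    have : ∫ x, G x = G 0 := by
      rw [show (volume : Measure (Fin 0 → ℝ)) = Measure.dirac 0 from by
        rw [volume_pi]; exact Measure.pi_of_empty (fun _ : Fin 0 => volume) 0]
      simp
    rw [this, tsum_eq_single 0 (fun n hn => absurd (Subsingleton.elim _ _) hn)]
    simp [Subsingleton.elim (fun i : Fin 0 => v i) 0, Subsingleton.elim (fun i : Fin 0 => h * ((0 : Fin 0 → ℤ) i : ℝ) + v i) 0]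
  | succ d ih =>
    obtain ⟨C1, hC1, H1⟩ := oneD k R hR
    obtain ⟨C2, hC2, H2⟩ := ih
    refine ⟨C2 * (2 * R + |h0|) + C1 * (2 * R) ^ d, by positivity, fun B G hG hz hB h hh hh0 v => ?_⟩
    have hB0 : 0 ≤ B := (norm_nonneg _).trans (hB 0)
    obtain ⟨F, hF, hFc⟩ := int_count R h (v 0) hR hh
    set H : (Fin d → ℝ) → ℝ := fun y => h * ∑ n ∈ F, G (Fin.cons (h * n + v 0) y) with hH
    have hzF : ∀ (n : ℤ) (y : Fin d → ℝ), n ∉ F → G (Fin.cons (h * n + v 0) y) = 0 := by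
      intro n y hn
      refine hz _ ⟨0, ?_⟩
      by_contra hcon
      exact hn (hF n (by simpa using hcon))
    have hHt : ∀ y, H y = h * ∑' n : ℤ, G (Fin.cons (h * n + v 0) y) := by
      intro y
      rw [tsum_eq_sum (s := F) (fun n hn => hzF n y hn)]
    have hGc : ∀ x : ℝ, ContDiff ℝ (⊤ : ℕ∞) (fun y : Fin d → ℝ => G (Fin.cons x y)) := by
      intro x
      rw [consL_fun G x]
      exact hG.comp ((consL d).contDiff.add contDiff_const)
    have hHd : ContDiff ℝ (⊤ : ℕ∞) H := contDiff_const.mul (ContDiff.sum fun n _ => hGc _)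
    have hHz : ∀ y, (∃ i, R < |y i|) → H y = 0 := by
      rintro y ⟨i, hi⟩
      rw [hH]
      simp only
      rw [Finset.sum_eq_zero, mul_zero]
      intro n _
      exact hz _ ⟨i.succ, by simpa using hi⟩
    have hHB : ∀ y, ‖iteratedFDeriv ℝ (k + 1) H y‖ ≤ (2 * R + |h0|) * B := by
      intro y
      have e1 : iteratedFDeriv ℝ (k + 1) H y = h • ∑ n ∈ F, iteratedFDeriv ℝ (k + 1) (fun y : Fin d → ℝ => G (Fin.cons (h * n + v 0) y)) y := by
        have : H = h • fun y => ∑ n ∈ F, G (Fin.cons (h * n + v 0) y) := rfl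
        rw [this, iteratedFDeriv_const_smul_apply, iteratedFDeriv_fun_sum_apply]
        · intro j _
          exact ((hGc _).of_le (by exact_mod_cast le_top)).contDiffAt
        · exact (ContDiff.sum fun n _ => (hGc _).of_le (by exact_mod_cast le_top)).contDiffAt
      rw [e1, norm_smul, Real.norm_eq_abs, abs_of_pos hh]
      calc _ ≤ h * ∑ n ∈ F, B := by
            refine mul_le_mul_of_nonneg_left (norm_sum_le_of_le _ fun n _ => ?_) hh.le
            rw [consL_fun G (h * n + v 0)]
            exact norm_iteratedFDeriv_comp_affine G hG (consL d) (norm_consL d) _ _ B hB y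
        _ = (h * F.card) * B := by simp; ring
        _ ≤ _ := by
          refine mul_le_mul_of_nonneg_right (hFc.trans ?_) hB0
          linarith [le_abs_self h0]
    have step1 := H2 _ H hHd hHz hHB h hh hh0 (fun i => v i.succ)
    have hfin : Set.Finite {n : Fin (d+1) → ℤ | ∀ i, |h * n i + v i| ≤ R} := by
      choose F' hF' _ using fun i => int_count R h (v i) hR hh
      refine (Fintype.piFinset F').finite_toSet.subset fun n hn => ?_
      simp only [Finset.mem_coe, Fintype.mem_piFinset]
      exact fun i => hF' i _ (hn i)
    have hsum : h ^ (d + 1) * (∑' n : Fin (d + 1) → ℤ, G (fun i => h * n i + v i)) =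
        h ^ d * ∑' n : Fin d → ℤ, H (fun i => h * n i + v i.succ) := by
      have hsm : Summable (fun n : Fin (d + 1) → ℤ => G (fun i => h * n i + v i)) := by
        refine summable_of_hasFiniteSupport (hfin.subset fun n hn i => ?_)
        by_contra hcon
        exact hn (hz _ ⟨i, not_le.1 hcon⟩)
      simp only [hHt]
      rw [tsum_mul_left, pow_succ, mul_assoc, ← (Fin.consEquiv (fun _ : Fin (d+1) => ℤ)).tsum_eq]
      rw [← (Fin.consEquiv (fun _ : Fin (d+1) => ℤ)).summable_iff] at hsm
      rw [← (Equiv.prodComm (Fin d → ℤ) ℤ).tsum_eq]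
      rw [← (Equiv.prodComm (Fin d → ℤ) ℤ).summable_iff] at hsm
      have := hsm.tsum_prod
      simp only [Function.comp_apply] at this
      rw [this]
      congr 2
      apply tsum_congr; intro n
      apply tsum_congr; intro m
      congr 1
      ext i
      refine Fin.cases ?_ (fun i => ?_) i <;> simp [Fin.consEquiv]
    have hGcs : HasCompactSupport G := by
      refine HasCompactSupport.intro (isCompact_closedBall 0 R) fun x hx => hz x ?_
      by_contra hcon
      push Not at hcon
      exact hx (by rw [mem_closedBall_zero_iff, pi_norm_le_iff_of_nonneg hR]; exact hcon)
    have hHcs : HasCompactSupport H := by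
      refine HasCompactSupport.intro (isCompact_closedBall 0 R) fun x hx => hHz x ?_
      by_contra hcon
      push Not at hcon
      exact hx (by rw [mem_closedBall_zero_iff, pi_norm_le_iff_of_nonneg hR]; exact hcon)
    have hGi : Integrable G := hG.continuous.integrable_of_hasCompactSupport hGcs
    have hHi : Integrable H := hHd.continuous.integrable_of_hasCompactSupport hHcs
    have mp := (volume_preserving_piFinSuccAbove (fun _ : Fin (d + 1) => ℝ) 0).symm
    have hsy : ∀ p : ℝ × (Fin d → ℝ), (MeasurableEquiv.piFinSuccAbove (fun _ => ℝ) 0).symm p = Fin.cons p.1 p.2 := by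
      intro p
      ext i
      refine Fin.cases ?_ (fun i => ?_) i <;> simp [MeasurableEquiv.piFinSuccAbove, Fin.insertNthEquiv]
    have hGi2 : Integrable (fun p : ℝ × (Fin d → ℝ) => G (Fin.cons p.1 p.2)) := by
      have := (mp.integrable_comp_emb (MeasurableEquiv.measurableEmbedding _) (g := G)).2 hGi
      refine this.congr (Filter.Eventually.of_forall fun p => ?_)
      simp only [Function.comp_apply, hsy]
    have hint : ∫ x, G x = ∫ y : Fin d → ℝ, ∫ x : ℝ, G (Fin.cons x y) := by
      rw [← mp.integral_comp (MeasurableEquiv.measurableEmbedding _)]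
      rw [← integral_prod_symm (f := fun p : ℝ × (Fin d → ℝ) => G (Fin.cons p.1 p.2)) hGi2]
      simp only [hsy]
      rfl
    have hpt : ∀ y, |H y - ∫ x : ℝ, G (Fin.cons x y)| ≤ C1 * B * h ^ (k + 1) := by
      intro y
      rw [hHt]
      refine H1 B (fun x => G (Fin.cons x y)) ?_ ?_ ?_ h hh (v 0)
      · rw [consR_fun G y]
        exact hG.comp ((consR d).contDiff.add contDiff_const)
      · intro x hx
        exact hz _ ⟨0, by simpa using hx⟩
      · intro x
        rw [← Real.norm_eq_abs, ← norm_iteratedFDeriv_eq_norm_iteratedDeriv]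
        rw [consR_fun G y]
        exact norm_iteratedFDeriv_comp_affine G hG (consR d) (norm_consR d) _ _ B hB x
    have hdiff : |(∫ y, H y) - ∫ x, G x| ≤ C1 * (2 * R) ^ d * B * h ^ (k + 1) := by
      rw [hint, ← integral_sub hHi hGi2.integral_prod_right]
      have hsupp : ∀ y, y ∉ Set.Icc (fun _ : Fin d => -R) (fun _ => R) → H y - ∫ x : ℝ, G (Fin.cons x y) = 0 := by
        intro y hy
        have : ∃ i, R < |y i| := by
          by_contra hcon
          push Not at hcon
          exact hy ⟨fun i => (abs_le.1 (hcon i)).1, fun i => (abs_le.1 (hcon i)).2⟩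
        obtain ⟨i, hi⟩ := this
        rw [hHz y ⟨i, hi⟩]
        have : ∀ x : ℝ, G (Fin.cons x y) = 0 := fun x => hz _ ⟨i.succ, by simpa using hi⟩
        simp [this]
      rw [← setIntegral_eq_integral_of_forall_compl_eq_zero hsupp]
      have hvol : volume.real (Set.Icc (fun _ : Fin d => -R) (fun _ => R)) = (2 * R) ^ d := by
        rw [Measure.real, Real.volume_Icc_pi_toReal]
        · simp; ring
        · intro i; simp; linarith
      have := norm_setIntegral_le_of_norm_le_const (μ := volume) (s := Set.Icc (fun _ : Fin d => -R) (fun _ => R))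
        (f := fun y => H y - ∫ x : ℝ, G (Fin.cons x y)) (C := C1 * B * h ^ (k + 1))
        isCompact_Icc.measure_lt_top (fun y _ => hpt y)
      rw [hvol] at this
      refine this.trans (le_of_eq (by ring))
    rw [hsum]
    calc _ ≤ |h ^ d * (∑' n : Fin d → ℤ, H (fun i => h * n i + v i.succ)) - ∫ y, H y| + |(∫ y, H y) - ∫ x, G x| :=
          abs_sub_le _ _ _
      _ ≤ C2 * ((2 * R + |h0|) * B) * h ^ (k + 1) + C1 * (2 * R) ^ d * B * h ^ (k + 1) := add_le_add step1 hdiff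
      _ = _ := by ring

end Lattice

section LatticeCount
open MeasureTheory

lemma integral_basis {ι E : Type*} [Fintype ι] [NormedAddCommGroup E] [NormedSpace ℝ E]
    [MeasurableSpace E] [BorelSpace E] (b : Module.Basis ι ℝ E)
    (μ : Measure E) [μ.IsAddHaarMeasure] (G : E → ℝ) :
    ∫ x : ι → ℝ, G (b.equivFun.symm x) = (∫ y, G y ∂μ) / μ.real (ZSpan.fundamentalDomain b) := by
  have : FiniteDimensional ℝ E := b.finiteDimensional_of_finite
  let e : (ι → ℝ) ≃L[ℝ] E := b.equivFun.symm.toContinuousLinearEquiv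
  have hm : (Measure.map e volume : Measure E).IsAddHaarMeasure :=
    e.isAddHaarMeasure_map volume
  have h1 : ∫ x : ι → ℝ, G (b.equivFun.symm x) = ∫ y, G y ∂(Measure.map e volume) :=
    (e.toHomeomorph.measurableEmbedding.integral_map G).symm
  have h2 := Measure.isAddLeftInvariant_eq_smul μ (Measure.map e volume)
  set c := Measure.addHaarScalarFactor μ (Measure.map e volume)
  have h3 : (Measure.map e volume : Measure E) (ZSpan.fundamentalDomain b) = 1 := by
    change Measure.map e.toHomeomorph volume _ = 1
    rw [e.toHomeomorph.measurableEmbedding.map_apply]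
    have : e.toHomeomorph ⁻¹' (ZSpan.fundamentalDomain b) = Set.univ.pi fun _ : ι => Set.Ico (0:ℝ) 1 := by
      ext x
      simp only [Set.mem_preimage, ZSpan.mem_fundamentalDomain, Set.mem_pi, Set.mem_univ, true_implies]
      refine forall_congr' fun i => ?_
      have : b.repr (e.toHomeomorph x) i = x i := by
        change b.equivFun (b.equivFun.symm x) i = _
        rw [LinearEquiv.apply_symm_apply]
      rw [this]
    rw [this]
    rw [volume_pi_pi]
    simp
  have h4 : μ.real (ZSpan.fundamentalDomain b) = c := by
    rw [Measure.real, h2, Measure.smul_apply, h3]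
    simp
  have h5 : (c : ℝ) ≠ 0 := by
    rw [← h4, Measure.real, ENNReal.toReal_ne_zero]
    exact ⟨ZSpan.measure_fundamentalDomain_ne_zero b, (ZSpan.fundamentalDomain_isBounded b).measure_lt_top.ne⟩
  rw [h1, h4, eq_div_iff h5]
  conv_rhs => rw [h2]
  rw [integral_smul_nnreal_measure, mul_comm]; rfl

lemma lattice_count {ι E : Type*} [Fintype ι] [Nonempty ι] [NormedAddCommGroup E] [NormedSpace ℝ E]
    [MeasurableSpace E] [BorelSpace E] (b : Module.Basis ι ℝ E)
    (μ : Measure E) [μ.IsAddHaarMeasure] (G : E → ℝ) (hG : ContDiff ℝ (⊤ : ℕ∞) G) (hc : HasCompactSupport G) :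
    ∃ C : ℝ, ∀ T : ℝ, 1 ≤ T → ∀ a : E,
      |(∑' y : Submodule.span ℤ (Set.range b), G (T⁻¹ • (a + (y : E)))) -
        T ^ (Fintype.card ι) * ((∫ y, G y ∂μ) / μ.real (ZSpan.fundamentalDomain b))| ≤ C := by
  have : FiniteDimensional ℝ E := b.finiteDimensional_of_finite
  rw [← integral_basis b μ G]
  obtain ⟨k, hk⟩ : ∃ k, Fintype.card ι = k + 1 := Nat.exists_eq_succ_of_ne_zero Fintype.card_ne_zero
  let σ : ι ≃ Fin (k+1) := Fintype.equivFinOfCardEq hk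
  let b' := b.reindex σ
  let e : (Fin (k+1) → ℝ) ≃L[ℝ] E := b'.equivFun.symm.toContinuousLinearEquiv
  have hF : ContDiff ℝ (⊤ : ℕ∞) (G ∘ e) := hG.comp e.contDiff
  have hFc : HasCompactSupport (G ∘ e) := hc.comp_homeomorph e.toHomeomorph
  obtain ⟨R, hR⟩ := hFc.isCompact.isBounded.exists_pos_norm_le
  have hz : ∀ x : Fin (k+1) → ℝ, (∃ i, R < |x i|) → (G ∘ e) x = 0 := by
    rintro x ⟨i, hi⟩
    by_contra hcon
    have := hR.2 x (subset_tsupport _ hcon)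
    exact absurd ((norm_le_pi_norm x i).trans this) (not_le.2 hi)
  obtain ⟨B, hB⟩ : ∃ B, ∀ x, ‖iteratedFDeriv ℝ (k+1) (G ∘ e) x‖ ≤ B :=
    (hF.continuous_iteratedFDeriv (by exact_mod_cast le_top)).bounded_above_of_compact_support
      (hFc.iteratedFDeriv _)
  obtain ⟨C, hC0, hC⟩ := lattice_sum k R hR.1.le 1 (k+1)
  refine ⟨C * B, fun T hT a => ?_⟩
  have hT0 : 0 < T := by linarith
  have key := hC B _ hF hz hB T⁻¹ (by positivity) (inv_le_one_of_one_le₀ hT) (T⁻¹ • e.symm a)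
  have hint : ∫ x, (G ∘ e) x = ∫ x : ι → ℝ, G (b.equivFun.symm x) := by
    have mp := volume_measurePreserving_piCongrLeft (fun _ : Fin (k+1) => ℝ) σ
    rw [← mp.integral_comp (MeasurableEquiv.measurableEmbedding _)]
    refine integral_congr_ae (Filter.Eventually.of_forall fun x => ?_)
    simp only [Function.comp_apply]
    congr 1
    change b'.equivFun.symm _ = _
    rw [Module.Basis.equivFun_symm_apply, Module.Basis.equivFun_symm_apply]
    rw [← σ.sum_comp]
    refine Finset.sum_congr rfl fun i _ => ?_
    simp [b', MeasurableEquiv.coe_piCongrLeft]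
  have hs : (∑' n : Fin (k+1) → ℤ, (G ∘ e) (fun i => T⁻¹ * n i + (T⁻¹ • e.symm a) i)) =
      ∑' y : Submodule.span ℤ (Set.range b), G (T⁻¹ • (a + (y : E))) := by
    let f := (((b.restrictScalars ℤ).reindex σ).equivFun).toEquiv
    rw [← f.symm.tsum_eq]
    refine tsum_congr fun n => ?_
    simp only [Function.comp_apply]
    congr 1
    have h1 : ((f.symm n : Submodule.span ℤ (Set.range b)) : E) = e (fun i => (n i : ℝ)) := by
      change ((((b.restrictScalars ℤ).reindex σ).equivFun.symm n : Submodule.span ℤ (Set.range b)) : E) = b'.equivFun.symm _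
      rw [Module.Basis.equivFun_symm_apply, Module.Basis.equivFun_symm_apply]
      simp [b', Int.cast_smul_eq_zsmul]
    rw [h1]
    have h2 : (fun i => T⁻¹ * n i + (T⁻¹ • e.symm a) i) = T⁻¹ • (e.symm a + fun i => (n i : ℝ)) := by
      ext i; simp; ring
    rw [h2, map_smul, map_add]
    simp
  rw [hint, hs] at key
  rw [hk]
  set S := ∑' y : Submodule.span ℤ (Set.range b), G (T⁻¹ • (a + (y : E)))
  set J := ∫ x : ι → ℝ, G (b.equivFun.symm x)
  have : S - T ^ (k+1) * J = T ^ (k+1) * (T⁻¹ ^ (k+1) * S - J) := by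
    rw [mul_sub, ← mul_assoc, ← mul_pow, mul_inv_cancel₀ hT0.ne']; simp
  rw [this, abs_mul, abs_of_pos (by positivity)]
  calc _ ≤ T ^ (k+1) * (C * B * T⁻¹ ^ (k+1)) := by gcongr
    _ = C * B * (T * T⁻¹) ^ (k+1) := by rw [mul_pow]; ring
    _ = C * B := by rw [mul_inv_cancel₀ hT0.ne']; simp

end LatticeCount

section Weight
open scoped Classical
open NumberField.InfinitePlace NumberField.mixedEmbedding NumberField.Units
  NumberField.Units.dirichletUnitTheorem NumberField.mixedEmbedding.fundamentalCone

noncomputable def phi (t : ℝ) : ℝ := Real.smoothTransition (t + 1) - Real.smoothTransition t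

lemma phi_contDiff : ContDiff ℝ (⊤ : ℕ∞) phi :=
  (Real.smoothTransition.contDiff.comp (by fun_prop)).sub Real.smoothTransition.contDiff

lemma phi_nonneg (t : ℝ) : 0 ≤ phi t :=
  sub_nonneg.2 (Real.smoothTransition.monotone (by linarith))

lemma phi_zero {t : ℝ} (ht : 1 < |t|) : phi t = 0 := by
  rw [phi]
  rcases lt_abs.1 ht with h | h
  · rw [Real.smoothTransition.one_of_one_le (by linarith), Real.smoothTransition.one_of_one_le (by linarith), sub_self]
  · rw [Real.smoothTransition.zero_of_nonpos (by linarith), Real.smoothTransition.zero_of_nonpos (by linarith), sub_self]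

lemma phi_sum (c : ℝ) : ∃ F : Finset ℤ, (∀ n : ℤ, n ∉ F → phi (c + n) = 0) ∧ ∑ n ∈ F, phi (c + n) = 1 := by
  obtain ⟨N, hN⟩ := exists_nat_gt (|c| + 2)
  have hc := abs_le.1 (le_refl |c|)
  refine ⟨(Finset.range (2 * N)).image (fun i : ℕ => (i : ℤ) - N), fun n hn => ?_, ?_⟩
  · apply phi_zero
    by_contra hcon
    apply hn
    rw [not_lt, abs_le] at hcon
    have h1 : -(N : ℝ) < n := by linarith
    have h2 : (n : ℝ) < N := by linarith
    have h1' : -(N : ℤ) < n := by exact_mod_cast h1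
    have h2' : n < (N : ℤ) := by exact_mod_cast h2
    rw [Finset.mem_image]
    refine ⟨(n + N).toNat, ?_, ?_⟩
    · rw [Finset.mem_range]; omega
    · omega
  · rw [Finset.sum_image (by intro a _ b _ h; simpa using h)]
    have : ∀ i : ℕ, phi (c + ((i : ℤ) - N : ℤ)) =
        Real.smoothTransition (c - N + (i + 1 : ℕ)) - Real.smoothTransition (c - N + i) := by
      intro i
      rw [phi]
      push_cast
      congr 2 <;> ring
    simp only [this]
    rw [Finset.sum_range_sub (fun i : ℕ => Real.smoothTransition (c - N + i))]
    push_cast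
    rw [Real.smoothTransition.one_of_one_le (by linarith), Real.smoothTransition.zero_of_nonpos (by simp; linarith), sub_zero]

lemma phi_multi_sum {ι : Type*} [Fintype ι] (c : ι → ℝ) :
    ∃ F : Finset (ι → ℤ), (∀ n, n ∉ F → ∏ i, phi (c i + n i) = 0) ∧ ∑ n ∈ F, ∏ i, phi (c i + n i) = 1 := by
  classical
  choose F h1 h2 using fun i => phi_sum (c i)
  refine ⟨Fintype.piFinset F, fun n hn => ?_, ?_⟩
  · rw [Fintype.mem_piFinset, not_forall] at hn
    obtain ⟨i, hi⟩ := hn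
    exact Finset.prod_eq_zero (Finset.mem_univ i) (h1 i _ hi)
  · rw [← Finset.prod_univ_sum (f := fun i (m : ℤ) => phi (c i + m))]
    simp [h2]

noncomputable def thetaBump : ContDiffBump (-3/2 : ℝ) := ⟨1/4, 1/2, by norm_num, by norm_num⟩
noncomputable def theta (t : ℝ) : ℝ := thetaBump t

lemma theta_contDiff : ContDiff ℝ (⊤ : ℕ∞) theta := thetaBump.contDiff
lemma theta_nonneg (t : ℝ) : 0 ≤ theta t := thetaBump.nonneg
lemma theta_zero {t : ℝ} (ht : t ∉ Set.Icc (-2 : ℝ) (-1)) : theta t = 0 := by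
  apply thetaBump.zero_of_le_dist
  simp only [thetaBump, Real.dist_eq]
  by_contra h
  rw [not_le, abs_lt] at h
  exact ht ⟨by linarith, by linarith⟩
lemma theta_pos : 0 < theta (-3/2) := by
  apply thetaBump.pos_of_mem_ball
  simp [thetaBump]

variable {K : Type*} [Field K] [NumberField K]

noncomputable def ell (x : mixedSpace K) : realSpace K := fun w => w.mult * Real.log (normAtPlace w x)

lemma ell_eq (x : mixedSpace K) : ell x = expMap.symm (normAtAllPlaces x) := by
  ext w; simp [ell]

lemma contDiffAt_ell (x : mixedSpace K) (hx : ∀ w, normAtPlace w x ≠ 0) : ContDiffAt ℝ (⊤ : ℕ∞) (ell : mixedSpace K → realSpace K) x := by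
  rw [contDiffAt_pi]
  intro w
  refine contDiffAt_const.mul (ContDiffAt.log ?_ (hx w))
  have hxw := hx w
  rcases isReal_or_isComplex w with h | h
  · have e : ⇑(normAtPlace w : mixedSpace K →*₀ ℝ) = fun x => ‖x.1 ⟨w, h⟩‖ := by
      ext x; exact normAtPlace_apply_of_isReal h x
    rw [normAtPlace_apply_of_isReal h] at hxw
    rw [e]
    refine ContDiffAt.norm ℝ ?_ (by simpa using hxw)
    fun_prop
  · have e : ⇑(normAtPlace w : mixedSpace K →*₀ ℝ) = fun x => ‖x.2 ⟨w, h⟩‖ := by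
      ext x; exact normAtPlace_apply_of_isComplex h x
    rw [normAtPlace_apply_of_isComplex h] at hxw
    rw [e]
    refine ContDiffAt.norm ℝ ?_ (by simpa using hxw)
    fun_prop

noncomputable def liftW (F : realSpace K → ℝ) (x : mixedSpace K) : ℝ :=
  if ∀ w, normAtPlace w x ≠ 0 then F (ell x) else 0

lemma liftW_smooth (F : realSpace K → ℝ) (hF : ContDiff ℝ (⊤ : ℕ∞) F) (hc : HasCompactSupport F) :
    ContDiff ℝ (⊤ : ℕ∞) (liftW F) ∧ HasCompactSupport (liftW F) := by
  obtain ⟨R, hR0, hR⟩ := hc.isCompact.isBounded.exists_pos_norm_le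
  have hlog : ∀ x, liftW F x ≠ 0 → ∀ w, 0 < normAtPlace w x ∧ |Real.log (normAtPlace w x)| ≤ R := by
    intro x hx w
    rw [liftW] at hx
    split_ifs at hx with h
    · have := hR _ (subset_tsupport _ hx)
      have h2 := (norm_le_pi_norm (ell x) w).trans this
      refine ⟨lt_of_le_of_ne (normAtPlace_nonneg w x) (h w).symm, ?_⟩
      rw [ell, Real.norm_eq_abs, abs_mul] at h2
      refine le_trans ?_ h2
      have : (1:ℝ) ≤ |(w.mult : ℝ)| := by
        rw [Nat.abs_cast]; exact_mod_cast mult_pos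
      exact le_mul_of_one_le_left (abs_nonneg _) this
    · exact absurd rfl hx
  constructor
  · rw [contDiff_iff_contDiffAt]
    intro x
    by_cases hx : ∀ w, normAtPlace w x ≠ 0
    · have : liftW F =ᶠ[nhds x] fun y => F (ell y) := by
        have : ∀ᶠ y in nhds x, ∀ w, normAtPlace w y ≠ 0 := by
          rw [Filter.eventually_all]
          intro w
          exact (continuous_normAtPlace w).continuousAt.eventually_ne (hx w)
        filter_upwards [this] with y hy
        rw [liftW, if_pos hy]
      exact ((hF.contDiffAt).comp x (contDiffAt_ell x hx)).congr_of_eventuallyEq this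
    · push Not at hx
      obtain ⟨w, hw⟩ := hx
      have : liftW F =ᶠ[nhds x] fun _ => 0 := by
        have : ∀ᶠ y in nhds x, normAtPlace w y < Real.exp (-R) :=
          (continuous_normAtPlace w).continuousAt.eventually_lt continuousAt_const (by rw [hw]; positivity)
        filter_upwards [this] with y hy
        by_contra hcon
        obtain ⟨h1, h2⟩ := hlog y hcon w
        have := (abs_le.1 h2).1
        exact absurd ((Real.le_log_iff_exp_le h1).1 this) (not_le.2 hy)
      exact contDiffAt_const.congr_of_eventuallyEq this
  · refine HasCompactSupport.intro (isCompact_closedBall 0 (Real.exp R)) fun x hx => ?_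
    by_contra hcon
    apply hx
    rw [mem_closedBall_zero_iff, norm_eq_sup'_normAtPlace, Finset.sup'_le_iff]
    intro w _
    obtain ⟨h1, h2⟩ := hlog x hcon w
    exact (Real.log_le_iff_le_exp h1).1 (abs_le.1 h2).2

variable (K) in
noncomputable def FW (z : realSpace K) : ℝ :=
  (∏ w : {w : InfinitePlace K // w ≠ w₀}, phi ((completeBasis K).equivFun z w)) * theta (∑ w, z w)

variable (K) in
noncomputable def GW : mixedSpace K → ℝ := liftW (FW K)

lemma sum_completeBasis_w₀ : ∑ w, completeBasis K w₀ w = Module.finrank ℚ K := by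
  rw [completeBasis_apply_of_eq, ← Nat.cast_sum, sum_mult_eq]

lemma sum_completeBasis_ne (i : {w : InfinitePlace K // w ≠ w₀}) : ∑ w, completeBasis K i w = 0 := by
  rw [completeBasis_apply_of_ne, sum_expMap_symm_apply (coe_ne_zero _), Units.norm, Rat.cast_one, Real.log_one]

lemma sum_eq_coord (z : realSpace K) : ∑ w, z w = Module.finrank ℚ K * (completeBasis K).equivFun z w₀ := by
  conv_lhs => rw [← (completeBasis K).sum_equivFun z]
  simp only [Finset.sum_apply, Pi.smul_apply, smul_eq_mul]
  rw [Finset.sum_comm]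
  simp only [← Finset.mul_sum]
  rw [Finset.sum_eq_single w₀]
  · rw [sum_completeBasis_w₀, mul_comm]
  · intro w _ hw
    rw [sum_completeBasis_ne ⟨w, hw⟩, mul_zero]
  · simp

lemma contDiff_equivFun : ContDiff ℝ (⊤ : ℕ∞) (fun z : realSpace K => (completeBasis K).equivFun z) :=
  (completeBasis K).equivFun.toContinuousLinearEquiv.contDiff

lemma FW_contDiff : ContDiff ℝ (⊤ : ℕ∞) (FW K) := by
  refine ContDiff.mul (contDiff_prod fun w _ => phi_contDiff.comp ?_) (theta_contDiff.comp (by fun_prop))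
  exact (contDiff_pi.1 contDiff_equivFun) w.1

lemma FW_compact : HasCompactSupport (FW K) := by
  let e : realSpace K ≃L[ℝ] (InfinitePlace K → ℝ) := (completeBasis K).equivFun.toContinuousLinearEquiv
  have hd : (1 : ℝ) ≤ Module.finrank ℚ K := by exact_mod_cast Module.finrank_pos (R := ℚ) (M := K)
  refine HasCompactSupport.intro (K := e.symm '' Metric.closedBall 0 2)
    ((isCompact_closedBall _ _).image e.symm.continuous) fun z hz => ?_
  by_contra hcon
  apply hz
  refine ⟨e z, ?_, by simp⟩
  rw [mem_closedBall_zero_iff, pi_norm_le_iff_of_nonneg (by norm_num)]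
  rw [← ne_eq, FW, mul_ne_zero_iff, Finset.prod_ne_zero_iff] at hcon
  intro w
  change |(completeBasis K).equivFun z w| ≤ 2
  by_cases hw : w = w₀
  · subst hw
    have h2 : ∑ w, z w ∈ Set.Icc (-2:ℝ) (-1) := by
      by_contra h; exact hcon.2 (theta_zero h)
    rw [sum_eq_coord] at h2
    set c := (completeBasis K).equivFun z w₀
    have h3 : |(Module.finrank ℚ K : ℝ) * c| ≤ 2 := abs_le.2 ⟨h2.1, by linarith [h2.2]⟩
    rw [abs_mul, Nat.abs_cast] at h3
    exact (le_mul_of_one_le_left (abs_nonneg _) hd).trans h3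
  · have := hcon.1 ⟨w, hw⟩ (Finset.mem_univ _)
    by_contra h
    exact this (phi_zero (by linarith [not_le.1 h]))

lemma GW_contDiff : ContDiff ℝ (⊤ : ℕ∞) (GW K) := (liftW_smooth _ FW_contDiff FW_compact).1
lemma GW_compact : HasCompactSupport (GW K) := (liftW_smooth _ FW_contDiff FW_compact).2
lemma GW_nonneg (x : mixedSpace K) : 0 ≤ GW K x := by
  rw [GW, liftW]
  split_ifs
  · exact mul_nonneg (Finset.prod_nonneg fun _ _ => phi_nonneg _) (theta_nonneg _)
  · exact le_rfl

lemma ell_mul {x y : mixedSpace K} (hx : ∀ w, normAtPlace w x ≠ 0) (hy : ∀ w, normAtPlace w y ≠ 0) :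
    ell (x * y) = ell x + ell y := by
  ext w
  simp only [ell, Pi.add_apply]
  rw [map_mul, Real.log_mul (hx w) (hy w), mul_add]

lemma ell_smul {x : mixedSpace K} (hx : ∀ w, normAtPlace w x ≠ 0) {T : ℝ} (hT : 0 < T) :
    ell (T⁻¹ • x) = ell x - Real.log T • completeBasis K w₀ := by
  ext w
  rw [completeBasis_apply_of_eq]
  simp only [ell, Pi.sub_apply, Pi.smul_apply, smul_eq_mul]
  rw [normAtPlace_smul, abs_of_pos (by positivity), Real.log_mul (by positivity) (hx w), Real.log_inv]
  ring

lemma nap_ne {a : K} (ha : a ≠ 0) (w : InfinitePlace K) : normAtPlace w (mixedEmbedding K a) ≠ 0 := by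
  rw [normAtPlace_apply]; exact (map_ne_zero w).2 ha

lemma ell_unit_mul (u v : (𝓞 K)ˣ) : ell (mixedEmbedding K ((u * v : (𝓞 K)ˣ) : K)) =
    ell (mixedEmbedding K (u : K)) + ell (mixedEmbedding K (v : K)) := by
  rw [← ell_mul (nap_ne (coe_ne_zero _)) (nap_ne (coe_ne_zero _)), ← map_mul]
  simp

noncomputable def ellHom : (𝓞 K)ˣ →* Multiplicative (realSpace K) where
  toFun u := Multiplicative.ofAdd (ell (mixedEmbedding K (u : K)))
  map_one' := by
    rw [← ofAdd_zero]; congr 1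
    ext w
    simp [ell]
  map_mul' u v := by rw [ell_unit_mul, ofAdd_add]

lemma ell_torsion (ζ : torsion K) : ell (mixedEmbedding K ((ζ : (𝓞 K)ˣ) : K)) = 0 := by
  ext w
  simp only [ell, normAtPlace_apply, Pi.zero_apply]
  rw [(mem_torsion K).1 ζ.2 w]
  simp

lemma ell_unit (ζ : torsion K) (e : Fin (rank K) → ℤ) :
    ell (mixedEmbedding K (((ζ : (𝓞 K)ˣ) * ∏ i, (fundSystem K i) ^ (e i) : (𝓞 K)ˣ) : K)) =
      ∑ i : {w : InfinitePlace K // w ≠ w₀}, (e (fundamentalCone.equivFinRank.symm i) : ℝ) • completeBasis K i := by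
  rw [ell_unit_mul, ell_torsion, zero_add]
  have h1 : ell (mixedEmbedding K ((∏ i, (fundSystem K i) ^ (e i) : (𝓞 K)ˣ) : K)) =
    Multiplicative.toAdd (ellHom (∏ i, (fundSystem K i) ^ (e i))) := rfl
  rw [h1, map_prod, toAdd_prod]
  rw [← (fundamentalCone.equivFinRank (K := K)).symm.sum_comp]
  refine Finset.sum_congr rfl fun i _ => ?_
  rw [map_zpow, toAdd_zpow, completeBasis_apply_of_ne, ← ell_eq, Int.cast_smul_eq_zsmul]
  rfl

lemma GW_unit (a : K) (ha : a ≠ 0) (T : ℝ) (hT : 0 < T) (ζ : torsion K) (e : Fin (rank K) → ℤ) :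
    GW K (T⁻¹ • mixedEmbedding K ((((ζ : (𝓞 K)ˣ) * ∏ i, (fundSystem K i) ^ (e i) : (𝓞 K)ˣ) : K) * a)) =
    (∏ i : {w : InfinitePlace K // w ≠ w₀},
      phi ((completeBasis K).equivFun (ell (mixedEmbedding K a)) i + e (fundamentalCone.equivFinRank.symm i))) *
      theta (Real.log (|Algebra.norm ℚ a| : ℚ) - Module.finrank ℚ K * Real.log T) := by
  set u : (𝓞 K)ˣ := (ζ : (𝓞 K)ˣ) * ∏ i, (fundSystem K i) ^ (e i) with hu
  have hua : (u : K) * a ≠ 0 := mul_ne_zero (coe_ne_zero u) ha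
  have hel : ell (T⁻¹ • mixedEmbedding K ((u : K) * a)) = ell (mixedEmbedding K a) +
      ∑ i : {w : InfinitePlace K // w ≠ w₀}, (e (fundamentalCone.equivFinRank.symm i) : ℝ) • completeBasis K i
      - Real.log T • completeBasis K w₀ := by
    rw [ell_smul (nap_ne hua) hT, map_mul, ell_mul (nap_ne (coe_ne_zero u)) (nap_ne ha), hu, ell_unit]
    abel
  rw [GW, liftW, if_pos, hel, FW]
  · congr 1
    · refine Finset.prod_congr rfl fun i _ => ?_
      congr 1
      simp only [map_sub, map_add, map_sum, map_smul, Pi.sub_apply, Pi.add_apply, Finset.sum_apply, Pi.smul_apply,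
        Module.Basis.equivFun_self, smul_eq_mul]
      rw [if_neg i.2.symm, Finset.sum_eq_single i]
      · simp
      · intro j _ hj
        rw [if_neg (fun h => hj (Subtype.ext h)), mul_zero]
      · simp
    · congr 1
      have := sum_expMap_symm_apply ha
      rw [← ell_eq] at this
      simp only [Pi.sub_apply, Pi.add_apply, Finset.sum_apply, Pi.smul_apply, smul_eq_mul,
        Finset.sum_sub_distrib, Finset.sum_add_distrib, this]
      rw [Finset.sum_comm]
      simp only [← Finset.mul_sum, sum_completeBasis_ne, sum_completeBasis_w₀]
      simp [mul_comm]
  · intro w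
    rw [normAtPlace_smul]
    exact mul_ne_zero (by positivity) (nap_ne hua w)

lemma GW_sum (a : K) (ha : a ≠ 0) (T : ℝ) (hT : 0 < T) :
    HasSum (fun u : (𝓞 K)ˣ => GW K (T⁻¹ • mixedEmbedding K ((u : K) * a)))
      (torsionOrder K * theta (Real.log (|Algebra.norm ℚ a| : ℚ) - Module.finrank ℚ K * Real.log T)) := by
  letI : Fintype (torsion K) := Fintype.ofFinite _
  let f : torsion K × (Fin (rank K) → ℤ) → (𝓞 K)ˣ := fun p => p.1 * ∏ i, (fundSystem K i) ^ (p.2 i)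
  have hf : Function.Bijective f := by
    rw [Function.bijective_iff_existsUnique]
    intro u
    obtain ⟨p, hp, hp2⟩ := exist_unique_eq_mul_prod K u
    exact ⟨p, hp.symm, fun q hq => hp2 q hq.symm⟩
  rw [← (Equiv.ofBijective f hf).hasSum_iff]
  obtain ⟨F, hF1, hF2⟩ := phi_multi_sum (fun i : Fin (rank K) => (completeBasis K).equivFun (ell (mixedEmbedding K a)) (fundamentalCone.equivFinRank i))
  set θ0 := theta (Real.log (|Algebra.norm ℚ a| : ℚ) - Module.finrank ℚ K * Real.log T)
  have hval : ∀ p, ((fun u : (𝓞 K)ˣ => GW K (T⁻¹ • mixedEmbedding K ((u : K) * a))) ∘ (Equiv.ofBijective f hf)) p =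
      (∏ i, phi ((completeBasis K).equivFun (ell (mixedEmbedding K a)) (fundamentalCone.equivFinRank i) + p.2 i)) * θ0 := by
    intro p
    refine (GW_unit a ha T hT p.1 p.2).trans ?_
    congr 1
    rw [← (fundamentalCone.equivFinRank (K := K)).prod_comp]
    simp
  have key : HasSum _ _ := hasSum_sum_of_ne_finset_zero (s := (Finset.univ : Finset (torsion K)) ×ˢ F)
    (f := ((fun u : (𝓞 K)ˣ => GW K (T⁻¹ • mixedEmbedding K ((u : K) * a))) ∘ (Equiv.ofBijective f hf))) (by
      intro p hp
      rw [hval, hF1, zero_mul]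
      simpa using hp)
  convert key using 1
  simp only [hval]
  rw [Finset.sum_product]
  simp only [← Finset.sum_mul, hF2]
  simp [torsionOrder, Nat.card_eq_fintype_card]

lemma GW_integral_pos : 0 < ∫ x, GW K x := by
  have hd : (Module.finrank ℚ K : ℝ) ≠ 0 := by exact_mod_cast (Module.finrank_pos (R := ℚ) (M := K)).ne'
  have hex : ∃ x, GW K x ≠ 0 := by
    by_contra hcon
    push Not at hcon
    have h := GW_sum (1 : K) one_ne_zero (Real.exp (3 / 2 / Module.finrank ℚ K)) (Real.exp_pos _)
    simp only [hcon] at h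
    have h2 := h.unique hasSum_zero
    rw [Real.log_exp, mul_div_cancel₀ _ hd] at h2
    simp only [map_one, abs_one, Rat.cast_one, Real.log_one, zero_sub] at h2
    rcases mul_eq_zero.1 h2 with h3 | h3
    · exact (torsionOrder_ne_zero K) (by exact_mod_cast h3)
    · rw [show -(3/2 : ℝ) = -3/2 by ring] at h3
      exact theta_pos.ne' h3
  obtain ⟨x, hx⟩ := hex
  exact GW_contDiff.continuous.integral_pos_of_hasCompactSupport_nonneg_nonzero GW_compact GW_nonneg hx

end Weight

section Ray
set_option linter.unusedSectionVars false
variable {K : Type*} [Field K] [NumberField K]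

def Cop (I 𝔞 : Ideal (𝓞 K)) : Prop := 𝔞 ≠ ⊥ ∧ IsCoprime 𝔞 I

lemma Cop.mul_iff {I 𝔞 𝔟 : Ideal (𝓞 K)} : Cop I (𝔞 * 𝔟) ↔ Cop I 𝔞 ∧ Cop I 𝔟 := by
  simp only [Cop, IsCoprime.mul_left_iff, ← Ideal.zero_eq_bot, mul_ne_zero_iff]
  tauto

lemma Cop.one (I : Ideal (𝓞 K)) : Cop I 1 :=
  ⟨one_ne_zero, isCoprime_one_left⟩

lemma cop_span_iff {I : Ideal (𝓞 K)} {a : 𝓞 K} : IsCoprime (Ideal.span {a}) I ↔ ∃ c, a * c - 1 ∈ I := by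
  rw [Ideal.isCoprime_iff_exists]
  constructor
  · rintro ⟨i, hi, j, hj, h⟩
    obtain ⟨c, rfl⟩ := Ideal.mem_span_singleton'.1 hi
    refine ⟨c, ?_⟩
    rw [show a * c - 1 = -j by rw [← h]; ring]
    exact I.neg_mem hj
  · rintro ⟨c, hc⟩
    exact ⟨a * c, Ideal.mul_mem_right _ _ (Ideal.mem_span_singleton_self a), 1 - a * c,
      by simpa using I.neg_mem hc, by ring⟩

lemma cop_cancel {I : Ideal (𝓞 K)} {a z : 𝓞 K} (h : IsCoprime (Ideal.span {a}) I) (hz : a * z ∈ I) : z ∈ I := by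
  obtain ⟨c, hc⟩ := cop_span_iff.1 h
  have := I.sub_mem (I.mul_mem_left c hz) (I.mul_mem_right z hc)
  rwa [show c * (a * z) - (a * c - 1) * z = z by ring] at this

lemma cop_congr {I : Ideal (𝓞 K)} {a b : 𝓞 K} (h : IsCoprime (Ideal.span {a}) I) (hab : a - b ∈ I) :
    IsCoprime (Ideal.span {b}) I := by
  obtain ⟨c, hc⟩ := cop_span_iff.1 h
  refine cop_span_iff.2 ⟨c, ?_⟩
  have := I.sub_mem hc (I.mul_mem_right c hab)
  rwa [show a * c - 1 - (a - b) * c = b * c - 1 by ring] at this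

def copM (I : Ideal (𝓞 K)) : Submonoid (Ideal (𝓞 K)) where
  carrier := {𝔞 | Cop I 𝔞}
  mul_mem' ha hb := Cop.mul_iff.2 ⟨ha, hb⟩
  one_mem' := Cop.one I

def rayRel (I : Ideal (𝓞 K)) (𝔞 𝔟 : Ideal (𝓞 K)) : Prop :=
  ∃ a b : 𝓞 K, a ≠ 0 ∧ b ≠ 0 ∧ IsCoprime (Ideal.span {a}) I ∧ a - b ∈ I ∧
    Ideal.span {a} * 𝔞 = Ideal.span {b} * 𝔟

lemma rayRel.symm {I 𝔞 𝔟 : Ideal (𝓞 K)} : rayRel I 𝔞 𝔟 → rayRel I 𝔟 𝔞 := by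
  rintro ⟨a, b, ha, hb, hc, hab, h⟩
  exact ⟨b, a, hb, ha, cop_congr hc hab, by simpa using I.neg_mem hab, h.symm⟩

lemma mul_sub_mul_mem {I : Ideal (𝓞 K)} {a b c d : 𝓞 K} (h1 : a - b ∈ I) (h2 : c - d ∈ I) : a * c - b * d ∈ I := by
  rw [show a * c - b * d = (a - b) * c + b * (c - d) by ring]
  exact I.add_mem (I.mul_mem_right _ h1) (I.mul_mem_left _ h2)

lemma rayRel.trans {I 𝔞 𝔟 𝔠 : Ideal (𝓞 K)} : rayRel I 𝔞 𝔟 → rayRel I 𝔟 𝔠 → rayRel I 𝔞 𝔠 := by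
  rintro ⟨a, b, ha, hb, hc, hab, h⟩ ⟨a', b', ha', hb', hc', hab', h'⟩
  refine ⟨a * a', b * b', mul_ne_zero ha ha', mul_ne_zero hb hb', ?_, mul_sub_mul_mem hab hab', ?_⟩
  · rw [← Ideal.span_singleton_mul_span_singleton, IsCoprime.mul_left_iff]
    exact ⟨hc, hc'⟩
  · rw [← Ideal.span_singleton_mul_span_singleton, ← Ideal.span_singleton_mul_span_singleton,
      mul_assoc (Ideal.span {b}), ← h', mul_left_comm (Ideal.span {b}), ← h]
    ring

lemma rayRel.mul {I 𝔞 𝔟 𝔞' 𝔟' : Ideal (𝓞 K)} : rayRel I 𝔞 𝔟 → rayRel I 𝔞' 𝔟' → rayRel I (𝔞 * 𝔞') (𝔟 * 𝔟') := by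
  rintro ⟨a, b, ha, hb, hc, hab, h⟩ ⟨a', b', ha', hb', hc', hab', h'⟩
  refine ⟨a * a', b * b', mul_ne_zero ha ha', mul_ne_zero hb hb', ?_, mul_sub_mul_mem hab hab', ?_⟩
  · rw [← Ideal.span_singleton_mul_span_singleton, IsCoprime.mul_left_iff]
    exact ⟨hc, hc'⟩
  · rw [← Ideal.span_singleton_mul_span_singleton, ← Ideal.span_singleton_mul_span_singleton,
      mul_mul_mul_comm, h, h', mul_mul_mul_comm]

def rayCon (I : Ideal (𝓞 K)) : Con (copM I) where
  r x y := rayRel I x y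
  iseqv := ⟨fun x => ⟨1, 1, one_ne_zero, one_ne_zero, by simp [isCoprime_one_left, ← Ideal.one_eq_top], by simp, rfl⟩,
    rayRel.symm, rayRel.trans⟩
  mul' := rayRel.mul

abbrev RayG (I : Ideal (𝓞 K)) : Type _ := (rayCon I).Quotient

instance rayCancel (I : Ideal (𝓞 K)) : CancelCommMonoid (RayG I) where
  __ := (inferInstance : CommMonoid (RayG I))
  mul_left_cancel := by
    intro x y z h
    induction x using Con.induction_on with | _ x
    induction y using Con.induction_on with | _ y
    induction z using Con.induction_on with | _ z
    simp only [← Con.coe_mul] at h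
    obtain ⟨a, b, ha, hb, hc, hab, h⟩ := (rayCon I).eq.1 h
    refine (rayCon I).eq.2 ⟨a, b, ha, hb, hc, hab, ?_⟩
    simp only [Submonoid.coe_mul] at h
    rw [mul_left_comm, mul_left_comm _ (x : Ideal (𝓞 K))] at h
    exact mul_left_cancel₀ x.2.1 h

open scoped Classical in
instance rayFinite (I : Ideal (𝓞 K)) [NeZero I] : Finite (RayG I) := by
  have hfin : Finite (𝓞 K ⧸ I) := Ideal.finiteQuotientOfFreeOfNeBot I (NeZero.ne I)
  have hn : Fintype.card (ClassGroup (𝓞 K)) ≠ 0 := Fintype.card_ne_zero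
  set n := Fintype.card (ClassGroup (𝓞 K))
  let nz : copM I → nonZeroDivisors (Ideal (𝓞 K)) := fun x => ⟨x, mem_nonZeroDivisors_of_ne_zero x.2.1⟩
  let c : copM I → ClassGroup (𝓞 K) := fun x => ClassGroup.mk0 (nz x)
  have hJ : ∀ k : ClassGroup (𝓞 K), ∃ J : copM I, ∀ x : copM I, c x = k → ((x : Ideal (𝓞 K)) * J).IsPrincipal := by
    intro k
    by_cases hk : ∃ y, c y = k
    · obtain ⟨y, hy⟩ := hk
      refine ⟨y ^ (n - 1), fun x hx => ?_⟩
      have : ClassGroup.mk0 (nz x * nz y ^ (n - 1)) = 1 := by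
        rw [map_mul, map_pow]
        change c x * c y ^ (n - 1) = 1
        rw [hx, hy, mul_pow_sub_one hn]
        exact pow_card_eq_one
      have := (ClassGroup.mk0_eq_one_iff (nz x * nz y ^ (n - 1)).2).1 this
      simpa using this
    · exact ⟨1, fun x hx => absurd ⟨x, hx⟩ hk⟩
  choose J hJ using hJ
  have hgen : ∀ x : copM I, ∃ a : 𝓞 K, (x : Ideal (𝓞 K)) * J (c x) = Ideal.span {a} := fun x =>
    ((hJ (c x) x rfl).principal)
  choose gen hgen using hgen
  let f : copM I → ClassGroup (𝓞 K) × (𝓞 K ⧸ I) := fun x => (c x, Ideal.Quotient.mk I (gen x))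
  have hf : ∀ x y, f x = f y → rayRel I x y := by
    intro x y h
    simp only [f, Prod.mk.injEq] at h
    have hx := hgen x
    have hy := hgen y
    rw [← h.1] at hy
    have hxn : Cop I (Ideal.span {gen x}) := hx ▸ (x * J (c x)).2
    have hyn : Cop I (Ideal.span {gen y}) := hy ▸ (y * J (c x)).2
    refine ⟨gen y, gen x, by simpa using hyn.1, by simpa using hxn.1, hyn.2, ?_, ?_⟩
    · exact (Ideal.Quotient.eq).1 h.2.symm
    · refine mul_right_cancel₀ (J (c x)).2.1 ?_
      rw [mul_assoc, mul_assoc, hx, hy, mul_comm]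
  have hinj : Function.Injective (fun g : RayG I => f (Quotient.out g)) := by
    intro g g' h
    have := (rayCon I).eq.2 (hf _ _ h)
    rwa [show ((Quotient.out g : copM I) : RayG I) = g from Quotient.out_eq g,
      show ((Quotient.out g' : copM I) : RayG I) = g' from Quotient.out_eq g'] at this
  exact Finite.of_injective _ hinj

noncomputable instance rayGroup (I : Ideal (𝓞 K)) [NeZero I] : CommGroup (RayG I) :=
  { LeftCancelMonoid.groupOfFinite (G := RayG I) with
    mul_comm := mul_comm }

open scoped Classical in
noncomputable def rcl (I : Ideal (𝓞 K)) (𝔞 : Ideal (𝓞 K)) : RayG I :=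
  if h : Cop I 𝔞 then ((⟨𝔞, h⟩ : copM I) : RayG I) else ((1 : copM I) : RayG I)

lemma rcl_mul {I 𝔞 𝔟 : Ideal (𝓞 K)} [NeZero I] (ha : Cop I 𝔞) (hb : Cop I 𝔟) :
    rcl I (𝔞 * 𝔟) = rcl I 𝔞 * rcl I 𝔟 := by
  rw [rcl, rcl, rcl, dif_pos ha, dif_pos hb, dif_pos (Cop.mul_iff.2 ⟨ha, hb⟩)]
  rfl

lemma rcl_eq_iff {I 𝔞 𝔟 : Ideal (𝓞 K)} (ha : Cop I 𝔞) (hb : Cop I 𝔟) :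
    rcl I 𝔞 = rcl I 𝔟 ↔ rayRel I 𝔞 𝔟 := by
  rw [rcl, rcl, dif_pos ha, dif_pos hb]
  exact (rayCon I).eq

lemma rcl_surj {I : Ideal (𝓞 K)} (g : RayG I) : ∃ 𝔞, Cop I 𝔞 ∧ rcl I 𝔞 = g := by
  induction g using Con.induction_on with | _ x
  have hx : Cop I (x : Ideal (𝓞 K)) := x.2
  exact ⟨x, hx, by rw [rcl, dif_pos hx]⟩

lemma rcl_one (I : Ideal (𝓞 K)) [NeZero I] : rcl I 1 = 1 := by
  rw [rcl, dif_pos (Cop.one I)]; rfl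

lemma rcl_span {I 𝔞 : Ideal (𝓞 K)} {x : 𝓞 K} (ha : Cop I 𝔞) (hx : Cop I (Ideal.span {x}))
    (h : rcl I 𝔞 = rcl I (Ideal.span {x})) : ∃ y, 𝔞 = Ideal.span {y} ∧ y - x ∈ I := by
  obtain ⟨a, b, ha0, hb0, hc, hab, h⟩ := (rcl_eq_iff ha hx).1 h
  rw [Ideal.span_singleton_mul_span_singleton] at h
  have hmem : b * x ∈ Ideal.span {a} * 𝔞 := h ▸ Ideal.mem_span_singleton_self _
  obtain ⟨y, hy, hyy⟩ := Ideal.mem_span_singleton_mul.1 hmem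
  refine ⟨y, ?_, ?_⟩
  · rw [← hyy, ← Ideal.span_singleton_mul_span_singleton] at h
    exact mul_left_cancel₀ (by simpa using ha0) h
  · refine cop_cancel hc ?_
    rw [mul_sub, hyy, show b * x - a * x = -((a - b) * x) by ring]
    exact I.neg_mem (I.mul_mem_right _ hab)

end Ray

section RayCount
open scoped Classical
open NumberField.InfinitePlace NumberField.mixedEmbedding NumberField.Units MeasureTheory
variable {K : Type*} [Field K] [NumberField K]

variable (K) in
noncomputable def VW : ℝ := (∫ x, GW K x) / volume.real (ZSpan.fundamentalDomain (latticeBasis K))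

lemma VW_pos : 0 < VW K := by
  refine div_pos GW_integral_pos ?_
  rw [Measure.real, ENNReal.toReal_pos_iff]
  exact ⟨pos_iff_ne_zero.2 (ZSpan.measure_fundamentalDomain_ne_zero _),
    (ZSpan.fundamentalDomain_isBounded _).measure_lt_top⟩

lemma GW_zero : GW K 0 = 0 := by
  rw [GW, liftW, if_neg]
  push Not
  exact ⟨Classical.arbitrary _, map_zero _⟩

lemma emb_inj {a b : 𝓞 K} (h : mixedEmbedding K (a : K) = mixedEmbedding K (b : K)) : a = b :=
  RingOfIntegers.coe_injective (mixedEmbedding_injective K h)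

lemma GW_finite (T : ℝ) (hT : 0 < T) : {y : 𝓞 K | GW K (T⁻¹ • mixedEmbedding K (y : K)) ≠ 0}.Finite := by
  obtain ⟨R, hR0, hR⟩ := (GW_compact (K := K)).isCompact.isBounded.exists_pos_norm_le
  have := ZSpan.setFinite_inter (latticeBasis K) (s := Metric.closedBall 0 (T * R)) Metric.isBounded_closedBall
  refine Set.Finite.of_finite_image (f := fun y : 𝓞 K => mixedEmbedding K (y : K)) (this.subset ?_)
    (fun a _ b _ h => emb_inj h)
  rintro _ ⟨y, hy, rfl⟩
  refine ⟨?_, ?_⟩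
  · have := hR _ (subset_tsupport _ hy)
    rw [_root_.norm_smul, norm_inv, Real.norm_eq_abs, abs_of_pos hT, inv_mul_le_iff₀ hT] at this
    simpa using this
  · rw [SetLike.mem_coe, mem_span_latticeBasis]
    exact ⟨y, rfl⟩

lemma ideal_count (𝔟 : Ideal (𝓞 K)) (h𝔟 : 𝔟 ≠ ⊥) : ∃ C : ℝ, ∀ T : ℝ, 1 ≤ T → ∀ a : 𝓞 K,
    |(∑' y : 𝓞 K, if y - a ∈ 𝔟 then GW K (T⁻¹ • mixedEmbedding K (y : K)) else 0) -
      T ^ (Module.finrank ℚ K) * (VW K / Ideal.absNorm 𝔟)| ≤ C := by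
  have h𝔟' : (𝔟 : FractionalIdeal (nonZeroDivisors (𝓞 K)) K) ≠ 0 := by
    simpa using h𝔟
  set J : (FractionalIdeal (nonZeroDivisors (𝓞 K)) K)ˣ := Units.mk0 _ h𝔟' with hJ
  set b := fractionalIdealLatticeBasis K J
  have hcard : Fintype.card (Module.Free.ChooseBasisIndex ℤ J) = Module.finrank ℚ K := by
    rw [← mixedEmbedding.finrank K, Module.finrank_eq_card_basis b]
  have hne : Nonempty (Module.Free.ChooseBasisIndex ℤ J) := by
    rw [← Fintype.card_pos_iff, hcard]; exact Module.finrank_pos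
  obtain ⟨C, hC⟩ := lattice_count b volume (GW K) GW_contDiff GW_compact
  refine ⟨C, fun T hT a => ?_⟩
  have key := hC T hT (mixedEmbedding K (a : K))
  rw [hcard] at key
  have hvol : (∫ x, GW K x) / volume.real (ZSpan.fundamentalDomain b) = VW K / Ideal.absNorm 𝔟 := by
    rw [VW, div_div, Measure.real, Measure.real, volume_fundamentalDomain_fractionalIdealLatticeBasis, ENNReal.toReal_mul,
      ENNReal.toReal_ofReal (by exact_mod_cast FractionalIdeal.absNorm_nonneg _), hJ, Units.val_mk0,
      FractionalIdeal.coeIdeal_absNorm, mul_comm]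
    simp
  rw [hvol] at key
  convert key using 3
  have hmem : ∀ z : mixedSpace K, z ∈ Submodule.span ℤ (Set.range b) ↔ ∃ y ∈ 𝔟, mixedEmbedding K ((y : 𝓞 K) : K) = z := by
    intro z
    rw [mem_span_fractionalIdealLatticeBasis]
    simp [hJ]
  let f : {y : 𝓞 K // y - a ∈ 𝔟} → Submodule.span ℤ (Set.range b) := fun y =>
    ⟨mixedEmbedding K ((y.1 - a : 𝓞 K) : K), (hmem _).2 ⟨_, y.2, rfl⟩⟩
  have hf : Function.Bijective f := by
    constructor
    · intro y y' h
      have := emb_inj (Subtype.ext_iff.1 h)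
      exact Subtype.ext (by simpa using this)
    · rintro ⟨z, hz⟩
      obtain ⟨y, hy, rfl⟩ := (hmem z).1 hz
      exact ⟨⟨y + a, by simpa using hy⟩, Subtype.ext (by simp [f])⟩
  rw [← (Equiv.ofBijective f hf).tsum_eq]
  have := tsum_subtype {y : 𝓞 K | y - a ∈ 𝔟} (fun y => GW K (T⁻¹ • mixedEmbedding K (y : K)))
  simp only [Set.indicator_apply, Set.mem_ofPred_eq] at this
  rw [← this]
  refine tsum_congr fun y => ?_
  congr 2
  change _ = _ + mixedEmbedding K ((y.1 - a : 𝓞 K) : K)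
  rw [← map_add]
  congr 1
  simp

lemma ray_fiber {I : Ideal (𝓞 K)} [NeZero I] (g : RayG I) (J : Ideal (𝓞 K)) (hJ : Cop I J) (hg : rcl I J = g⁻¹)
    (𝔞 : Ideal (𝓞 K)) (ha : Cop I 𝔞) :
    rcl I 𝔞 = g ↔ ∃ y : 𝓞 K, y - 1 ∈ I ∧ 𝔞 * J = Ideal.span {y} := by
  have h1 : rcl I 𝔞 = g ↔ rcl I (𝔞 * J) = 1 := by
    rw [rcl_mul ha hJ, hg, mul_inv_eq_one]
  rw [h1]
  have h1c : Cop I (Ideal.span {(1 : 𝓞 K)}) := by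
    rw [Ideal.span_singleton_one, ← Ideal.one_eq_top]; exact Cop.one I
  have h2 : (1 : RayG I) = rcl I (Ideal.span {(1 : 𝓞 K)}) := by
    rw [Ideal.span_singleton_one, ← Ideal.one_eq_top, rcl_one]
  have haJ := Cop.mul_iff.2 ⟨ha, hJ⟩
  constructor
  · intro h
    rw [h2] at h
    obtain ⟨y, hy, hy2⟩ := rcl_span haJ h1c h
    exact ⟨y, hy2, hy⟩
  · rintro ⟨y, hy, hy2⟩
    rw [h2, rcl_eq_iff haJ h1c]
    refine ⟨1, y, one_ne_zero, ?_, h1c.2, ?_, ?_⟩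
    · rintro rfl
      exact haJ.1 (by simpa using hy2)
    · simpa using I.neg_mem hy
    · rw [hy2, Ideal.span_singleton_one]; simp

lemma exists_crt {I J : Ideal (𝓞 K)} (h : IsCoprime J I) (v : 𝓞 K) : ∃ a ∈ J, a - v ∈ I := by
  obtain ⟨i, hi, j, hj, hij⟩ := Ideal.isCoprime_iff_exists.1 h
  refine ⟨i * v, J.mul_mem_right _ hi, ?_⟩
  rw [show i * v - v = -(j * v) by rw [← eq_sub_iff_add_eq] at hij; rw [hij]; ring]
  exact I.neg_mem (I.mul_mem_right _ hj)

end RayCount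

section RayCount2
open scoped Classical
open NumberField.InfinitePlace NumberField.mixedEmbedding NumberField.Units MeasureTheory
variable {K : Type*} [Field K] [NumberField K]

set_option maxHeartbeats 1000000 in
/-- one class, one scale: the two evaluations of the weighted sum -/
lemma ray_sum_left {I J : Ideal (𝓞 K)} [NeZero I] (g : RayG I) (hJ : Cop I J) (hg : rcl I J = g⁻¹)
    (T : ℝ) (hT : 0 < T) :
    (∑' y : 𝓞 K, if (y ≠ 0 ∧ y ∈ J ∧ ∃ u : (𝓞 K)ˣ, y - u ∈ I) then GW K (T⁻¹ • mixedEmbedding K (y : K)) else 0) =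
    torsionOrder K * ∑' 𝔞 : Ideal (𝓞 K), if Cop I 𝔞 ∧ rcl I 𝔞 = g then
      theta (Real.log (Ideal.absNorm 𝔞) - (Module.finrank ℚ K * Real.log T - Real.log (Ideal.absNorm J))) else 0 := by
  set A := {𝔞 : Ideal (𝓞 K) // Cop I 𝔞 ∧ rcl I 𝔞 = g} with hA
  have hex : ∀ 𝔞 : A, ∃ y : 𝓞 K, y - 1 ∈ I ∧ 𝔞.1 * J = Ideal.span {y} := fun 𝔞 =>
    (ray_fiber g J hJ hg 𝔞.1 𝔞.2.1).1 𝔞.2.2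
  choose Y hY1 hY2 using hex
  have hY0 : ∀ 𝔞, Y 𝔞 ≠ 0 := by
    intro 𝔞 h
    have h2 := hY2 𝔞
    rw [h] at h2
    exact (Cop.mul_iff.2 ⟨𝔞.2.1, hJ⟩).1 (by simpa using h2)
  set e : A × (𝓞 K)ˣ → 𝓞 K := fun p => p.2 * Y p.1 with he
  have hspan : ∀ p, Ideal.span {e p} = p.1.1 * J := by
    intro p
    rw [hY2, he, Ideal.span_singleton_eq_span_singleton]
    exact (associated_unit_mul_left _ _ p.2.isUnit)
  have hinj : Function.Injective e := by
    intro p q hpq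
    have h1 : p.1.1 * J = q.1.1 * J := by rw [← hspan, ← hspan, hpq]
    have h2 : p.1 = q.1 := Subtype.ext (mul_right_cancel₀ hJ.1 h1)
    refine Prod.ext h2 ?_
    simp only [he, h2] at hpq
    exact Units.ext (mul_right_cancel₀ (hY0 _) hpq)
  set F : 𝓞 K → ℝ := fun y => GW K (T⁻¹ • mixedEmbedding K (y : K)) with hF
  have hsumF : Summable F := summable_of_hasFiniteSupport (GW_finite T hT)
  have hr : ∀ y, (y ≠ 0 ∧ y ∈ J ∧ ∃ u : (𝓞 K)ˣ, y - u ∈ I) ↔ y ∈ Set.range e := by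
    intro y
    constructor
    · rintro ⟨h0, hyJ, u, hu⟩
      have hd : J ∣ Ideal.span {y} := by
        rw [Ideal.dvd_span_singleton]; exact hyJ
      obtain ⟨𝔞, h𝔞⟩ := hd
      have hu1 : (↑u⁻¹ * y) - 1 ∈ I := by
        have := I.mul_mem_left (↑u⁻¹ : 𝓞 K) hu
        rwa [mul_sub, Units.inv_mul] at this
      have hs1 : Ideal.span {(↑u⁻¹ * y)} = Ideal.span {y} := by
        rw [Ideal.span_singleton_eq_span_singleton]
        exact associated_unit_mul_left _ _ (u⁻¹).isUnit
      have hcy : Cop I (Ideal.span {y}) := by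
        refine ⟨by simpa using h0, ?_⟩
        rw [← hs1]
        refine cop_span_iff.2 ⟨1, by simpa using hu1⟩
      have ha : Cop I 𝔞 := (Cop.mul_iff.1 (h𝔞 ▸ hcy)).2
      have hag : rcl I 𝔞 = g := (ray_fiber g J hJ hg 𝔞 ha).2 ⟨_, hu1, by rw [hs1, h𝔞, mul_comm]⟩
      have : Ideal.span {Y ⟨𝔞, ha, hag⟩} = Ideal.span {y} := by rw [← hY2, h𝔞, mul_comm]
      obtain ⟨v, hv⟩ := Ideal.span_singleton_eq_span_singleton.1 this
      exact ⟨(⟨𝔞, ha, hag⟩, v), by simp only [he]; rw [mul_comm]; exact hv⟩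
    · rintro ⟨p, rfl⟩
      refine ⟨mul_ne_zero p.2.ne_zero (hY0 _), ?_, p.2, ?_⟩
      · have : e p ∈ p.1.1 * J := by rw [← hspan]; exact Ideal.mem_span_singleton_self _
        exact (Ideal.mul_le_right : p.1.1 * J ≤ J) this
      · have := I.mul_mem_left (p.2 : 𝓞 K) (hY1 p.1)
        rwa [mul_sub, mul_one] at this
  have h1 : (∑' y : 𝓞 K, if (y ≠ 0 ∧ y ∈ J ∧ ∃ u : (𝓞 K)ˣ, y - u ∈ I) then F y else 0) = ∑' p, F (e p) := by
    rw [← hinj.tsum_eq (f := fun y => if (y ≠ 0 ∧ y ∈ J ∧ ∃ u : (𝓞 K)ˣ, y - u ∈ I) then F y else 0)]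
    · refine tsum_congr fun p => ?_
      rw [if_pos]
      exact (hr _).2 ⟨p, rfl⟩
    · intro y hy
      rw [← hr]
      by_contra h
      exact hy (if_neg h)
  rw [h1]
  have hs2 : Summable (F ∘ e) := hsumF.comp_injective hinj
  have h2 : ∀ 𝔞 : A, ∑' u, F (e (𝔞, u)) = torsionOrder K * theta (Real.log (Ideal.absNorm 𝔞.1) - (Module.finrank ℚ K * Real.log T - Real.log (Ideal.absNorm J))) := by
    intro 𝔞
    have := (GW_sum ((Y 𝔞 : 𝓞 K) : K) (by simpa using hY0 𝔞) T hT).tsum_eq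
    have hn : Real.log (|Algebra.norm ℚ ((Y 𝔞 : 𝓞 K) : K)| : ℚ) = Real.log (Ideal.absNorm 𝔞.1) + Real.log (Ideal.absNorm J) := by
      rw [← Real.log_mul, ← Nat.cast_mul, ← map_mul, hY2, Ideal.absNorm_span_singleton, ← Algebra.coe_norm_int]
      · congr 1
        rw [Nat.cast_natAbs]; push_cast; rfl
      · rw [Nat.cast_ne_zero, Ne, Ideal.absNorm_eq_zero_iff]; exact 𝔞.2.1.1
      · rw [Nat.cast_ne_zero, Ne, Ideal.absNorm_eq_zero_iff]; exact hJ.1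
    rw [hn] at this
    rw [show Real.log (Ideal.absNorm 𝔞.1) - (Module.finrank ℚ K * Real.log T - Real.log (Ideal.absNorm J)) =
      Real.log (Ideal.absNorm 𝔞.1) + Real.log (Ideal.absNorm J) - Module.finrank ℚ K * Real.log T by ring, ← this]
    refine tsum_congr fun u => ?_
    simp [hF, he]
  have h3 : ∑' p, F (e p) = ∑' 𝔞 : A, ∑' u, F (e (𝔞, u)) := hs2.tsum_prod
  rw [h3]
  simp_rw [h2]
  rw [tsum_mul_left]
  congr 1
  have := tsum_subtype {𝔞 : Ideal (𝓞 K) | Cop I 𝔞 ∧ rcl I 𝔞 = g} (fun 𝔞 => theta (Real.log (Ideal.absNorm 𝔞) - (Module.finrank ℚ K * Real.log T - Real.log (Ideal.absNorm J))))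
  refine this.trans (tsum_congr fun 𝔞 => ?_)
  simp only [Set.indicator_apply, Set.mem_ofPred_eq]

lemma ray_sum_right {I J : Ideal (𝓞 K)} [NeZero I] (hJ : Cop I J) : ∃ C : ℝ, ∀ T : ℝ, 1 ≤ T →
    |(∑' y : 𝓞 K, if (y ≠ 0 ∧ y ∈ J ∧ ∃ u : (𝓞 K)ˣ, y - u ∈ I) then GW K (T⁻¹ • mixedEmbedding K (y : K)) else 0)
      - (Set.range (fun u : (𝓞 K)ˣ => Ideal.Quotient.mk I (u : 𝓞 K))).ncard *
        (T ^ (Module.finrank ℚ K) * (VW K / Ideal.absNorm (J * I)))| ≤ C := by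
  have hfin : Finite (𝓞 K ⧸ I) := Ideal.finiteQuotientOfFreeOfNeBot I (NeZero.ne I)
  obtain ⟨C, hC⟩ := ideal_count (J * I) (mul_ne_zero hJ.1 (NeZero.ne I))
  set Vs : Set (𝓞 K ⧸ I) := Set.range (fun u : (𝓞 K)ˣ => Ideal.Quotient.mk I (u : 𝓞 K)) with hVs
  set V : Finset (𝓞 K ⧸ I) := (Set.toFinite Vs).toFinset with hV
  have hcard : Vs.ncard = V.card := Set.ncard_eq_toFinset_card _ _
  have hex : ∀ v : 𝓞 K ⧸ I, ∃ a ∈ J, Ideal.Quotient.mk I a = v := by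
    intro v
    obtain ⟨w, rfl⟩ := Ideal.Quotient.mk_surjective v
    obtain ⟨a, ha, h⟩ := exists_crt hJ.2 w
    exact ⟨a, ha, Ideal.Quotient.eq.2 h⟩
  choose a haJ hav using hex
  refine ⟨V.card * C, fun T hT => ?_⟩
  set F : 𝓞 K → ℝ := fun y => GW K (T⁻¹ • mixedEmbedding K (y : K)) with hF
  have hF0 : F 0 = 0 := by simp [hF, GW_zero]
  have hpt : ∀ y, (if (y ≠ 0 ∧ y ∈ J ∧ ∃ u : (𝓞 K)ˣ, y - u ∈ I) then F y else 0) =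
      ∑ v ∈ V, if y - a v ∈ J * I then F y else 0 := by
    intro y
    have hm : ∀ v, y - a v ∈ J * I ↔ y ∈ J ∧ Ideal.Quotient.mk I y = v := by
      intro v
      rw [Ideal.mul_eq_inf_of_isCoprime hJ.2, Ideal.mem_inf, J.sub_mem_iff_left (haJ v), ← Ideal.Quotient.eq, hav]
    simp_rw [hm]
    by_cases h0 : y = 0
    · subst h0; simp [hF0]
    by_cases hyJ : y ∈ J
    · simp only [hyJ, true_and, Finset.sum_ite_eq, ne_eq, h0, not_false_eq_true]
      refine if_congr ?_ rfl rfl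
      simp only [hV, Set.Finite.mem_toFinset, hVs, Set.mem_range, ← Ideal.Quotient.eq]
      exact exists_congr fun u => eq_comm
    · simp [hyJ]
  have hsum : ∀ v ∈ V, Summable fun y => if y - a v ∈ J * I then F y else 0 := by
    intro v _
    refine summable_of_hasFiniteSupport ((GW_finite T (by linarith)).subset ?_)
    intro y hy
    simp only [Function.mem_support, ne_eq, ite_eq_right_iff, Classical.not_imp] at hy
    exact hy.2
  have hpt2 := tsum_congr (L := .unconditional _) hpt
  simp only [hF] at hpt2
  rw [hpt2, Summable.tsum_finsetSum hsum, hcard, ← nsmul_eq_mul, ← Finset.sum_const, ← Finset.sum_sub_distrib,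
    ← nsmul_eq_mul, ← Finset.sum_const]
  refine (Finset.abs_sum_le_sum_abs _ _).trans (Finset.sum_le_sum fun v _ => hC T hT _)

theorem ray_count (I : Ideal (𝓞 K)) [NeZero I] : ∃ κ : ℝ, 0 < κ ∧ ∀ g : RayG I, ∃ C : ℝ, ∀ t : ℝ, 0 ≤ t →
    |(∑' 𝔞 : Ideal (𝓞 K), if Cop I 𝔞 ∧ rcl I 𝔞 = g then theta (Real.log (Ideal.absNorm 𝔞) - t) else 0)
      - κ * Real.exp t| ≤ C := by
  have hfin : Finite (𝓞 K ⧸ I) := Ideal.finiteQuotientOfFreeOfNeBot I (NeZero.ne I)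
  set m := (Set.range (fun u : (𝓞 K)ˣ => Ideal.Quotient.mk I (u : 𝓞 K))).ncard with hm
  have hmpos : 0 < (m : ℝ) := by
    rw [Nat.cast_pos, hm, Set.ncard_pos (Set.toFinite _)]
    exact Set.range_nonempty _
  have hw : 0 < (torsionOrder K : ℝ) := by
    rw [Nat.cast_pos]; exact Nat.pos_of_ne_zero (torsionOrder_ne_zero K)
  have hI : 0 < (Ideal.absNorm I : ℝ) := by
    rw [Nat.cast_pos, Nat.pos_iff_ne_zero, Ne, Ideal.absNorm_eq_zero_iff]; exact NeZero.ne I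
  have hd : 0 < (Module.finrank ℚ K : ℝ) := by exact_mod_cast Module.finrank_pos
  refine ⟨m * VW K / (Ideal.absNorm I * torsionOrder K), by have := VW_pos (K := K); positivity, fun g => ?_⟩
  obtain ⟨J, hJ, hJg⟩ := rcl_surj g⁻¹
  have hJ1 : 0 < Ideal.absNorm J := by
    rw [Nat.pos_iff_ne_zero, Ne, Ideal.absNorm_eq_zero_iff]; exact hJ.1
  have hJ0 : 0 < (Ideal.absNorm J : ℝ) := by exact_mod_cast hJ1
  obtain ⟨C, hC⟩ := ray_sum_right (I := I) hJ
  refine ⟨C / torsionOrder K, fun t ht => ?_⟩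
  set T := Real.exp ((t + Real.log (Ideal.absNorm J)) / Module.finrank ℚ K) with hT
  have hT1 : 1 ≤ T := by
    rw [hT, Real.one_le_exp_iff]
    have : 0 ≤ Real.log (Ideal.absNorm J) := Real.log_nonneg (by exact_mod_cast hJ1)
    positivity
  have hlog : Module.finrank ℚ K * Real.log T = t + Real.log (Ideal.absNorm J) := by
    rw [hT, Real.log_exp]; field_simp
  have hTd : T ^ Module.finrank ℚ K = Real.exp t * Ideal.absNorm J := by
    rw [hT, ← Real.exp_nat_mul, mul_div_cancel₀ _ hd.ne', Real.exp_add, Real.exp_log hJ0]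
  have h := hC T hT1
  rw [ray_sum_left g hJ hJg T (by linarith), hlog, add_sub_cancel_right, hTd, map_mul] at h
  rw [le_div_iff₀ hw, ← abs_of_pos hw, ← abs_mul, abs_of_pos hw]
  refine le_trans (le_of_eq ?_) h
  congr 1
  push_cast
  rw [← hm]
  field_simp

end RayCount2

section Formal
open scoped Classical ComplexOrder
variable {σ : Type*}

noncomputable def vM (ν : (σ →₀ ℕ) →+ ℝ) (n : σ →₀ ℕ) : ℝ :=
  ∑ p ∈ n.support, if n = Finsupp.single p (n p) then ν (Finsupp.single p 1) else 0

variable {ν : (σ →₀ ℕ) →+ ℝ}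

lemma nu_eq_sum (n : σ →₀ ℕ) : ν n = ∑ p ∈ n.support, (n p : ℝ) * ν (Finsupp.single p 1) := by
  conv_lhs => rw [← Finsupp.sum_single n, Finsupp.sum, map_sum]
  refine Finset.sum_congr rfl fun p _ => ?_
  rw [← nsmul_eq_mul, ← map_nsmul]
  simp

lemma vM_single (p : σ) {k : ℕ} (hk : k ≠ 0) : vM ν (Finsupp.single p k) = ν (Finsupp.single p 1) := by
  rw [vM, Finsupp.support_single p hk]
  simp

lemma vM_nonneg (hν : ∀ p, 0 ≤ ν (Finsupp.single p 1)) (n : σ →₀ ℕ) : 0 ≤ vM ν n :=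
  Finset.sum_nonneg fun p _ => by split_ifs; exacts [hν p, le_rfl]

lemma vM_zero : vM ν 0 = 0 := by simp [vM]

lemma vM_ne {n : σ →₀ ℕ} (h : vM ν n ≠ 0) : ∃ p k, k ≠ 0 ∧ n = Finsupp.single p k := by
  obtain ⟨p, hp, h⟩ := Finset.exists_ne_zero_of_sum_ne_zero h
  have h2 : n = Finsupp.single p (n p) := by
    by_contra h'
    exact h (if_neg h')
  exact ⟨p, n p, by simpa using hp, h2⟩

lemma vM_conv (n : σ →₀ ℕ) : ∑ x ∈ Finset.HasAntidiagonal.antidiagonal n, vM ν x.2 = ν n := by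
  have h1 : ∀ x ∈ Finset.HasAntidiagonal.antidiagonal n, vM ν x.2 = ∑ p ∈ n.support,
      if (x.2 = Finsupp.single p (x.2 p) ∧ x.2 p ≠ 0) then ν (Finsupp.single p 1) else 0 := by
    intro x hx
    rw [Finset.HasAntidiagonal.mem_antidiagonal] at hx
    rw [vM]
    have hsub : x.2.support ⊆ n.support := by
      intro p hp
      rw [Finsupp.mem_support_iff] at hp ⊢
      rw [← hx, Finsupp.add_apply]; omega
    rw [← Finset.sum_subset hsub]
    · refine Finset.sum_congr rfl fun p hp => ?_
      rw [Finsupp.mem_support_iff] at hp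
      simp [hp]
    · intro p _ hp
      rw [Finsupp.notMem_support_iff] at hp
      simp [hp]
  rw [Finset.sum_congr rfl h1, Finset.sum_comm, nu_eq_sum]
  refine Finset.sum_congr rfl fun p _ => ?_
  rw [← Finset.sum_filter, Finset.sum_const, nsmul_eq_mul]
  congr 2
  have : (Finset.Icc 1 (n p)).card = n p := by simp
  conv_rhs => rw [← this]
  symm
  refine Finset.card_bij (fun k _ => (n - Finsupp.single p k, Finsupp.single p k)) ?_ ?_ ?_
  · intro k hk
    rw [Finset.mem_Icc] at hk
    rw [Finset.mem_filter, Finset.HasAntidiagonal.mem_antidiagonal]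
    refine ⟨?_, ?_, ?_⟩
    · refine tsub_add_cancel_of_le ?_
      rw [Finsupp.single_le_iff]; exact hk.2
    · simp
    · simp; omega
  · intro a _ b _ h
    have := (Prod.ext_iff.1 h).2
    exact Finsupp.single_injective p this
  · rintro ⟨a, b⟩ hx
    rw [Finset.mem_filter, Finset.HasAntidiagonal.mem_antidiagonal] at hx
    obtain ⟨h1, h2, h3⟩ := hx
    simp only at h1 h2 h3
    refine ⟨b p, ?_, ?_⟩
    · rw [Finset.mem_Icc, ← h1, Finsupp.add_apply]; omega
    · rw [← h2, ← h1, add_tsub_cancel_right]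

/-- the derivation `f ↦ ν f` -/
noncomputable def DD (ν : (σ →₀ ℕ) →+ ℝ) (f : MvPowerSeries σ ℂ) : MvPowerSeries σ ℂ := fun n => ν n * f n

lemma mps_mul (f g : MvPowerSeries σ ℂ) (n : σ →₀ ℕ) :
    (f * g) n = ∑ x ∈ Finset.HasAntidiagonal.antidiagonal n, f x.1 * g x.2 := MvPowerSeries.coeff_mul n f g

lemma DD_mul (f g : MvPowerSeries σ ℂ) : DD ν (f * g) = DD ν f * g + f * DD ν g := by
  refine funext fun n => ?_
  change ν n * (f * g) n = (DD ν f * g) n + (f * DD ν g) n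
  rw [mps_mul, mps_mul, mps_mul, Finset.mul_sum, ← Finset.sum_add_distrib]
  refine Finset.sum_congr rfl fun x hx => ?_
  rw [Finset.HasAntidiagonal.mem_antidiagonal] at hx
  rw [← hx, map_add, DD, DD]
  push_cast
  ring

noncomputable def LL (ν : (σ →₀ ℕ) →+ ℝ) (f : MvPowerSeries σ ℂ) : MvPowerSeries σ ℂ := fun n => f n * vM ν n

lemma DD_mult (f : MvPowerSeries σ ℂ) (hf : ∀ a b, f (a + b) = f a * f b) : DD ν f = f * LL ν f := by
  refine funext fun n => ?_
  rw [mps_mul, DD, ← vM_conv (ν := ν) n]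
  push_cast
  rw [Finset.sum_mul]
  refine Finset.sum_congr rfl fun x hx => ?_
  rw [Finset.HasAntidiagonal.mem_antidiagonal] at hx
  rw [← hx, hf, LL]
  ring

/-- the nonnegativity of the coefficients of `1*1*χ*χ̄` -/
lemma rho_nonneg (hν : ∀ n : σ →₀ ℕ, n ≠ 0 → 0 < ν n) (f g h k : MvPowerSeries σ ℂ)
    (hf : ∀ a b, f (a + b) = f a * f b) (hg : ∀ a b, g (a + b) = g a * g b)
    (hh : ∀ a b, h (a + b) = h a * h b) (hk : ∀ a b, k (a + b) = k a * k b)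
    (hf0 : f 0 = 1) (hg0 : g 0 = 1) (hh0 : h 0 = 1) (hk0 : k 0 = 1)
    (hpos : ∀ n, 0 ≤ f n + g n + h n + k n) :
    (∀ n, 0 ≤ (f * g * (h * k)) n) ∧ ∀ n, (f n + g n + h n + k n) * vM ν n ≤ ν n * (f * g * (h * k)) n := by
  set ρ := f * g * (h * k) with hρ
  set L : MvPowerSeries σ ℂ := LL ν f + LL ν g + (LL ν h + LL ν k) with hL
  have hLn : ∀ n, L n = (f n + g n + h n + k n) * vM ν n := by
    intro n
    change f n * vM ν n + g n * vM ν n + (h n * vM ν n + k n * vM ν n) = _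
    ring
  have hν1 : ∀ p, 0 ≤ ν (Finsupp.single p 1) := fun p => (hν _ (by simp)).le
  have hLpos : ∀ n, 0 ≤ L n := fun n => by
    rw [hLn]
    exact mul_nonneg (hpos n) (by exact_mod_cast vM_nonneg hν1 n)
  have hD : DD ν ρ = ρ * L := by
    rw [hρ, DD_mul, DD_mul, DD_mul, DD_mult f hf, DD_mult g hg, DD_mult h hh, DD_mult k hk, hL]
    ring
  have hDn : ∀ n, ν n * ρ n = ∑ x ∈ Finset.HasAntidiagonal.antidiagonal n, ρ x.1 * L x.2 := fun n => by
    rw [← mps_mul, ← hD]; rfl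
  have h0 : ρ 0 = 1 := by
    rw [hρ, mps_mul]; simp [mps_mul, hf0, hg0, hh0, hk0]
  have key : ∀ m : ℕ, ∀ n : σ →₀ ℕ, n.degree = m → 0 ≤ ρ n := by
    intro m
    induction m using Nat.strong_induction_on with
    | _ m ih =>
    intro n hn
    by_cases hn0 : n = 0
    · rw [hn0, h0]; exact zero_le_one
    have hp := hν n hn0
    have : 0 ≤ (ν n : ℂ) * ρ n := by
      rw [hDn]
      refine Finset.sum_nonneg fun x hx => ?_
      rw [Finset.HasAntidiagonal.mem_antidiagonal] at hx
      by_cases hx2 : x.2 = 0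
      · rw [hLn, hx2, vM_zero]; simp
      · refine mul_nonneg (ih x.1.degree ?_ _ rfl) (hLpos _)
        rw [← hn, ← hx, map_add]
        have : x.2.degree ≠ 0 := fun h => hx2 ((Finsupp.degree_eq_zero_iff _).1 h)
        omega
    have h2 : ρ n = ((ν n)⁻¹ : ℝ) * ((ν n : ℂ) * ρ n) := by
      push_cast
      rw [inv_mul_cancel_left₀]
      exact_mod_cast hp.ne'
    rw [h2]
    exact mul_nonneg (by exact_mod_cast (inv_pos.2 hp).le) this
  have hρn : ∀ n, 0 ≤ ρ n := fun n => key _ n rfl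
  refine ⟨hρn, fun n => ?_⟩
  rw [hDn, ← hLn]
  have := Finset.single_le_sum (f := fun x : (σ →₀ ℕ) × (σ →₀ ℕ) => ρ x.1 * L x.2) (s := Finset.HasAntidiagonal.antidiagonal n)
    (fun x _ => mul_nonneg (hρn _) (hLpos _)) (a := (0, n)) (by simp)
  simpa [h0] using this

end Formal

section Lap
open MeasureTheory
open scoped Convolution

structure Win (w : ℝ → ℝ) : Prop where
  cont : Continuous w
  comp : HasCompactSupport w
  nonneg : ∀ x, 0 ≤ w x
  supp : ∀ x, 0 < x → w x = 0
  ne : ∃ x, w x ≠ 0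

lemma theta_win : Win theta where
  cont := theta_contDiff.continuous
  comp := HasCompactSupport.intro (K := Set.Icc (-2) (-1)) isCompact_Icc fun x hx => theta_zero hx
  nonneg := theta_nonneg
  supp x hx := theta_zero (by rw [Set.mem_Icc]; intro h; linarith [h.2])
  ne := ⟨_, theta_pos.ne'⟩

noncomputable def MM (w : ℝ → ℝ) (s : ℝ) : ℝ := ∫ u, w u * Real.exp (s * u)
noncomputable def MM1 (w : ℝ → ℝ) (s : ℝ) : ℝ := ∫ u, w u * Real.exp (s * u) * u

lemma Win.int {w : ℝ → ℝ} (hw : Win w) {k : ℝ → ℝ} (hk : Continuous k) : Integrable (fun u => w u * k u) :=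
  (hw.cont.mul hk).integrable_of_hasCompactSupport hw.comp.mul_right

lemma Win.int_shift {w : ℝ → ℝ} (hw : Win w) {k : ℝ → ℝ} (hk : Continuous k) (x : ℝ) :
    Integrable (fun t => w (x - t) * k t) := by
  have := (hw.int (k := fun u => k (x - u)) (by fun_prop)).comp_sub_left x
  simpa using this

lemma MM_pos {w : ℝ → ℝ} (hw : Win w) (s : ℝ) : 0 < MM w s := by
  obtain ⟨x, hx⟩ := hw.ne
  refine Continuous.integral_pos_of_hasCompactSupport_nonneg_nonzero (x := x) (hw.cont.mul (by fun_prop)) hw.comp.mul_right ?_ ?_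
  · intro u; exact mul_nonneg (hw.nonneg u) (Real.exp_pos _).le
  · exact mul_ne_zero hx (Real.exp_pos _).ne'

lemma MM_shift (w : ℝ → ℝ) (s x : ℝ) : ∫ t, w (x - t) * Real.exp (-s * t) = Real.exp (-s * x) * MM w s := by
  have := integral_sub_left_eq_self (fun u => w u * Real.exp (-s * (x - u))) volume x
  simp only [sub_sub_cancel] at this
  rw [this, MM, ← integral_const_mul]
  congr 1; ext u
  rw [mul_left_comm, ← Real.exp_add]
  congr 2; ring

lemma MM_shift1 {w : ℝ → ℝ} (hw : Win w) (s x : ℝ) : ∫ t, w (x - t) * (t * Real.exp (-s * t)) =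
    Real.exp (-s * x) * (x * MM w s - MM1 w s) := by
  have := integral_sub_left_eq_self (fun u => w u * ((x - u) * Real.exp (-s * (x - u)))) volume x
  simp only [sub_sub_cancel] at this
  rw [this, MM, MM1, ← integral_const_mul, ← integral_sub, ← integral_const_mul]
  · congr 1; ext u
    rw [show -s * (x - u) = -s * x + s * u by ring, Real.exp_add]; ring
  · exact (hw.int (k := fun u => Real.exp (s * u)) (by fun_prop)).const_mul _
  · have := hw.int (k := fun u => Real.exp (s * u) * u) (by fun_prop)
    simpa only [mul_assoc] using this

lemma lap_bound {ι : Type*} (a x : ι → ℝ) (ha : ∀ i, 0 ≤ a i) {w : ℝ → ℝ} (hw : Win w) (B : ℝ → ℝ)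
    (hB : ∀ t, ∀ F : Finset ι, ∑ i ∈ F, a i * w (x i - t) ≤ B t) (s : ℝ)
    (hint : Integrable (fun t => B t * Real.exp (-s * t))) :
    Summable (fun i => a i * Real.exp (-s * x i)) ∧
      ∑' i, a i * Real.exp (-s * x i) ≤ (∫ t, B t * Real.exp (-s * t)) / MM w s := by
  have hM := MM_pos hw s
  have key : ∀ F : Finset ι, ∑ i ∈ F, a i * Real.exp (-s * x i) ≤ (∫ t, B t * Real.exp (-s * t)) / MM w s := by
    intro F
    rw [le_div_iff₀ hM, Finset.sum_mul]
    have h1 : ∀ i, a i * Real.exp (-s * x i) * MM w s = ∫ t, a i * (w (x i - t) * Real.exp (-s * t)) := by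
      intro i
      rw [integral_const_mul, MM_shift]; ring
    simp_rw [h1]
    rw [← integral_finsetSum]
    · refine integral_mono (integrable_finsetSum _ fun i _ => ?_) hint fun t => ?_
      · exact (hw.int_shift (k := fun t => Real.exp (-s * t)) (by fun_prop) _).const_mul _
      · have := mul_le_mul_of_nonneg_right (hB t F) (Real.exp_pos (-s * t)).le
        rw [Finset.sum_mul] at this
        refine le_trans (le_of_eq ?_) this
        refine Finset.sum_congr rfl fun i _ => by ring
    · intro i _
      exact (hw.int_shift (k := fun t => Real.exp (-s * t)) (by fun_prop) _).const_mul _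
  have h0 : ∀ i, 0 ≤ a i * Real.exp (-s * x i) := fun i => mul_nonneg (ha i) (Real.exp_pos _).le
  have hs := summable_of_sum_le h0 key
  exact ⟨hs, hs.tsum_le_of_sum_le key⟩

noncomputable def cw (w₁ w₂ : ℝ → ℝ) (x : ℝ) : ℝ := ∫ u, w₁ u * w₂ (x - u)

lemma cw_win {w₁ w₂ : ℝ → ℝ} (h₁ : Win w₁) (h₂ : Win w₂) : Win (cw w₁ w₂) := by
  have he : cw w₁ w₂ = (w₁ ⋆[ContinuousLinearMap.mul ℝ ℝ, volume] w₂) := by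
    ext x; simp [cw, convolution_def]
  refine ⟨?_, ?_, fun x => integral_nonneg fun u => mul_nonneg (h₁.nonneg _) (h₂.nonneg _), ?_, ?_⟩
  · rw [he]
    exact h₂.comp.continuous_convolution_right _ (h₁.cont.locallyIntegrable) h₂.cont
  · rw [he]
    exact HasCompactSupport.convolution (L := ContinuousLinearMap.mul ℝ ℝ) h₁.comp h₂.comp
  · intro x hx
    rw [cw]
    refine integral_eq_zero_of_ae (Filter.Eventually.of_forall fun u => ?_)
    simp only [Pi.zero_apply, mul_eq_zero]
    by_cases hu : 0 < u
    · exact Or.inl (h₁.supp _ hu)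
    · exact Or.inr (h₂.supp _ (by linarith))
  · obtain ⟨a, ha⟩ := h₁.ne
    obtain ⟨b, hb⟩ := h₂.ne
    refine ⟨a + b, ne_of_gt ?_⟩
    refine Continuous.integral_pos_of_hasCompactSupport_nonneg_nonzero (x := a) (h₁.cont.mul (h₂.cont.comp (by fun_prop))) h₁.comp.mul_right ?_ ?_
    · intro u; exact mul_nonneg (h₁.nonneg u) (h₂.nonneg _)
    · simpa using ⟨ha, hb⟩

lemma cw_shift (w₁ w₂ : ℝ → ℝ) (a b t : ℝ) :
    ∫ y, w₁ (a - y) * w₂ (b - (t - y)) = cw w₁ w₂ (a + b - t) := by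
  have := integral_sub_left_eq_self (fun u => w₁ u * w₂ (a + b - t - u)) volume a
  rw [cw, ← this]
  congr 1; ext y
  congr 2; ring

end Lap

section SSum
open MeasureTheory
open scoped Classical
variable {σ : Type*}

noncomputable def SS (ν : (σ →₀ ℕ) →+ ℝ) (f : (σ →₀ ℕ) → ℂ) (w : ℝ → ℝ) (t : ℝ) : ℂ :=
  ∑' n, f n * (w (ν n - t) : ℝ)

variable {ν : (σ →₀ ℕ) →+ ℝ}

lemma SS_eq (hfin : ∀ X, {n | ν n ≤ X}.Finite) {w : ℝ → ℝ} (hw : Win w) (f : (σ →₀ ℕ) → ℂ) {t X : ℝ} (h : t ≤ X) :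
    SS ν f w t = ∑ n ∈ (hfin X).toFinset, f n * (w (ν n - t) : ℝ) := by
  refine tsum_eq_sum fun n hn => ?_
  simp only [Set.Finite.mem_toFinset, Set.mem_ofPred_eq, not_le] at hn
  rw [hw.supp _ (by linarith)]; simp

lemma SS_neg (hν0 : ∀ n, 0 ≤ ν n) {w : ℝ → ℝ} (hw : Win w) (f : (σ →₀ ℕ) → ℂ) {t : ℝ} (h : t < 0) :
    SS ν f w t = 0 := by
  have : ∀ n, f n * (w (ν n - t) : ℝ) = 0 := fun n => by
    rw [hw.supp _ (by linarith [hν0 n])]; simp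
  rw [SS]; simp [this]

lemma SS_cont (hfin : ∀ X, {n | ν n ≤ X}.Finite) {w : ℝ → ℝ} (hw : Win w) (f : (σ →₀ ℕ) → ℂ) :
    Continuous (SS ν f w) := by
  rw [continuous_iff_continuousAt]
  intro t
  have h1 : ContinuousAt (fun t => ∑ n ∈ (hfin (t + 0 + 1)).toFinset, f n * (w (ν n - t) : ℝ)) t := by
    have := hw.cont
    have h2 : Continuous (fun x => ∑ n ∈ (hfin (t + 1)).toFinset, f n * (w (ν n - x) : ℝ)) := by fun_prop
    refine ContinuousAt.congr h2.continuousAt ?_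
    filter_upwards [eventually_lt_nhds (show t < t + 1 by linarith), eventually_gt_nhds (show t - 1 < t by linarith)] with x hx hx2
    rw [← SS_eq hfin hw f hx.le, SS_eq hfin hw f (by linarith : x ≤ x + 0 + 1)]
  refine h1.congr ?_
  refine Filter.Eventually.of_forall fun x => ?_
  exact (SS_eq hfin hw f (by linarith)).symm

lemma SS_conv (hν0 : ∀ n, 0 ≤ ν n) (hfin : ∀ X, {n | ν n ≤ X}.Finite) {w₁ w₂ : ℝ → ℝ} (h₁ : Win w₁) (h₂ : Win w₂)
    (f g h : (σ →₀ ℕ) → ℂ) (hh : ∀ n, h n = ∑ x ∈ Finset.HasAntidiagonal.antidiagonal n, f x.1 * g x.2) (t : ℝ) :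
    ∫ y, SS ν f w₁ y * SS ν g w₂ (t - y) = SS ν h (cw w₁ w₂) t := by
  obtain ⟨X, hX⟩ : ∃ X, X = t := ⟨t, rfl⟩
  set F := (hfin X).toFinset with hF
  have hFm : ∀ n, n ∈ F ↔ ν n ≤ X := fun n => by simp [hF]
  have hpt : ∀ y, SS ν f w₁ y * SS ν g w₂ (t - y) = ∑ a ∈ F, ∑ b ∈ F,
      f a * g b * ((w₁ (ν a - y) * w₂ (ν b - (t - y)) : ℝ) : ℂ) := by
    intro y
    have hR : ∑ a ∈ F, ∑ b ∈ F, f a * g b * ((w₁ (ν a - y) * w₂ (ν b - (t - y)) : ℝ) : ℂ) =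
      (∑ a ∈ F, f a * (w₁ (ν a - y) : ℝ)) * (∑ b ∈ F, g b * (w₂ (ν b - (t - y)) : ℝ)) := by
      rw [Finset.sum_mul_sum]
      refine Finset.sum_congr rfl fun a _ => Finset.sum_congr rfl fun b _ => ?_
      push_cast; ring
    rw [hR]
    by_cases hy0 : y < 0
    · rw [SS_neg hν0 h₁ f hy0, zero_mul]
      rw [Finset.sum_eq_zero, zero_mul]
      intro a _
      rw [h₁.supp _ (by linarith [hν0 a])]; simp
    by_cases hyt : t < y
    · rw [SS_neg hν0 h₂ g (by linarith : t - y < 0), mul_zero]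
      rw [Finset.sum_eq_zero (s := F) (f := fun b => g b * (w₂ (ν b - (t - y)) : ℝ)), mul_zero]
      intro a _
      rw [h₂.supp _ (by linarith [hν0 a])]; simp
    rw [SS_eq hfin h₁ f (show y ≤ X by linarith), SS_eq hfin h₂ g (show t - y ≤ X by linarith)]
  rw [integral_congr_ae (Filter.Eventually.of_forall hpt)]
  have hI : ∀ a b, Integrable fun y => w₁ (ν a - y) * w₂ (ν b - (t - y)) := fun a b =>
    h₁.int_shift (k := fun y => w₂ (ν b - (t - y))) (h₂.cont.comp (by fun_prop)) _
  rw [integral_finsetSum _ fun a _ => integrable_finsetSum _ fun b _ => (hI a b).ofReal.const_mul _]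
  have h2 : ∀ a ∈ F, ∫ y, ∑ b ∈ F, f a * g b * ((w₁ (ν a - y) * w₂ (ν b - (t - y)) : ℝ) : ℂ) =
      ∑ b ∈ F, f a * g b * (cw w₁ w₂ (ν a + ν b - t) : ℝ) := by
    intro a _
    rw [integral_finsetSum _ fun b _ => (hI a b).ofReal.const_mul _]
    refine Finset.sum_congr rfl fun b _ => ?_
    rw [integral_const_mul, integral_complex_ofReal, cw_shift]
  rw [Finset.sum_congr rfl h2, ← Finset.sum_product', SS_eq hfin (cw_win h₁ h₂) _ hX.ge, ← hF]
  have h3 : ∀ n, h n * (cw w₁ w₂ (ν n - t) : ℝ) = ∑ x ∈ Finset.HasAntidiagonal.antidiagonal n, f x.1 * g x.2 * (cw w₁ w₂ (ν x.1 + ν x.2 - t) : ℝ) := by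
    intro n
    rw [hh, Finset.sum_mul]
    refine Finset.sum_congr rfl fun x hx => ?_
    rw [Finset.HasAntidiagonal.mem_antidiagonal] at hx
    rw [← hx, map_add]
  rw [Finset.sum_congr rfl fun n _ => h3 n]
  rw [Finset.sum_sigma']
  symm
  refine Finset.sum_of_injOn (fun x => x.2) ?_ ?_ ?_ ?_
  · rintro ⟨n, x⟩ hx ⟨m, y⟩ hy h
    simp only [Finset.coe_sigma, Set.mem_sigma_iff, Finset.mem_coe, Finset.HasAntidiagonal.mem_antidiagonal] at hx hy h
    subst h
    obtain rfl : n = m := hx.2.symm.trans hy.2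
    rfl
  · rintro ⟨n, x⟩ hx
    simp only [Finset.coe_sigma, Set.mem_sigma_iff, Finset.mem_coe, Finset.HasAntidiagonal.mem_antidiagonal, hFm] at hx
    have := hx.1
    rw [← hx.2, map_add] at this
    simp only [Finset.coe_product, Set.mem_prod, Finset.mem_coe, hFm]
    exact ⟨by linarith [hν0 x.2], by linarith [hν0 x.1]⟩
  · rintro ⟨a, b⟩ _ hx
    have : t < ν a + ν b := by
      by_contra! h
      refine hx ⟨⟨a + b, (a, b)⟩, ?_, rfl⟩
      simp only [Finset.coe_sigma, Set.mem_sigma_iff, Finset.mem_coe, Finset.HasAntidiagonal.mem_antidiagonal, hFm, map_add]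
      exact ⟨hX ▸ h, trivial⟩
    simp only
    rw [(cw_win h₁ h₂).supp _ (by linarith)]; simp
  · intro i _; rfl

lemma nu_countable (hfin : ∀ X, {n | ν n ≤ X}.Finite) : Countable (σ →₀ ℕ) := by
  rw [← Set.countable_univ_iff]
  have : (Set.univ : Set (σ →₀ ℕ)) = ⋃ k : ℕ, {n | ν n ≤ k} := by
    ext n; simp [exists_nat_ge]
  rw [this]
  exact Set.countable_iUnion fun k => (hfin k).countable

lemma SS_lapk (hν0 : ∀ n, 0 ≤ ν n) (hfin : ∀ X, {n | ν n ≤ X}.Finite) {w : ℝ → ℝ} (hw : Win w) (f : (σ →₀ ℕ) → ℂ)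
    {k : ℝ → ℝ} (hk : Continuous k) (hk0 : ∀ t, 0 ≤ t → 0 ≤ k t)
    (hs : Summable fun n => ‖f n‖ * ∫ t, w (ν n - t) * k t) :
    ∫ t, SS ν f w t * (k t : ℝ) = ∑' n, f n * (∫ t, w (ν n - t) * k t : ℝ) := by
  have := nu_countable hfin
  have hI : ∀ n, Integrable fun t => w (ν n - t) * k t := fun n => hw.int_shift hk _
  have h := hasSum_integral_of_summable_integral_norm (F := fun n t => f n * ((w (ν n - t) * k t : ℝ) : ℂ)) (μ := volume)
    (fun n => (hI n).ofReal.const_mul _) ?_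
  · have h2 := h.tsum_eq
    simp_rw [integral_const_mul, integral_complex_ofReal] at h2
    rw [h2]
    congr 1; ext t
    rw [SS, ← tsum_mul_right]
    refine tsum_congr fun n => ?_
    push_cast; ring
  · refine hs.congr fun n => ?_
    rw [← integral_const_mul]
    congr 1; ext t
    rw [norm_mul, Complex.norm_real, Real.norm_eq_abs]
    by_cases ht : 0 ≤ t
    · rw [abs_of_nonneg (mul_nonneg (hw.nonneg _) (hk0 t ht))]
    · rw [hw.supp _ (by linarith [hν0 n])]; simp

lemma SS_lap (hν0 : ∀ n, 0 ≤ ν n) (hfin : ∀ X, {n | ν n ≤ X}.Finite) {w : ℝ → ℝ} (hw : Win w) (f : (σ →₀ ℕ) → ℂ)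
    (s : ℝ) (hs : Summable fun n => ‖f n‖ * Real.exp (-s * ν n)) :
    ∫ t, SS ν f w t * (Real.exp (-s * t) : ℝ) = MM w s * ∑' n, f n * (Real.exp (-s * ν n) : ℝ) := by
  rw [SS_lapk hν0 hfin hw f (by fun_prop) (fun t _ => (Real.exp_pos _).le), ← tsum_mul_left]
  · refine tsum_congr fun n => ?_
    rw [MM_shift]; push_cast; ring
  · simp_rw [MM_shift, ← mul_assoc]
    exact hs.mul_right _

lemma SS_lap1 (hν0 : ∀ n, 0 ≤ ν n) (hfin : ∀ X, {n | ν n ≤ X}.Finite) {w : ℝ → ℝ} (hw : Win w) (f : (σ →₀ ℕ) → ℂ)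
    (s : ℝ) (hs : Summable fun n => ‖f n‖ * Real.exp (-s * ν n))
    (hs1 : Summable fun n => ‖f n‖ * (ν n * Real.exp (-s * ν n))) :
    ∫ t, SS ν f w t * (t * Real.exp (-s * t) : ℝ) = MM w s * (∑' n, f n * (ν n * Real.exp (-s * ν n) : ℝ))
      - MM1 w s * ∑' n, f n * (Real.exp (-s * ν n) : ℝ) := by
  rw [SS_lapk hν0 hfin hw f (by fun_prop) (fun t ht => mul_nonneg ht (Real.exp_pos _).le), ← tsum_mul_left, ← tsum_mul_left,
    ← Summable.tsum_sub]
  · refine tsum_congr fun n => ?_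
    rw [MM_shift1 hw]; push_cast; ring
  · refine Summable.mul_left _ (Summable.of_norm ?_)
    refine hs1.congr fun n => ?_
    rw [norm_mul, Complex.norm_real, Real.norm_eq_abs, abs_of_nonneg (mul_nonneg (hν0 n) (Real.exp_pos _).le)]
  · refine Summable.mul_left _ (Summable.of_norm ?_)
    refine hs.congr fun n => ?_
    rw [norm_mul, Complex.norm_real, Real.norm_eq_abs, abs_of_nonneg ((Real.exp_pos _).le)]
  · simp_rw [MM_shift1 hw]
    refine ((hs1.mul_right (MM w s)).sub (hs.mul_right (MM1 w s))).congr fun n => ?_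
    ring

end SSum

set_option linter.unusedSectionVars false

/-- a system of generalized integers with classes in `Γ`, equidistributed in the smoothed sense -/
structure BS (σ : Type*) (Γ : Type*) [AddCommGroup Γ] where
  ν : (σ →₀ ℕ) →+ ℝ
  cl : (σ →₀ ℕ) →+ Γ
  c : ℝ
  cpos : 0 < c
  hc : ∀ p, c ≤ ν (Finsupp.single p 1)
  fin : ∀ X, {n | ν n ≤ X}.Finite
  κ : ℝ
  κpos : 0 < κ
  count : ∀ g : Γ, ∃ C : ℝ, ∀ t : ℝ, 0 ≤ t → |(∑' n, open scoped Classical in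
    if cl n = g then theta (ν n - t) else 0) - κ * Real.exp t| ≤ C

section BeurlingBasic
open MeasureTheory
open scoped Classical
variable {σ Γ : Type*} [AddCommGroup Γ] [Fintype Γ] (b : BS σ Γ)

namespace BS

lemma nu1 (p : σ) : 0 < b.ν (Finsupp.single p 1) := b.cpos.trans_le (b.hc p)

lemma nu_pos (n : σ →₀ ℕ) (hn : n ≠ 0) : 0 < b.ν n := by
  rw [nu_eq_sum]
  refine Finset.sum_pos (fun p hp => mul_pos ?_ (b.nu1 p)) (by simpa using hn)
  rw [Finsupp.mem_support_iff] at hp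
  exact_mod_cast Nat.pos_of_ne_zero hp

lemma nu0 (n : σ →₀ ℕ) : 0 ≤ b.ν n := by
  by_cases hn : n = 0
  · simp [hn]
  · exact (b.nu_pos n hn).le

noncomputable def ff (χ : AddChar Γ ℂ) (n : σ →₀ ℕ) : ℂ := χ (b.cl n)

lemma ff_norm (χ : AddChar Γ ℂ) (n : σ →₀ ℕ) : ‖b.ff χ n‖ = 1 := AddChar.norm_apply _ _

lemma ff_add (χ : AddChar Γ ℂ) (m n : σ →₀ ℕ) : b.ff χ (m + n) = b.ff χ m * b.ff χ n := by
  simp [ff, AddChar.map_add_eq_mul]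

lemma ff_zero (χ : AddChar Γ ℂ) : b.ff χ 0 = 1 := by simp [ff]

noncomputable def S (χ : AddChar Γ ℂ) (t : ℝ) : ℂ := SS b.ν (b.ff χ) theta t

lemma S_neg (χ : AddChar Γ ℂ) {t : ℝ} (ht : t < 0) : b.S χ t = 0 := SS_neg b.nu0 theta_win _ ht

lemma S_cont (χ : AddChar Γ ℂ) : Continuous (b.S χ) := SS_cont b.fin theta_win _

lemma char_count (χ : AddChar Γ ℂ) : ∃ C : ℝ, 0 ≤ C ∧ ∀ t : ℝ, 0 ≤ t →
    ‖b.S χ t - (∑ g, χ g) * (b.κ * Real.exp t : ℝ)‖ ≤ C := by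
  choose C hC using b.count
  have hC0 : ∀ g, 0 ≤ C g := fun g => (abs_nonneg _).trans (hC g 0 le_rfl)
  refine ⟨∑ g, C g, Finset.sum_nonneg fun g _ => hC0 g, fun t ht => ?_⟩
  have h1 : b.S χ t = ∑ g, χ g * ((∑' n, if b.cl n = g then theta (b.ν n - t) else 0 : ℝ) : ℂ) := by
    have hs : ∀ g, (∑' n, if b.cl n = g then theta (b.ν n - t) else 0 : ℝ) =
        ∑ n ∈ (b.fin t).toFinset, if b.cl n = g then theta (b.ν n - t) else 0 := by
      intro g
      refine tsum_eq_sum fun n hn => ?_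
      simp only [Set.Finite.mem_toFinset, Set.mem_ofPred_eq, not_le] at hn
      rw [theta_win.supp _ (by linarith)]; simp
    simp_rw [hs]
    rw [S, SS_eq b.fin theta_win _ le_rfl]
    push_cast
    simp_rw [Finset.mul_sum]
    rw [Finset.sum_comm]
    refine Finset.sum_congr rfl fun n _ => ?_
    rw [Finset.sum_eq_single (b.cl n)]
    · simp [ff]
    · intro g _ hg
      rw [if_neg (Ne.symm hg)]; simp
    · simp
  rw [h1, Finset.sum_mul, ← Finset.sum_sub_distrib]
  refine (norm_sum_le _ _).trans (Finset.sum_le_sum fun g _ => ?_)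
  rw [← mul_sub, norm_mul, AddChar.norm_apply, one_mul, ← Complex.ofReal_sub, Complex.norm_real]
  exact hC g t ht

lemma S_bdd (χ : AddChar Γ ℂ) (hχ : χ ≠ 0) : ∃ C : ℝ, 0 ≤ C ∧ ∀ t : ℝ, ‖b.S χ t‖ ≤ C := by
  obtain ⟨C, h0, hC⟩ := b.char_count χ
  refine ⟨C, h0, fun t => ?_⟩
  by_cases ht : 0 ≤ t
  · have := hC t ht
    rwa [AddChar.sum_eq_zero_iff_ne_zero.2 hχ, zero_mul, sub_zero] at this
  · rw [b.S_neg χ (not_le.1 ht), norm_zero]; exact h0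

noncomputable def κ' : ℝ := Fintype.card Γ * b.κ

lemma κ'_pos : 0 < b.κ' := mul_pos (by exact_mod_cast Fintype.card_pos) b.κpos

lemma S_one : ∃ C : ℝ, 0 ≤ C ∧ ∀ t : ℝ, 0 ≤ t → ‖b.S 0 t - (b.κ' * Real.exp t : ℝ)‖ ≤ C := by
  obtain ⟨C, h0, hC⟩ := b.char_count 0
  refine ⟨C, h0, fun t ht => ?_⟩
  have := hC t ht
  refine le_trans (le_of_eq ?_) this
  congr 2
  simp [κ', mul_assoc]

noncomputable def A (t : ℝ) : ℝ := ∑' n, theta (b.ν n - t)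

lemma S_A (t : ℝ) : b.S 0 t = b.A t := by
  rw [S, SS, A, Complex.ofReal_tsum]
  refine tsum_congr fun n => by simp [ff]

lemma A_le (t : ℝ) (F : Finset (σ →₀ ℕ)) : ∑ n ∈ F, theta (b.ν n - t) ≤ b.A t := by
  refine Summable.sum_le_tsum F (fun n _ => theta_nonneg _) ?_
  refine summable_of_hasFiniteSupport ((b.fin t).subset ?_)
  intro n hn
  by_contra h
  simp only [Set.mem_ofPred_eq, not_le] at h
  exact hn (theta_win.supp _ (by linarith))

lemma A_bound : ∃ C : ℝ, 0 ≤ C ∧ ∀ t : ℝ, 0 ≤ t → |b.A t - b.κ' * Real.exp t| ≤ C := by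
  obtain ⟨C, h0, hC⟩ := b.S_one
  refine ⟨C, h0, fun t ht => ?_⟩
  have := hC t ht
  rwa [S_A, ← Complex.ofReal_sub, Complex.norm_real] at this

lemma A_neg {t : ℝ} (ht : t < 0) : b.A t = 0 := by
  have := b.S_neg 0 ht
  rw [S_A] at this
  exact_mod_cast this

lemma int_exp {a : ℝ} (ha : 0 < a) : Integrable (fun t : ℝ => (Set.Ici (0:ℝ)).indicator (fun t => Real.exp (-a * t)) t) ∧
    ∫ t : ℝ, (Set.Ici (0:ℝ)).indicator (fun t => Real.exp (-a * t)) t = 1 / a := by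
  constructor
  · rw [integrable_indicator_iff measurableSet_Ici, integrableOn_Ici_iff_integrableOn_Ioi]
    exact exp_neg_integrableOn_Ioi 0 ha
  · rw [integral_indicator measurableSet_Ici, integral_Ici_eq_integral_Ioi, integral_exp_mul_Ioi (by linarith)]
    simp

lemma sum_exp {s : ℝ} (hs : 1 < s) : Summable fun n => Real.exp (-s * b.ν n) := by
  obtain ⟨C, h0, hC⟩ := b.A_bound
  have := (lap_bound (fun _ : σ →₀ ℕ => (1:ℝ)) b.ν (fun _ => zero_le_one) theta_win
    ((Set.Ici (0:ℝ)).indicator fun t => (b.κ' + C) * Real.exp t) ?_ s ?_).1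
  · simpa using this
  · intro t F
    simp only [one_mul]
    refine (b.A_le t F).trans ?_
    by_cases ht : 0 ≤ t
    · rw [Set.indicator_of_mem (Set.mem_Ici.2 ht)]
      have h1 := (abs_le.1 (hC t ht)).2
      have h2 : 1 ≤ Real.exp t := Real.one_le_exp ht
      nlinarith
    · rw [Set.indicator_of_notMem (by simpa using ht), b.A_neg (not_le.1 ht)]
  · have := (int_exp (a := s - 1) (by linarith)).1.const_mul (b.κ' + C)
    refine this.congr (Filter.Eventually.of_forall fun t => ?_)
    simp only [Set.indicator_apply]
    split_ifs
    · rw [mul_assoc, ← Real.exp_add]; congr 2; ring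
    · simp

lemma sum_nu_exp {s : ℝ} (hs : 1 < s) : Summable fun n => b.ν n * Real.exp (-s * b.ν n) := by
  have h := (b.sum_exp (s := (s + 1) / 2) (by linarith)).mul_left (2 / (s - 1))
  have hs' : 0 < s - 1 := by linarith
  refine Summable.of_nonneg_of_le (fun n => mul_nonneg (b.nu0 n) (Real.exp_pos _).le) (fun n => ?_) h
  have h1 : (s - 1) / 2 * b.ν n ≤ Real.exp ((s - 1) / 2 * b.ν n) := by
    linarith [Real.add_one_le_exp ((s - 1) / 2 * b.ν n)]
  have h2 : Real.exp (-((s + 1) / 2) * b.ν n) = Real.exp ((s - 1) / 2 * b.ν n) * Real.exp (-s * b.ν n) := by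
    rw [← Real.exp_add]; congr 1; ring
  rw [h2, ← mul_assoc]
  refine mul_le_mul_of_nonneg_right ?_ (Real.exp_pos _).le
  rw [div_mul_eq_mul_div, le_div_iff₀ hs']
  linarith

lemma vM_le (n : σ →₀ ℕ) : vM b.ν n ≤ b.ν n := by
  have h := Finset.single_le_sum (f := fun x : (σ →₀ ℕ) × (σ →₀ ℕ) => vM b.ν x.2) (s := Finset.HasAntidiagonal.antidiagonal n)
    (fun x _ => vM_nonneg (fun p => (b.nu1 p).le) _) (a := (0, n)) (by simp)
  rwa [vM_conv] at h

lemma vM0 (n : σ →₀ ℕ) : 0 ≤ vM b.ν n := vM_nonneg (fun p => (b.nu1 p).le) _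

lemma sum_vM_exp {s : ℝ} (hs : 1 < s) : Summable fun n => vM b.ν n * Real.exp (-s * b.ν n) :=
  Summable.of_nonneg_of_le (fun n => mul_nonneg (b.vM0 n) (Real.exp_pos _).le)
    (fun n => mul_le_mul_of_nonneg_right (b.vM_le n) (Real.exp_pos _).le) (b.sum_nu_exp hs)

noncomputable def L (χ : AddChar Γ ℂ) (s : ℝ) : ℂ := ∑' n, b.ff χ n * (Real.exp (-s * b.ν n) : ℝ)
noncomputable def D (χ : AddChar Γ ℂ) (s : ℝ) : ℂ := ∑' n, b.ff χ n * (b.ν n * Real.exp (-s * b.ν n) : ℝ)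
noncomputable def Lam (χ : AddChar Γ ℂ) (s : ℝ) : ℂ := ∑' n, b.ff χ n * (vM b.ν n * Real.exp (-s * b.ν n) : ℝ)

lemma cauchy_prod (f g : (σ →₀ ℕ) → ℂ) (hf : Summable fun n => ‖f n‖) (hg : Summable fun n => ‖g n‖) :
    (∑' n, f n) * (∑' n, g n) = ∑' n, ∑ x ∈ Finset.HasAntidiagonal.antidiagonal n, f x.1 * g x.2 :=
  Summable.tsum_mul_tsum_eq_tsum_sum_antidiagonal (f := f) (g := g) hf.of_norm hg.of_norm (summable_mul_of_summable_norm hf hg)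

lemma D_eq (χ : AddChar Γ ℂ) {s : ℝ} (hs : 1 < s) : b.D χ s = b.L χ s * b.Lam χ s := by
  have hn1 : Summable fun n => ‖b.ff χ n * (Real.exp (-s * b.ν n) : ℝ)‖ := by
    refine (b.sum_exp hs).congr fun n => ?_
    rw [norm_mul, ff_norm, one_mul, Complex.norm_real, Real.norm_eq_abs, abs_of_pos (Real.exp_pos _)]
  have hn2 : Summable fun n => ‖b.ff χ n * (vM b.ν n * Real.exp (-s * b.ν n) : ℝ)‖ := by
    refine (b.sum_vM_exp hs).congr fun n => ?_
    rw [norm_mul, ff_norm, one_mul, Complex.norm_real, Real.norm_eq_abs, abs_of_nonneg (mul_nonneg (b.vM0 n) (Real.exp_pos _).le)]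
  have key := cauchy_prod _ _ hn1 hn2
  rw [D, L, Lam]
  refine Eq.trans (tsum_congr fun n => ?_) key.symm
  have hv : (b.ν n : ℂ) = ∑ x ∈ Finset.HasAntidiagonal.antidiagonal n, (vM b.ν x.2 : ℂ) := by
    exact_mod_cast (vM_conv (ν := b.ν) n).symm
  rw [Complex.ofReal_mul, hv, Finset.sum_mul, Finset.mul_sum]
  refine Finset.sum_congr rfl fun x hx => ?_
  rw [Finset.HasAntidiagonal.mem_antidiagonal] at hx
  rw [← hx, ff_add, map_add]
  push_cast
  rw [mul_add, Complex.exp_add]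
  ring

end BS
end BeurlingBasic

section BeurlingB
open MeasureTheory
open scoped Classical
variable {σ Γ : Type*} [AddCommGroup Γ] [Fintype Γ] (b : BS σ Γ)

namespace BS

noncomputable def R (s : ℝ) : ℝ := ∑' n, Real.exp (-s * b.ν n)
noncomputable def V (s : ℝ) : ℝ := ∑' n, vM b.ν n * Real.exp (-s * b.ν n)

lemma lap_S (χ : AddChar Γ ℂ) {s : ℝ} (hs : 1 < s) :
    ∫ t, b.S χ t * (Real.exp (-s * t) : ℝ) = MM theta s * b.L χ s := by
  refine SS_lap b.nu0 b.fin theta_win _ s ?_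
  simpa [ff_norm] using b.sum_exp hs

lemma lap_S1 (χ : AddChar Γ ℂ) {s : ℝ} (hs : 1 < s) :
    ∫ t, b.S χ t * (t * Real.exp (-s * t) : ℝ) = MM theta s * b.D χ s - MM1 theta s * b.L χ s := by
  refine SS_lap1 b.nu0 b.fin theta_win _ s ?_ ?_
  · simpa [ff_norm] using b.sum_exp hs
  · simpa [ff_norm] using b.sum_nu_exp hs

lemma A_cont : Continuous b.A := by
  have h := Complex.continuous_re.comp (b.S_cont 0)
  refine h.congr fun t => ?_
  simp [S_A]

lemma MM_le {s : ℝ} (hs : 0 ≤ s) : MM theta s ≤ MM theta 0 := by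
  refine integral_mono (theta_win.int (by fun_prop)) (theta_win.int (by fun_prop)) fun u => ?_
  by_cases hu : 0 < u
  · simp [theta_win.supp u hu]
  · refine mul_le_mul_of_nonneg_left (Real.exp_le_exp.2 ?_) (theta_nonneg u)
    nlinarith

lemma lap_A {s : ℝ} (hs : 1 < s) : ∫ t, b.A t * Real.exp (-s * t) = MM theta s * b.R s := by
  have h := b.lap_S 0 hs
  have h2 : b.L 0 s = b.R s := by
    rw [L, R, Complex.ofReal_tsum]
    exact tsum_congr fun n => by simp [ff]
  rw [h2] at h
  simp_rw [S_A, ← Complex.ofReal_mul] at h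
  rw [integral_complex_ofReal] at h
  exact_mod_cast h

lemma R_lower : ∃ C : ℝ, 0 ≤ C ∧ ∀ s, 1 < s → b.κ' / (s - 1) - C ≤ MM theta s * b.R s := by
  obtain ⟨C, h0, hC⟩ := b.A_bound
  refine ⟨C, h0, fun s hs => ?_⟩
  rw [← b.lap_A hs]
  have i1 := int_exp (a := s - 1) (by linarith)
  have i2 := int_exp (a := s) (by linarith)
  have hA : Integrable (fun t => b.A t * Real.exp (-s * t)) := by
    refine (i1.1.const_mul (b.κ' + C)).mono' ((b.A_cont.mul (by fun_prop)).aestronglyMeasurable) (Filter.Eventually.of_forall fun t => ?_)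
    by_cases ht : 0 ≤ t
    · rw [Set.indicator_of_mem (Set.mem_Ici.2 ht)]
      have h1 := abs_le.1 (hC t ht)
      have h2 : 1 ≤ Real.exp t := Real.one_le_exp ht
      have h3 : |b.A t| ≤ (b.κ' + C) * Real.exp t := by
        have := b.κ'_pos
        rw [abs_le]; constructor <;> nlinarith
      rw [norm_mul, Real.norm_eq_abs, Real.norm_eq_abs, abs_of_pos (Real.exp_pos _),
        show -(s - 1) * t = t + -s * t by ring, Real.exp_add, ← mul_assoc]
      exact mul_le_mul_of_nonneg_right h3 (Real.exp_pos _).le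
    · rw [Set.indicator_of_notMem (by simpa using ht), b.A_neg (not_le.1 ht)]; simp
  have : b.κ' / (s - 1) - C * (1 / s) ≤ ∫ t, b.A t * Real.exp (-s * t) := by
    rw [show b.κ' / (s - 1) = b.κ' * (1 / (s - 1)) by ring, ← i1.2, ← i2.2, ← integral_const_mul, ← integral_const_mul, ← integral_sub (i1.1.const_mul _) (i2.1.const_mul _)]
    refine integral_mono ((i1.1.const_mul _).sub (i2.1.const_mul _)) hA fun t => ?_
    by_cases ht : 0 ≤ t
    · simp only [Set.indicator_of_mem (Set.mem_Ici.2 ht)]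
      have h1 := abs_le.1 (hC t ht)
      rw [show -(s - 1) * t = t + -s * t by ring, Real.exp_add, ← mul_assoc, ← sub_mul]
      exact mul_le_mul_of_nonneg_right (by linarith) (Real.exp_pos _).le
    · simp only [Set.indicator_of_notMem (show t ∉ Set.Ici (0:ℝ) by simpa using ht), b.A_neg (not_le.1 ht)]; simp
  have h5 : 1 / s ≤ 1 := by rw [div_le_one (by linarith)]; linarith
  nlinarith

lemma R_unb (B : ℝ) : ∃ δ > 0, ∀ s, 1 < s → s < 1 + δ → B ≤ b.R s := by
  obtain ⟨C, h0, hC⟩ := b.R_lower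
  have hM := MM_pos theta_win 0
  have hk := b.κ'_pos
  have hp : 0 < C + |B| * MM theta 0 + 1 := by positivity
  refine ⟨b.κ' / (C + |B| * MM theta 0 + 1), by positivity, fun s h1 h2 => ?_⟩
  have h3 := hC s h1
  have hs : 0 < s - 1 := by linarith
  have h4 : C + |B| * MM theta 0 + 1 ≤ b.κ' / (s - 1) := by
    rw [le_div_iff₀ hs]
    have : s - 1 < b.κ' / (C + |B| * MM theta 0 + 1) := by linarith
    rw [lt_div_iff₀ hp] at this
    linarith
  have h5 := MM_le (s := s) (by linarith)
  have h6 := MM_pos theta_win s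
  have h7 : |B| * MM theta s ≤ MM theta s * b.R s := by nlinarith [abs_nonneg B]
  have : |B| ≤ b.R s := by
    by_contra hh
    nlinarith
  exact (le_abs_self B).trans this

lemma D_real {s : ℝ} (hs : 1 < s) : ∑' n, b.ν n * Real.exp (-s * b.ν n) = b.R s * b.V s := by
  have h := b.D_eq 0 hs
  have h2 : b.L 0 s = b.R s := by
    rw [L, R, Complex.ofReal_tsum]
    exact tsum_congr fun n => by simp [ff]
  have h3 : b.Lam 0 s = b.V s := by
    rw [Lam, V, Complex.ofReal_tsum]
    exact tsum_congr fun n => by simp [ff]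
  have h4 : b.D 0 s = (∑' n, b.ν n * Real.exp (-s * b.ν n) : ℝ) := by
    rw [D, Complex.ofReal_tsum]
    exact tsum_congr fun n => by simp [ff]
  rw [h2, h3, h4] at h
  exact_mod_cast h

lemma V_unb (B : ℝ) : ∃ δ > 0, ∀ s, 1 < s → s < 1 + δ → B ≤ b.V s := by
  set X : ℝ := |B| + 1 with hX
  have hX0 : 0 < X := by positivity
  set F := (b.fin X).toFinset with hF
  obtain ⟨δ, hδ, h⟩ := b.R_unb (X * F.card + 1)
  refine ⟨δ, hδ, fun s h1 h2 => ?_⟩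
  have h3 := h s h1 h2
  have h4 : X * b.R s - X * F.card ≤ b.R s * b.V s := by
    rw [← b.D_real h1, R, ← tsum_mul_left]
    have e : X * (F.card : ℝ) = ∑' n, if n ∈ F then X else 0 := by
      rw [tsum_eq_sum (s := F) (fun n hn => by simp [hn])]
      simp [mul_comm]
    have hsf : Summable fun n => if n ∈ F then X else 0 :=
      summable_of_ne_finset_zero (s := F) (fun n hn => by simp [hn])
    rw [e, ← Summable.tsum_sub ((b.sum_exp h1).mul_left X) hsf]
    refine Summable.tsum_le_tsum (fun n => ?_) (((b.sum_exp h1).mul_left X).sub hsf) (b.sum_nu_exp h1)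
    have e1 := Real.exp_pos (-s * b.ν n)
    split_ifs with hn
    · have : Real.exp (-s * b.ν n) ≤ 1 := by
        rw [Real.exp_le_one_iff]; nlinarith [b.nu0 n]
      nlinarith [b.nu0 n]
    · have : X < b.ν n := by simpa [hF] using hn
      nlinarith
  have hcard : (0:ℝ) ≤ X * F.card := by positivity
  have h5 : X - 1 ≤ b.V s := by
    by_contra hh
    nlinarith
  have := le_abs_self B
  linarith

end BS
end BeurlingB

section BeurlingC
open MeasureTheory
open scoped Classical ComplexOrder ComplexConjugate
variable {σ Γ : Type*} [AddCommGroup Γ] [Fintype Γ] (b : BS σ Γ)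

namespace BS

lemma S_int (χ : AddChar Γ ℂ) (hχ : χ ≠ 0) {s : ℝ} (hs : 0 < s) :
    Integrable fun t => b.S χ t * (Real.exp (-s * t) : ℝ) := by
  obtain ⟨C, h0, hC⟩ := b.S_bdd χ hχ
  refine ((int_exp hs).1.const_mul C).mono' (((b.S_cont χ).mul (by fun_prop)).aestronglyMeasurable) (Filter.Eventually.of_forall fun t => ?_)
  by_cases ht : 0 ≤ t
  · rw [Set.indicator_of_mem (Set.mem_Ici.2 ht), norm_mul, Complex.norm_real, Real.norm_eq_abs, abs_of_pos (Real.exp_pos _)]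
    exact mul_le_mul_of_nonneg_right (hC t) (Real.exp_pos _).le
  · rw [Set.indicator_of_notMem (by simpa using ht), b.S_neg χ (not_le.1 ht)]; simp

noncomputable def N (χ : AddChar Γ ℂ) (s : ℝ) : ℂ := ∫ t, b.S χ t * (Real.exp (-s * t) : ℝ)

noncomputable def ffm (χ : AddChar Γ ℂ) : MvPowerSeries σ ℂ := b.ff χ

noncomputable def Ef (χ : AddChar Γ ℂ) : MvPowerSeries σ ℂ := b.ffm 0 * b.ffm χ

noncomputable def E (χ : AddChar Γ ℂ) (t : ℝ) : ℂ := SS b.ν (b.Ef χ) (cw theta theta) t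

lemma E_bound (χ : AddChar Γ ℂ) (hχ : χ ≠ 0) (hN : b.N χ 1 = 0) :
    ∃ C, 0 ≤ C ∧ ∀ t, 0 ≤ t → ‖b.E χ t‖ ≤ C * (1 + t) := by
  obtain ⟨C, h0, hC⟩ := b.A_bound
  obtain ⟨C', h0', hC'⟩ := b.S_bdd χ hχ
  have hk := b.κ'_pos
  refine ⟨C * C' + b.κ' * C', by positivity, fun t ht => ?_⟩
  have hc := SS_conv b.nu0 b.fin theta_win theta_win (b.ff 0) (b.ff χ) (b.Ef χ) (fun n => mps_mul (b.ffm 0) (b.ffm χ) n) t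
  have hE : b.E χ t = ∫ y, b.S 0 y * b.S χ (t - y) := hc.symm
  have hz : ∫ y, (b.κ' * Real.exp y : ℝ) * b.S χ (t - y) = 0 := by
    have h1 := integral_sub_left_eq_self (fun u => (b.κ' * Real.exp (t - u) : ℝ) * b.S χ u) volume t
    simp only [sub_sub_cancel] at h1
    rw [h1]
    have h2 : ∀ u, ((b.κ' * Real.exp (t - u) : ℝ) : ℂ) * b.S χ u = (b.κ' * Real.exp t : ℝ) * (b.S χ u * (Real.exp (-1 * u) : ℝ)) := by
      intro u
      rw [show t - u = t + -1 * u by ring, Real.exp_add]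
      push_cast; ring
    simp_rw [h2]
    rw [integral_const_mul]
    rw [N] at hN
    rw [hN, mul_zero]
  have hzi : Integrable fun y => ((b.κ' * Real.exp y : ℝ) : ℂ) * b.S χ (t - y) := by
    have h1 := ((b.S_int χ hχ one_pos).const_mul ((b.κ' * Real.exp t : ℝ) : ℂ)).comp_sub_left t
    refine h1.congr (Filter.Eventually.of_forall fun y => ?_)
    simp only
    rw [show -1 * (t - y) = y - t by ring, Real.exp_sub]
    have := (Real.exp_pos t).ne'
    have h3 : (Real.exp t : ℂ) ≠ 0 := by exact_mod_cast this
    push_cast at h3 ⊢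
    field_simp
  set g : ℝ → ℝ := fun y => (Set.Icc 0 t).indicator (fun _ => C * C') y + (Set.Iic 0).indicator (fun y => (b.κ' * C') * Real.exp y) y with hg
  have ig1 : Integrable fun y => (Set.Icc 0 t).indicator (fun _ => C * C') y := by
    rw [integrable_indicator_iff measurableSet_Icc]
    exact integrableOn_const (by simp)
  have ig2 : Integrable fun y => (Set.Iic 0).indicator (fun y => (b.κ' * C') * Real.exp y) y := by
    rw [integrable_indicator_iff measurableSet_Iic]
    exact (integrableOn_exp_Iic 0).const_mul _
  have hgi : Integrable g := ig1.add ig2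
  have hgv : ∫ y, g y = C * C' * t + b.κ' * C' := by
    rw [hg, integral_add ig1 ig2, integral_indicator measurableSet_Icc, integral_indicator measurableSet_Iic, integral_const_mul (b.κ' * C'), integral_exp_Iic]
    simp [ht]; ring
  have hdiff : ∀ y, ‖b.S 0 y * b.S χ (t - y) - ((b.κ' * Real.exp y : ℝ) : ℂ) * b.S χ (t - y)‖ ≤ g y := by
    intro y
    rw [← sub_mul, norm_mul, S_A, ← Complex.ofReal_sub, Complex.norm_real, Real.norm_eq_abs]
    have hg1 : 0 ≤ (Set.Icc 0 t).indicator (fun _ => C * C') y := Set.indicator_nonneg (fun _ _ => by positivity) _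
    have hg2 : 0 ≤ (Set.Iic 0).indicator (fun y => (b.κ' * C') * Real.exp y) y := Set.indicator_nonneg (fun _ _ => by positivity) _
    by_cases hy0 : y < 0
    · rw [b.A_neg hy0, hg]
      simp only
      rw [Set.indicator_of_mem (show y ∈ Set.Iic 0 from hy0.le)]
      rw [zero_sub, abs_neg, abs_of_pos (by positivity)]
      have := mul_le_mul_of_nonneg_left (hC' (t - y)) (show 0 ≤ b.κ' * Real.exp y by positivity)
      linarith
    · push Not at hy0
      by_cases hyt : y ≤ t
      · rw [hg]
        simp only
        rw [Set.indicator_of_mem (show y ∈ Set.Icc 0 t from ⟨hy0, hyt⟩)]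
        have := mul_le_mul (hC y hy0) (hC' (t - y)) (norm_nonneg _) h0
        linarith
      · rw [b.S_neg χ (by linarith)]
        simp only [norm_zero, mul_zero, hg]
        linarith
  have hdi : Integrable fun y => b.S 0 y * b.S χ (t - y) - ((b.κ' * Real.exp y : ℝ) : ℂ) * b.S χ (t - y) := by
    have c1 := b.S_cont 0
    have c2 := b.S_cont χ
    refine hgi.mono' (Continuous.aestronglyMeasurable ?_) (Filter.Eventually.of_forall hdiff)
    fun_prop
  have hE2 : b.E χ t = ∫ y, (b.S 0 y * b.S χ (t - y) - ((b.κ' * Real.exp y : ℝ) : ℂ) * b.S χ (t - y)) := by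
    have h3 : Integrable fun y => b.S 0 y * b.S χ (t - y) := by
      refine (hdi.add hzi).congr (Filter.Eventually.of_forall fun y => ?_)
      simp only [Pi.add_apply, sub_add_cancel]
    rw [integral_sub h3 hzi, hz, sub_zero, hE]
  rw [hE2]
  refine (norm_integral_le_of_norm_le hgi (Filter.Eventually.of_forall hdiff)).trans ?_
  rw [hgv]
  nlinarith [mul_nonneg h0 h0', mul_nonneg hk.le h0', mul_nonneg (mul_nonneg hk.le h0') ht]

lemma ff_neg (χ : AddChar Γ ℂ) (n : σ →₀ ℕ) : b.ff (-χ) n = conj (b.ff χ n) := by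
  rw [ff, ff, AddChar.neg_apply, AddChar.map_neg_eq_conj]

lemma S_conj (χ : AddChar Γ ℂ) (t : ℝ) : b.S (-χ) t = conj (b.S χ t) := by
  rw [S, S, SS_eq b.fin theta_win _ le_rfl, SS_eq b.fin theta_win _ le_rfl, map_sum]
  refine Finset.sum_congr rfl fun n _ => ?_
  rw [ff_neg, map_mul, Complex.conj_ofReal]

lemma N_conj (χ : AddChar Γ ℂ) (s : ℝ) : b.N (-χ) s = conj (b.N χ s) := by
  rw [N, N, ← integral_conj]
  congr 1; ext t
  rw [S_conj, map_mul, Complex.conj_ofReal]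

lemma E_neg (χ : AddChar Γ ℂ) {t : ℝ} (ht : t < 0) : b.E χ t = 0 :=
  SS_neg b.nu0 (cw_win theta_win theta_win) _ ht

noncomputable def TT : ℝ → ℝ := cw (cw theta theta) (cw theta theta)

lemma TT_win : Win TT := cw_win (cw_win theta_win theta_win) (cw_win theta_win theta_win)

lemma EE_bound (χ : AddChar Γ ℂ) (hχ : χ ≠ 0) (hN : b.N χ 1 = 0) :
    ∃ C, 0 ≤ C ∧ ∀ t, 0 ≤ t → ‖SS b.ν (b.Ef χ * b.Ef (-χ) : MvPowerSeries σ ℂ) TT t‖ ≤ C * (1 + t) ^ 3 := by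
  obtain ⟨C, h0, hC⟩ := b.E_bound χ hχ hN
  obtain ⟨C', h0', hC'⟩ := b.E_bound (-χ) (by simpa using hχ) (by rw [N_conj, hN, map_zero])
  refine ⟨C * C', by positivity, fun t ht => ?_⟩
  have hw := cw_win theta_win theta_win
  have hc := SS_conv b.nu0 b.fin hw hw (b.Ef χ) (b.Ef (-χ)) (b.Ef χ * b.Ef (-χ) : MvPowerSeries σ ℂ) (fun n => mps_mul _ _ n) t
  rw [TT, ← hc]
  have ig1 : Integrable fun y => (Set.Icc 0 t).indicator (fun _ => C * (1 + t) * (C' * (1 + t))) y := by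
    rw [integrable_indicator_iff measurableSet_Icc]
    exact integrableOn_const (by simp)
  refine (norm_integral_le_of_norm_le ig1 (Filter.Eventually.of_forall fun y => ?_)).trans ?_
  · change ‖b.E χ y * b.E (-χ) (t - y)‖ ≤ _
    by_cases hy : y ∈ Set.Icc 0 t
    · rw [Set.indicator_of_mem hy, norm_mul]
      have h1 := hC y hy.1
      have h2 := hC' (t - y) (by linarith [hy.2])
      have h3 : C * (1 + y) ≤ C * (1 + t) := mul_le_mul_of_nonneg_left (by linarith [hy.2]) h0
      have h4 : C' * (1 + (t - y)) ≤ C' * (1 + t) := mul_le_mul_of_nonneg_left (by linarith [hy.1]) h0'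
      exact mul_le_mul (h1.trans h3) (h2.trans h4) (norm_nonneg _) (by positivity)
    · rw [Set.indicator_of_notMem hy]
      rw [Set.mem_Icc, not_and_or, not_le, not_le] at hy
      rcases hy with hy | hy
      · simp [b.E_neg χ hy]
      · simp [b.E_neg (-χ) (show t - y < 0 by linarith)]
  · rw [integral_indicator measurableSet_Icc]
    simp only [integral_const, MeasurableSet.univ, measureReal_restrict_apply, Set.univ_inter, Real.volume_real_Icc, sub_zero, smul_eq_mul]
    rw [max_eq_left ht]
    have : 0 ≤ C * C' * (1 + t) ^ 2 := by positivity
    nlinarith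

end BS
end BeurlingC

section BeurlingD
open MeasureTheory
open scoped Classical ComplexOrder ComplexConjugate
variable {σ Γ : Type*} [AddCommGroup Γ] [Fintype Γ] (b : BS σ Γ)

namespace BS

noncomputable def rho (χ : AddChar Γ ℂ) (n : σ →₀ ℕ) : ℂ := (b.Ef χ * b.Ef (-χ) : MvPowerSeries σ ℂ) n

lemma rho_pos (χ : AddChar Γ ℂ) : (∀ n, 0 ≤ b.rho χ n) ∧
    ∀ n, (b.ff 0 n + b.ff χ n + b.ff 0 n + b.ff (-χ) n) * vM b.ν n ≤ b.ν n * b.rho χ n := by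
  refine rho_nonneg b.nu_pos (b.ffm 0) (b.ffm χ) (b.ffm 0) (b.ffm (-χ)) (b.ff_add _) (b.ff_add _) (b.ff_add _) (b.ff_add _)
    (b.ff_zero _) (b.ff_zero _) (b.ff_zero _) (b.ff_zero _) ?_
  intro n
  have h1 : b.ff 0 n = 1 := by simp [ff]
  change 0 ≤ b.ff 0 n + b.ff χ n + b.ff 0 n + b.ff (-χ) n
  rw [h1, ff_neg]
  have h2 := Complex.abs_re_le_norm (b.ff χ n)
  rw [ff_norm] at h2
  have h3 := (abs_le.1 h2).1
  rw [Complex.le_def]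
  constructor
  · simp; linarith
  · simp

lemma rho_four (χ : AddChar Γ ℂ) (q : σ →₀ ℕ) :
    4 * vM b.ν q ≤ b.ν (Fintype.card Γ • q) * (b.rho χ (Fintype.card Γ • q)).re := by
  obtain ⟨h1, h2⟩ := b.rho_pos χ
  have hk : Fintype.card Γ ≠ 0 := Fintype.card_ne_zero
  have h3 := h2 (Fintype.card Γ • q)
  have h4 : ∀ ψ : AddChar Γ ℂ, b.ff ψ (Fintype.card Γ • q) = 1 := by
    intro ψ
    rw [ff, map_nsmul, card_nsmul_eq_zero, AddChar.map_zero_eq_one]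
  rw [h4, h4, h4] at h3
  have h5 := (Complex.le_def.1 h3).1
  have h6 : vM b.ν q ≤ vM b.ν (Fintype.card Γ • q) := by
    by_cases h : vM b.ν q = 0
    · rw [h]; exact b.vM0 _
    · obtain ⟨p, j, hj, rfl⟩ := vM_ne h
      rw [vM_single p hj, Finsupp.smul_single, vM_single p (by simp [hk, hj])]
  have h7 : ((1 + 1 + 1 + 1 : ℂ) * vM b.ν (Fintype.card Γ • q)).re = 4 * vM b.ν (Fintype.card Γ • q) := by
    rw [show (1 + 1 + 1 + 1 : ℂ) = ((4 : ℝ) : ℂ) by norm_num, ← Complex.ofReal_mul, Complex.ofReal_re]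
  rw [h7, Complex.re_ofReal_mul] at h5
  linarith

lemma N_ne (χ : AddChar Γ ℂ) (hχ : χ ≠ 0) : b.N χ 1 ≠ 0 := by
  intro hN
  obtain ⟨C, h0, hC⟩ := b.EE_bound χ hχ hN
  obtain ⟨k, hk⟩ : ∃ k, k = Fintype.card Γ := ⟨_, rfl⟩
  have hk1 : (1:ℝ) ≤ k := by
    rw [hk]; exact_mod_cast Fintype.card_pos
  have hk0 : (k:ℝ) ≠ 0 := by positivity
  set a : ℝ := 1 / (8 * k) with ha
  have ha0 : 0 < a := by positivity
  have ha1 : a ≤ 1 := by rw [ha, div_le_one (by positivity)]; linarith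
  have hkinj : Function.Injective fun q : σ →₀ ℕ => k • q := by
    intro q r h
    ext p
    have := DFunLike.congr_fun h p
    simp only [Finsupp.smul_apply, smul_eq_mul] at this
    exact Nat.eq_of_mul_eq_mul_left (by rw [hk]; exact Fintype.card_pos) this
  have hρ0 := (b.rho_pos χ).1
  have hsum : ∀ t : ℝ, 0 ≤ t → ∀ F : Finset (σ →₀ ℕ), ∑ q ∈ F, vM b.ν q * TT (k * b.ν q - t) ≤ C * (1 + t) ^ 4 := by
    intro t ht F
    have hsm : Summable fun m => (b.rho χ m).re * TT (b.ν m - t) := by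
      refine summable_of_hasFiniteSupport ((b.fin t).subset ?_)
      intro n hn
      by_contra h
      simp only [Set.mem_ofPred_eq, not_le] at h
      exact hn (by simp [TT_win.supp _ (show 0 < b.ν n - t by linarith)])
    have hre : ∑' m, (b.rho χ m).re * TT (b.ν m - t) ≤ C * (1 + t) ^ 3 := by
      refine le_trans ?_ (hC t ht)
      refine le_trans (le_of_eq ?_) ((le_abs_self _).trans (Complex.abs_re_le_norm _))
      change _ = (SS b.ν (b.rho χ) TT t).re
      rw [SS_eq b.fin TT_win _ le_rfl, Complex.re_sum]
      rw [tsum_eq_sum (s := (b.fin t).toFinset)]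
      · refine Finset.sum_congr rfl fun n _ => ?_
        rw [Complex.re_mul_ofReal]
      · intro n hn
        simp only [Set.Finite.mem_toFinset, Set.mem_ofPred_eq, not_le] at hn
        rw [TT_win.supp _ (by linarith), mul_zero]
    calc ∑ q ∈ F, vM b.ν q * TT (k * b.ν q - t) ≤ ∑ q ∈ F, t * ((b.rho χ (k • q)).re * TT (b.ν (k • q) - t)) := by
          refine Finset.sum_le_sum fun q _ => ?_
          have hq : b.ν (k • q) = k * b.ν q := by rw [map_nsmul, nsmul_eq_mul]
          rw [hq]
          by_cases hle : k * b.ν q ≤ t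
          · have h4 := b.rho_four χ q
            rw [← hk, hq] at h4
            have h5 := (Complex.le_def.1 (hρ0 (k • q))).1
            rw [Complex.zero_re] at h5
            rw [← mul_assoc]
            refine mul_le_mul_of_nonneg_right ?_ (TT_win.nonneg _)
            have := b.vM0 q
            nlinarith
          · rw [TT_win.supp _ (by linarith)]; simp
      _ = t * ∑ m ∈ F.image (fun q => k • q), ((b.rho χ m).re * TT (b.ν m - t)) := by
          rw [Finset.sum_image (fun x _ y _ h => hkinj h), Finset.mul_sum]
      _ ≤ t * (C * (1 + t) ^ 3) := by
          refine mul_le_mul_of_nonneg_left (le_trans ?_ hre) ht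
          refine Summable.sum_le_tsum _ (fun m _ => mul_nonneg ?_ (TT_win.nonneg _)) hsm
          simpa using (Complex.le_def.1 (hρ0 m)).1
      _ ≤ C * (1 + t) ^ 4 := by
          have : 0 ≤ C * (1 + t) ^ 3 := by positivity
          nlinarith
  have hlap := (lap_bound (fun q : σ →₀ ℕ => vM b.ν q) (fun q => k * b.ν q) (fun q => b.vM0 q) TT_win
    ((Set.Ici (0:ℝ)).indicator fun t => (C / a ^ 4) * Real.exp (4 * a * t)) ?_ (1 / k) ?_).1
  · have hl2 : Summable fun q => vM b.ν q * Real.exp (-1 * b.ν q) := by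
      refine hlap.congr fun q => ?_
      congr 2; field_simp
    obtain ⟨δ, hδ, hV⟩ := b.V_unb ((∑' q, vM b.ν q * Real.exp (-1 * b.ν q)) + 1)
    have h1 := hV (1 + δ / 2) (by linarith) (by linarith)
    have h2 : b.V (1 + δ / 2) ≤ ∑' q, vM b.ν q * Real.exp (-1 * b.ν q) := by
      refine Summable.tsum_le_tsum (fun q => ?_) (b.sum_vM_exp (by linarith)) hl2
      refine mul_le_mul_of_nonneg_left (Real.exp_le_exp.2 ?_) (b.vM0 q)
      nlinarith [b.nu0 q]
    linarith
  · intro t F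
    by_cases ht : 0 ≤ t
    · rw [Set.indicator_of_mem (Set.mem_Ici.2 ht)]
      refine (hsum t ht F).trans ?_
      have h1 : a * (1 + t) ≤ Real.exp (a * t) := by
        nlinarith [Real.add_one_le_exp (a * t)]
      have h2 : (a * (1 + t)) ^ 4 ≤ Real.exp (4 * a * t) := by
        have : Real.exp (4 * a * t) = Real.exp (a * t) ^ 4 := by
          rw [← Real.exp_nat_mul]; congr 1; push_cast; ring
        rw [this]
        exact pow_le_pow_left₀ (by positivity) h1 4
      rw [div_mul_eq_mul_div, le_div_iff₀ (by positivity), mul_assoc]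
      refine mul_le_mul_of_nonneg_left ?_ h0
      rw [mul_comm, ← mul_pow]; exact h2
    · rw [Set.indicator_of_notMem (by simpa using ht)]
      refine le_of_eq (Finset.sum_eq_zero fun q _ => ?_)
      have : 0 ≤ k * b.ν q := mul_nonneg (by positivity) (b.nu0 q)
      rw [TT_win.supp _ (by linarith), mul_zero]
  · have := (int_exp (a := 4 * a) (by linarith)).1.const_mul (C / a ^ 4)
    refine this.congr (Filter.Eventually.of_forall fun t => ?_)
    simp only [Set.indicator_apply]
    split_ifs
    · rw [mul_assoc, ← Real.exp_add]
      congr 2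
      rw [ha]; field_simp; ring
    · simp

end BS
end BeurlingD

section BeurlingE
open MeasureTheory
open scoped Classical ComplexOrder ComplexConjugate
variable {σ Γ : Type*} [AddCommGroup Γ] [Fintype Γ] (b : BS σ Γ)

namespace BS

lemma MM1_le (s : ℝ) : |MM1 theta s| ≤ 2 * MM theta s := by
  rw [MM1, MM, ← integral_const_mul, ← Real.norm_eq_abs]
  refine norm_integral_le_of_norm_le ((theta_win.int (by fun_prop)).const_mul 2) (Filter.Eventually.of_forall fun u => ?_)
  by_cases hu : u ∈ Set.Icc (-2:ℝ) (-1)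
  · rw [norm_mul, Real.norm_eq_abs, Real.norm_eq_abs, abs_of_nonneg (mul_nonneg (theta_nonneg u) (Real.exp_pos _).le), mul_comm]
    refine mul_le_mul_of_nonneg_right ?_ (mul_nonneg (theta_nonneg u) (Real.exp_pos _).le)
    rw [abs_le]; constructor <;> linarith [hu.1, hu.2]
  · simp [theta_zero hu]

lemma N_near (χ : AddChar Γ ℂ) (hχ : χ ≠ 0) : ∃ δ > 0, ∀ s, 1 < s → s < 1 + δ → ‖b.N χ 1‖ / 2 ≤ ‖b.N χ s‖ := by
  obtain ⟨C, h0, hC⟩ := b.S_bdd χ hχ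
  have hN : 0 < ‖b.N χ 1‖ := norm_pos_iff.2 (b.N_ne χ hχ)
  refine ⟨‖b.N χ 1‖ / 2 / (C + 1), by positivity, fun s h1 h2 => ?_⟩
  have i1 := int_exp (a := 1) one_pos
  have i2 := int_exp (a := s) (by linarith)
  have h3 : ‖b.N χ 1 - b.N χ s‖ ≤ C * (1 - 1 / s) := by
    rw [N, N, ← integral_sub (b.S_int χ hχ one_pos) (b.S_int χ hχ (by linarith))]
    have e : C * (1 - 1 / s) = ∫ t, C * ((Set.Ici (0:ℝ)).indicator (fun t => Real.exp (-1 * t)) t - (Set.Ici (0:ℝ)).indicator (fun t => Real.exp (-s * t)) t) := by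
      rw [integral_const_mul, integral_sub i1.1 i2.1, i1.2, i2.2]; norm_num
    rw [e]
    refine norm_integral_le_of_norm_le ((i1.1.sub i2.1).const_mul C) (Filter.Eventually.of_forall fun t => ?_)
    by_cases ht : 0 ≤ t
    · simp only [Set.indicator_of_mem (Set.mem_Ici.2 ht)]
      rw [← mul_sub, norm_mul, ← Complex.ofReal_sub, Complex.norm_real, Real.norm_eq_abs]
      have : Real.exp (-s * t) ≤ Real.exp (-1 * t) := Real.exp_le_exp.2 (by nlinarith)
      rw [abs_of_nonneg (by linarith)]
      exact mul_le_mul_of_nonneg_right (hC t) (by linarith)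
    · simp only [Set.indicator_of_notMem (show t ∉ Set.Ici (0:ℝ) by simpa using ht), b.S_neg χ (not_le.1 ht)]; simp
  have h4 : 1 - 1 / s ≤ s - 1 := by
    have : 0 < s := by linarith
    rw [show 1 - 1 / s = (s - 1) / s by field_simp, div_le_iff₀ this]
    nlinarith
  have h5 : (C + 1) * (s - 1) ≤ ‖b.N χ 1‖ / 2 := by
    have : s - 1 < ‖b.N χ 1‖ / 2 / (C + 1) := by linarith
    rw [lt_div_iff₀ (by linarith)] at this
    linarith
  have h6 := norm_sub_norm_le (b.N χ 1) (b.N χ s)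
  nlinarith

lemma Lam_bdd (χ : AddChar Γ ℂ) (hχ : χ ≠ 0) : ∃ C, ∃ δ > 0, ∀ s, 1 < s → s < 1 + δ → ‖b.Lam χ s‖ ≤ C := by
  obtain ⟨C, h0, hC⟩ := b.S_bdd χ hχ
  have hN : 0 < ‖b.N χ 1‖ := norm_pos_iff.2 (b.N_ne χ hχ)
  obtain ⟨δ, hδ, h⟩ := b.N_near χ hχ
  refine ⟨C * 4 / (‖b.N χ 1‖ / 2) + 2, δ, hδ, fun s h1 h2 => ?_⟩
  have h3 := h s h1 h2
  have hM := MM_pos theta_win s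
  have hM' : (MM theta s : ℂ) ≠ 0 := by exact_mod_cast hM.ne'
  have hNs : 0 < ‖b.N χ s‖ := by linarith
  have hNs' : b.N χ s ≠ 0 := norm_pos_iff.1 hNs
  have hL : b.N χ s = MM theta s * b.L χ s := b.lap_S χ h1
  have h4 := b.lap_S1 χ h1
  rw [b.D_eq χ h1] at h4
  set J := ∫ t, b.S χ t * (t * Real.exp (-s * t) : ℝ) with hJ
  have h5 : b.Lam χ s = J / b.N χ s + MM1 theta s / MM theta s := by
    rw [h4, hL]
    have hL0 : b.L χ s ≠ 0 := by
      intro h0; rw [hL, h0, mul_zero] at hNs'; exact hNs' rfl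
    field_simp
    ring
  have hJb : ‖J‖ ≤ C * 4 := by
    have i1 := int_exp (a := 1 / 2) (by norm_num)
    have e : C * 4 = ∫ t, C * 2 * (Set.Ici (0:ℝ)).indicator (fun t => Real.exp (-(1/2) * t)) t := by
      rw [integral_const_mul, i1.2]; ring
    rw [hJ, e]
    refine norm_integral_le_of_norm_le (i1.1.const_mul (C * 2)) (Filter.Eventually.of_forall fun t => ?_)
    by_cases ht : 0 ≤ t
    · simp only [Set.indicator_of_mem (Set.mem_Ici.2 ht)]
      rw [norm_mul, Complex.norm_real, Real.norm_eq_abs, abs_of_nonneg (mul_nonneg ht (Real.exp_pos _).le), mul_assoc]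
      refine mul_le_mul (hC t) ?_ (mul_nonneg ht (Real.exp_pos _).le) h0
      have e1 : Real.exp (-s * t) ≤ Real.exp (-1 * t) := Real.exp_le_exp.2 (by nlinarith)
      have e2 : t / 2 + 1 ≤ Real.exp (t / 2) := Real.add_one_le_exp _
      have e3 : Real.exp (-(1/2) * t) = Real.exp (t / 2) * Real.exp (-1 * t) := by
        rw [← Real.exp_add]; congr 1; ring
      rw [e3]
      have e4 := Real.exp_pos (-1 * t)
      nlinarith
    · simp only [Set.indicator_of_notMem (show t ∉ Set.Ici (0:ℝ) by simpa using ht), b.S_neg χ (not_le.1 ht)]; simp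
  rw [h5]
  refine (norm_add_le _ _).trans (add_le_add ?_ ?_)
  · rw [norm_div]
    exact div_le_div₀ (by positivity) hJb (by positivity) h3
  · rw [← Complex.ofReal_div, Complex.norm_real, Real.norm_eq_abs, abs_div, abs_of_pos hM, div_le_iff₀ hM]
    exact MM1_le s

noncomputable def W (g : Γ) (s : ℝ) : ℝ := ∑' q, if b.cl q = g then vM b.ν q * Real.exp (-s * b.ν q) else 0

lemma W_eq (g : Γ) {s : ℝ} (hs : 1 < s) : ∑ χ : AddChar Γ ℂ, χ (-g) * b.Lam χ s = Fintype.card Γ * b.W g s := by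
  have hsm : ∀ χ : AddChar Γ ℂ, Summable fun n => χ (-g) * (b.ff χ n * (vM b.ν n * Real.exp (-s * b.ν n) : ℝ)) := by
    intro χ
    refine Summable.mul_left _ (Summable.of_norm ?_)
    refine (b.sum_vM_exp hs).congr fun n => ?_
    rw [norm_mul, ff_norm, one_mul, Complex.norm_real, Real.norm_eq_abs, abs_of_nonneg (mul_nonneg (b.vM0 n) (Real.exp_pos _).le)]
  simp_rw [Lam, ← tsum_mul_left]
  rw [← Summable.tsum_finsetSum (fun χ _ => hsm χ), W, Complex.ofReal_tsum, ← tsum_mul_left]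
  refine tsum_congr fun q => ?_
  have h1 : ∀ χ : AddChar Γ ℂ, χ (-g) * (b.ff χ q * (vM b.ν q * Real.exp (-s * b.ν q) : ℝ)) = χ (b.cl q - g) * (vM b.ν q * Real.exp (-s * b.ν q) : ℝ) := by
    intro χ
    rw [ff, ← mul_assoc, ← AddChar.map_add_eq_mul, neg_add_eq_sub]
  simp_rw [h1]
  rw [← Finset.sum_mul, AddChar.sum_apply_eq_ite, sub_eq_zero]
  split_ifs <;> simp

lemma W_unb (g : Γ) (B : ℝ) : ∃ s, 1 < s ∧ B ≤ b.W g s := by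
  have hb : ∀ χ : AddChar Γ ℂ, ∃ C, ∃ δ > 0, χ ≠ 0 → ∀ s, 1 < s → s < 1 + δ → ‖b.Lam χ s‖ ≤ C := by
    intro χ
    by_cases h : χ = 0
    · exact ⟨0, 1, one_pos, fun h' => (h' h).elim⟩
    · obtain ⟨C, δ, hδ, hh⟩ := b.Lam_bdd χ h
      exact ⟨C, δ, hδ, fun _ => hh⟩
  choose C δ hδ hb using hb
  have hk : (0:ℝ) < Fintype.card Γ := by exact_mod_cast Fintype.card_pos
  obtain ⟨δ', hδ', hV⟩ := b.V_unb (Fintype.card Γ * B + ∑ χ ∈ Finset.univ.erase (0 : AddChar Γ ℂ), C χ)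
  obtain ⟨ε, hε, hε1, hε2⟩ : ∃ ε > 0, ε < δ' ∧ ∀ χ, ε < δ χ := by
    obtain ⟨χ₀, h₀⟩ := Finite.exists_min δ
    have : 0 < min δ' (δ χ₀) := lt_min hδ' (hδ χ₀)
    refine ⟨min δ' (δ χ₀) / 2, by linarith, ?_, fun χ => ?_⟩
    · linarith [min_le_left δ' (δ χ₀)]
    · linarith [min_le_right δ' (δ χ₀), h₀ χ]
  have hs : 1 < 1 + ε := by linarith
  refine ⟨1 + ε, hs, ?_⟩
  have h1 := b.W_eq g hs
  have h2 := hV (1 + ε) hs (by linarith)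
  rw [← Finset.add_sum_erase _ _ (Finset.mem_univ (0 : AddChar Γ ℂ))] at h1
  have h3 : b.Lam 0 (1 + ε) = b.V (1 + ε) := by
    rw [Lam, V, Complex.ofReal_tsum]
    exact tsum_congr fun n => by simp [ff]
  rw [h3, AddChar.zero_apply, one_mul] at h1
  have h4 : ‖∑ χ ∈ Finset.univ.erase (0 : AddChar Γ ℂ), χ (-g) * b.Lam χ (1 + ε)‖ ≤ ∑ χ ∈ Finset.univ.erase (0 : AddChar Γ ℂ), C χ := by
    refine (norm_sum_le _ _).trans (Finset.sum_le_sum fun χ hχ => ?_)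
    rw [norm_mul, AddChar.norm_apply, one_mul]
    exact hb χ (Finset.ne_of_mem_erase hχ) _ hs (by linarith [hε2 χ])
  have h5 := congrArg Complex.re h1
  rw [Complex.add_re, Complex.ofReal_re, ← Complex.ofReal_natCast, ← Complex.ofReal_mul, Complex.ofReal_re] at h5
  have h6 := (abs_le.1 ((Complex.abs_re_le_norm _).trans h4)).1
  have h7 : Fintype.card Γ * B ≤ Fintype.card Γ * b.W g (1 + ε) := by linarith
  exact le_of_mul_le_mul_left h7 hk

lemma single_inj : Function.Injective fun p : σ => Finsupp.single p (1 : ℕ) :=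
  Finsupp.single_left_injective one_ne_zero

lemma Q_sum : Summable fun x : σ × ℕ => vM b.ν (Finsupp.single x.1 (x.2 + 2)) * Real.exp (-1 * b.ν (Finsupp.single x.1 (x.2 + 2))) := by
  have h1 : Summable fun p : σ => b.ν (Finsupp.single p 1) * Real.exp (-2 * b.ν (Finsupp.single p 1)) :=
    (b.sum_nu_exp (s := 2) (by norm_num)).comp_injective single_inj
  have h2 : Summable fun m : ℕ => Real.exp (-b.c) ^ m :=
    summable_geometric_of_lt_one (Real.exp_pos _).le (by rw [Real.exp_lt_one_iff]; linarith [b.cpos])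
  have h3 := h1.mul_of_nonneg h2 (fun p => mul_nonneg (b.nu0 _) (Real.exp_pos _).le) (fun m => by positivity)
  refine Summable.of_nonneg_of_le (fun x => mul_nonneg (b.vM0 _) (Real.exp_pos _).le) (fun x => ?_) h3
  rw [vM_single _ (by omega), mul_assoc]
  refine mul_le_mul_of_nonneg_left ?_ (b.nu0 _)
  have h4 : b.ν (Finsupp.single x.1 (x.2 + 2)) = (x.2 + 2) * b.ν (Finsupp.single x.1 1) := by
    have : Finsupp.single x.1 (x.2 + 2) = (x.2 + 2) • Finsupp.single x.1 1 := by simp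
    rw [this, map_nsmul, nsmul_eq_mul]; push_cast; ring
  rw [h4, ← Real.exp_nat_mul, ← Real.exp_add]
  refine Real.exp_le_exp.2 ?_
  have := mul_le_mul_of_nonneg_left (b.hc x.1) (Nat.cast_nonneg (α := ℝ) x.2)
  linarith

/-- Dirichlet-type theorem for the system: every class contains infinitely many primes. -/
theorem infinite_primes (g : Γ) : {p : σ | b.cl (Finsupp.single p 1) = g}.Infinite := by
  intro hfin
  set F : Finset (σ →₀ ℕ) := hfin.toFinset.image (fun p => Finsupp.single p 1) with hF
  set ι : σ × ℕ → (σ →₀ ℕ) := fun x => Finsupp.single x.1 (x.2 + 2) with hι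
  have hinj : Function.Injective ι := by
    intro x y h
    simp only [hι] at h
    rw [Finsupp.single_eq_single_iff] at h
    rcases h with h | h
    · exact Prod.ext h.1 (by omega)
    · omega
  set Q : (σ →₀ ℕ) → ℝ := fun q => if q ∈ Set.range ι then vM b.ν q * Real.exp (-1 * b.ν q) else 0 with hQ
  have hQs : Summable Q := by
    rw [← hinj.summable_iff]
    · refine b.Q_sum.congr fun x => ?_
      simp only [hQ, Function.comp]
      rw [if_pos (Set.mem_range_self x)]
    · intro q hq
      simp only [hQ]
      rw [if_neg hq]
  have hFs : Summable fun q => if q ∈ F then b.ν q else 0 :=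
    summable_of_ne_finset_zero (s := F) (fun n hn => by simp [hn])
  obtain ⟨s, hs, h⟩ := b.W_unb g ((∑' q, ((if q ∈ F then b.ν q else 0) + Q q)) + 1)
  have h2 : b.W g s ≤ ∑' q, ((if q ∈ F then b.ν q else 0) + Q q) := by
    have hle : ∀ q, (if b.cl q = g then vM b.ν q * Real.exp (-s * b.ν q) else 0) ≤ (if q ∈ F then b.ν q else 0) + Q q := by
      intro q
      have hFn : 0 ≤ if q ∈ F then b.ν q else 0 := by split_ifs; exacts [b.nu0 q, le_rfl]
      have hQn : 0 ≤ Q q := by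
        simp only [hQ]; split_ifs; exacts [mul_nonneg (b.vM0 q) (Real.exp_pos _).le, le_rfl]
      split_ifs with hg hg'
      · have : Real.exp (-s * b.ν q) ≤ 1 := by
          rw [Real.exp_le_one_iff]; nlinarith [b.nu0 q]
        have h1 := b.vM_le q
        have h2 := b.vM0 q
        nlinarith
      · rw [zero_add]
        by_cases hv : vM b.ν q = 0
        · rw [hv, zero_mul]; exact hQn
        · obtain ⟨p, j, hj, rfl⟩ := vM_ne hv
          by_cases hj1 : j = 1
          · subst hj1
            exact (hg' (by rw [hF, Finset.mem_image]; exact ⟨p, by simpa using hg, rfl⟩)).elim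
          · have : Finsupp.single p j ∈ Set.range ι := ⟨(p, j - 2), by simp only [hι]; congr 1; omega⟩
            simp only [hQ]
            rw [if_pos this]
            refine mul_le_mul_of_nonneg_left (Real.exp_le_exp.2 ?_) (b.vM0 _)
            nlinarith [b.nu0 (Finsupp.single p j)]
      · linarith [b.nu0 q]
      · linarith
    refine Summable.tsum_le_tsum hle (Summable.of_nonneg_of_le (fun q => ?_) hle (hFs.add hQs)) (hFs.add hQs)
    split_ifs
    · exact mul_nonneg (b.vM0 q) (Real.exp_pos _).le
    · exact le_rfl
  linarith

end BS
end BeurlingE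

section Transfer
open scoped Classical
set_option linter.unusedSectionVars false
variable {K : Type*} [Field K] [NumberField K] (I : Ideal (𝓞 K))

abbrev Pr (I : Ideal (𝓞 K)) : Type _ := {P : Ideal (𝓞 K) // P.IsPrime ∧ Cop I P}

noncomputable def pr (n : Pr I →₀ ℕ) : Ideal (𝓞 K) := n.prod fun P k => (P : Ideal (𝓞 K)) ^ k

lemma pr_zero : pr I 0 = 1 := by simp [pr]

lemma pr_add (m n : Pr I →₀ ℕ) : pr I (m + n) = pr I m * pr I n :=
  Finsupp.prod_add_index' (fun _ => pow_zero _) (fun _ _ _ => pow_add _ _ _)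

lemma pr_single (P : Pr I) : pr I (Finsupp.single P 1) = P := by
  rw [pr, Finsupp.prod_single_index (h := fun (P : Pr I) k => (P : Ideal (𝓞 K)) ^ k) (pow_zero _), pow_one]

lemma pr_cop (n : Pr I →₀ ℕ) : Cop I (pr I n) := by
  induction n using Finsupp.induction_linear with
  | zero => rw [pr_zero]; exact Cop.one I
  | add f g hf hg => rw [pr_add]; exact Cop.mul_iff.2 ⟨hf, hg⟩
  | single P k =>
    rw [pr, Finsupp.prod_single_index (h := fun (P : Pr I) k => (P : Ideal (𝓞 K)) ^ k) (pow_zero _)]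
    exact (copM I).pow_mem (show (P : Ideal (𝓞 K)) ∈ copM I from P.2.2) k

lemma pr_prime (P : Pr I) : Prime (P : Ideal (𝓞 K)) := Ideal.prime_of_isPrime P.2.2.1 P.2.1

lemma pr_inj : Function.Injective (pr I) := by
  have h : ∀ n : Pr I →₀ ℕ, UniqueFactorizationMonoid.normalizedFactors (pr I n) = (Finsupp.toMultiset n).map Subtype.val := by
    intro n
    have : pr I n = ((Finsupp.toMultiset n).map Subtype.val).prod := by
      rw [Finsupp.toMultiset_map, Finsupp.prod_toMultiset, pr, Finsupp.prod_mapDomain_index (fun _ => pow_zero _) (fun _ _ _ => pow_add _ _ _)]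
    rw [this]
    refine UniqueFactorizationMonoid.normalizedFactors_prod_of_prime fun P hP => ?_
    obtain ⟨Q, _, rfl⟩ := Multiset.mem_map.1 hP
    exact pr_prime I Q
  intro m n hmn
  have h1 := h m
  rw [hmn, h n] at h1
  exact (Multiset.toFinsupp.symm.injective (Multiset.map_injective Subtype.val_injective h1)).symm

lemma pr_surj (𝔞 : Ideal (𝓞 K)) (h : Cop I 𝔞) : ∃ n, pr I n = 𝔞 := by
  induction 𝔞 using UniqueFactorizationMonoid.induction_on_prime with
  | h₁ => exact (h.1 rfl).elim
  | h₂ x hx => exact ⟨0, by rw [pr_zero]; exact (isUnit_iff_eq_one.1 hx).symm⟩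
  | h₃ a p ha hp ih =>
    obtain ⟨h1, h2⟩ := Cop.mul_iff.1 h
    obtain ⟨n, rfl⟩ := ih h2
    refine ⟨Finsupp.single ⟨p, Ideal.isPrime_of_prime hp, h1⟩ 1 + n, ?_⟩
    rw [pr_add, pr_single]

lemma norm_pos' {𝔞 : Ideal (𝓞 K)} (h : 𝔞 ≠ ⊥) : 0 < Ideal.absNorm 𝔞 :=
  Nat.pos_of_ne_zero (by rwa [Ne, Ideal.absNorm_eq_zero_iff])

noncomputable def rayBS [NeZero I] : BS (Pr I) (Additive (RayG I)) where
  ν :=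
    { toFun := fun n => Real.log (Ideal.absNorm (pr I n))
      map_zero' := by simp [pr_zero]
      map_add' := fun m n => by
        rw [pr_add, map_mul, Nat.cast_mul, Real.log_mul]
        · exact_mod_cast (norm_pos' (pr_cop I m).1).ne'
        · exact_mod_cast (norm_pos' (pr_cop I n).1).ne' }
  cl :=
    { toFun := fun n => Additive.ofMul (rcl I (pr I n))
      map_zero' := by rw [pr_zero, rcl_one]; rfl
      map_add' := fun m n => by rw [pr_add, rcl_mul (pr_cop I m) (pr_cop I n)]; rfl }
  c := Real.log 2
  cpos := Real.log_pos (by norm_num)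
  hc P := by
    change Real.log 2 ≤ Real.log (Ideal.absNorm (pr I _))
    rw [pr_single]
    refine Real.log_le_log (by norm_num) ?_
    have h0 := norm_pos' P.2.2.1
    have h1 : Ideal.absNorm (P : Ideal (𝓞 K)) ≠ 1 := by
      rw [Ne, Ideal.absNorm_eq_one_iff]; exact P.2.1.ne_top
    exact_mod_cast (show 2 ≤ Ideal.absNorm (P : Ideal (𝓞 K)) by omega)
  fin X := by
    refine Set.Finite.of_injOn (f := pr I) (t := {𝔞 : Ideal (𝓞 K) | Ideal.absNorm 𝔞 ≤ ⌊Real.exp X⌋₊}) ?_ (pr_inj I).injOn ?_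
    · intro n hn
      have hn' : Real.log (Ideal.absNorm (pr I n)) ≤ X := hn
      have h0 := norm_pos' (pr_cop I n).1
      rw [Real.log_le_iff_le_exp (by exact_mod_cast h0)] at hn'
      exact Nat.le_floor hn'
    · exact Ideal.finite_setOfPred_absNorm_le _
  κ := (ray_count I).choose
  κpos := (ray_count I).choose_spec.1
  count g := by
    obtain ⟨C, hC⟩ := (ray_count I).choose_spec.2 g.toMul
    refine ⟨C, fun t ht => ?_⟩
    refine le_trans (le_of_eq ?_) (hC t ht)
    congr 2
    rw [← (pr_inj I).tsum_eq (f := fun 𝔞 : Ideal (𝓞 K) => if Cop I 𝔞 ∧ rcl I 𝔞 = g.toMul then theta (Real.log (Ideal.absNorm 𝔞) - t) else 0)]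
    · refine tsum_congr fun n => ?_
      have e : (Additive.ofMul (rcl I (pr I n)) = g) ↔ (Cop I (pr I n) ∧ rcl I (pr I n) = g.toMul) := by
        constructor
        · rintro rfl
          exact ⟨pr_cop I n, rfl⟩
        · rintro ⟨_, h⟩
          rw [h]; rfl
      by_cases hh : Additive.ofMul (rcl I (pr I n)) = g
      · exact (if_pos hh).trans (if_pos (e.1 hh)).symm
      · exact (if_neg hh).trans (if_neg (fun h => hh (e.2 h))).symm
    · intro 𝔞 h𝔞
      rw [Function.mem_support] at h𝔞
      have : Cop I 𝔞 := by
        by_contra h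
        exact h𝔞 (if_neg fun h' => h h'.1)
      exact pr_surj I 𝔞 this

lemma main_aux [NeZero I] (x : 𝓞 K) (hx : Cop I (Ideal.span {x})) :
    {P : Ideal (𝓞 K) | P.IsPrime ∧ ∃ y : 𝓞 K, P = Ideal.span {y} ∧ y - x ∈ I}.Infinite := by
  have : Fintype (Additive (RayG I)) := Fintype.ofFinite _
  have h := (rayBS I).infinite_primes (Additive.ofMul (rcl I (Ideal.span {x})))
  have h2 := h.image (f := Subtype.val) Subtype.val_injective.injOn
  refine h2.mono ?_
  rintro _ ⟨P, hP, rfl⟩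
  have hP' : Additive.ofMul (rcl I (pr I (Finsupp.single P 1))) = Additive.ofMul (rcl I (Ideal.span {x})) := hP
  rw [pr_single] at hP'
  exact ⟨P.2.1, rcl_span P.2.2 hx (Additive.ofMul.injective hP')⟩

end Transfer

/-- Lemma 15: given a nonzero ideal `I ⊆ 𝓞_K` and `x ∈ 𝓞_K` coprime to `I`, there are
infinitely many principal prime ideals of `𝓞_K` admitting a generator `y` with
`y ≡ x (mod I)`. -/
theorem infinitely_many_principal_primes_in_residue_class
    (K : Type*) [Field K] [NumberField K] (I : Ideal (𝓞 K)) (hI : I ≠ ⊥)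
    (x : 𝓞 K) (hx : Ideal.span {x} ⊔ I = ⊤) :
    {P : Ideal (𝓞 K) | P.IsPrime ∧ ∃ y : 𝓞 K, P = Ideal.span {y} ∧ y - x ∈ I}.Infinite := by
  have : NeZero I := ⟨hI⟩
  by_cases h0 : x = 0
  · have hT : I = ⊤ := by simpa [h0] using hx
    subst hT
    have := main_aux (⊤ : Ideal (𝓞 K)) 1 ⟨by simp, by simp [Ideal.isCoprime_iff_sup_eq]⟩
    simpa using this
  · exact main_aux I x ⟨by simpa using h0, Ideal.isCoprime_iff_sup_eq.2 hx⟩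
end

section
/- Let F be a finite field of characteristic ≠ 2 with more than 25 elements. Then there exist elements a00, a01, a10, a11 ∈ F, each different from 0, −1 and −2 and each satisfying a² + a + 1 ≠ 0, such that: (i) a00, a00+1 and a00+2 are squares in F; (ii) a01 and a01+1 are squares in F but a01+2 is not a square in F; (iii) a10 and a10+2 are squares in F but a10+1 is not a square in F; (iv) a11 is a square in F but neither a11+1 nor a11+2 is a square in F. -/
open Finset in
lemma sqp_pair {F : Type*} [Field F] [Fintype F] [DecidableEq F] (hF : ringChar F ≠ 2) (d : F)
    (hd : d ≠ 0) : ∑ x : F, quadraticChar F x * quadraticChar F (x + d) = -1 := by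
  have h1 : ∀ x : F, quadraticChar F x * quadraticChar F (x + d)
      = quadraticChar F (1 + d * x⁻¹) - if x = 0 then 1 else 0 := by
    intro x
    by_cases hx : x = 0
    · simp [hx]
    · have : x + d = x * (1 + d * x⁻¹) := by field_simp
      rw [this, map_mul, ← mul_assoc, ← sq, quadraticChar_sq_one hx]
      simp [hx]
  rw [Finset.sum_congr rfl (fun x _ => h1 x), Finset.sum_sub_distrib]
  have h2 : ∑ x : F, quadraticChar F (1 + d * x⁻¹) = ∑ x : F, quadraticChar F x := by
    apply Function.Bijective.sum_comp (e := fun x : F => 1 + d * x⁻¹)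
      (g := fun y => quadraticChar F y)
    apply (Finite.injective_iff_bijective).1
    intro x y hxy
    simpa [hd] using hxy
  rw [h2, quadraticChar_sum_zero hF]
  simp

open Finset in
lemma sqp_pair' {F : Type*} [Field F] [Fintype F] [DecidableEq F] (hF : ringChar F ≠ 2) (u v : F) :
    ∑ c : F, quadraticChar F (u - c) * quadraticChar F (v - c)
      = (if u = v then (Fintype.card F : ℤ) else 0) - 1 := by
  have h0 : ∑ c : F, quadraticChar F (u - c) * quadraticChar F (v - c)
      = ∑ x : F, quadraticChar F x * quadraticChar F (x + (v - u)) := by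
    rw [← Equiv.sum_comp (Equiv.subLeft u)]
    refine Finset.sum_congr rfl fun x _ => ?_
    simp only [Equiv.subLeft_apply]
    congr 2 <;> ring
  rw [h0]
  by_cases h : u = v
  · subst h
    have : ∀ x : F, quadraticChar F x * quadraticChar F (x + (u - u))
       = 1 - if x = 0 then 1 else 0 := by
      intro x
      by_cases hx : x = 0
      · simp [hx]
      · rw [sub_self, add_zero, ← sq, quadraticChar_sq_one hx]; simp [hx]
    rw [Finset.sum_congr rfl (fun x _ => this x), Finset.sum_sub_distrib]
    simp
  · rw [sqp_pair hF _ (sub_ne_zero.2 (Ne.symm h))]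
    simp [h]

/-- The twisted cubic character sums. -/
def sqpS (F : Type*) [Field F] [Fintype F] [DecidableEq F] (c : F) : ℤ :=
  ∑ x : F, quadraticChar F x * quadraticChar F (x ^ 2 - c)

lemma sqp_le_one {F : Type*} [Field F] [Fintype F] [DecidableEq F] (x : F) :
    quadraticChar F x ≤ 1 ∧ -1 ≤ quadraticChar F x := by
  by_cases hx : x = 0
  · simp [hx]
  · rcases quadraticChar_dichotomy hx with h | h <;> rw [h] <;> norm_num

lemma sqpS_upper {F : Type*} [Field F] [Fintype F] [DecidableEq F] (hF : ringChar F ≠ 2) :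
    ∑ c : F, sqpS F c ^ 2 ≤ 2 * (Fintype.card F : ℤ) * (Fintype.card F - 1) := by
  have e1 : ∑ c : F, sqpS F c ^ 2 = ∑ x : F, ∑ y : F, quadraticChar F x * quadraticChar F y *
      ((if x ^ 2 = y ^ 2 then (Fintype.card F : ℤ) else 0) - 1) := by
    simp_rw [← sqp_pair' hF, sqpS, sq (∑ x : F, _), Finset.sum_mul_sum, Finset.mul_sum]
    rw [Finset.sum_comm]
    refine Finset.sum_congr rfl fun x _ => ?_
    rw [Finset.sum_comm]
    refine Finset.sum_congr rfl fun y _ => Finset.sum_congr rfl fun c _ => ?_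
    ring
  have e2 : ∑ c : F, sqpS F c ^ 2 = ∑ x : F, ∑ y : F, quadraticChar F x * quadraticChar F y *
      (if x ^ 2 = y ^ 2 then (Fintype.card F : ℤ) else 0) := by
    rw [e1]
    simp_rw [mul_sub, Finset.sum_sub_distrib, mul_one, ← Finset.mul_sum,
      quadraticChar_sum_zero hF]
    simp
  rw [e2]
  have e3 : ∀ x y : F, quadraticChar F x * quadraticChar F y *
      (if x ^ 2 = y ^ 2 then (Fintype.card F : ℤ) else 0) ≤
      (if x = 0 then 0 else (Fintype.card F : ℤ)) *
        ((if y = x then 1 else 0) + (if y = -x then 1 else 0)) := by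
    intro x y
    by_cases hx : x = 0
    · simp [hx]
    have hq : (0 : ℤ) ≤ Fintype.card F := by positivity
    by_cases hxy : x ^ 2 = y ^ 2
    · have hle : quadraticChar F x * quadraticChar F y ≤ 1 := by
        rw [← map_mul]; exact (sqp_le_one _).1
      have : (1 : ℤ) ≤ ((if y = x then 1 else 0) + (if y = -x then 1 else 0)) := by
        rcases sq_eq_sq_iff_eq_or_eq_neg.1 hxy.symm with h | h
        · rw [if_pos h]; split_ifs <;> norm_num
        · rw [if_pos h]; split_ifs <;> norm_num
      rw [if_pos hxy, if_neg hx]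
      nlinarith
    · rw [if_neg hxy, if_neg hx, mul_zero]
      apply mul_nonneg hq
      split_ifs <;> norm_num
  calc _ ≤ ∑ x : F, ∑ y : F, (if x = 0 then 0 else (Fintype.card F : ℤ)) *
        ((if y = x then 1 else 0) + (if y = -x then 1 else 0)) :=
        Finset.sum_le_sum fun x _ => Finset.sum_le_sum fun y _ => e3 x y
    _ = ∑ x : F, (2 * (Fintype.card F : ℤ) - if x = 0 then 2 * (Fintype.card F : ℤ) else 0) := by
        refine Finset.sum_congr rfl fun x _ => ?_
        rw [← Finset.mul_sum, Finset.sum_add_distrib]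
        simp only [Finset.sum_ite_eq', Finset.mem_univ, if_true]
        split_ifs <;> ring
    _ = _ := by
        rw [Finset.sum_sub_distrib]
        simp
        ring
    _ ≤ _ := le_refl _

lemma sqpS_sq {F : Type*} [Field F] [Fintype F] [DecidableEq F] (t : F) (ht : t ≠ 0) :
    sqpS F (t ^ 2) ^ 2 = sqpS F 1 ^ 2 := by
  have : sqpS F (t ^ 2) = quadraticChar F t * sqpS F 1 := by
    unfold sqpS
    rw [← Equiv.sum_comp (Equiv.mulLeft₀ t ht), Finset.mul_sum]
    refine Finset.sum_congr rfl fun x _ => ?_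
    have : (t * x) ^ 2 - t ^ 2 = t ^ 2 * (x ^ 2 - 1) := by ring
    change quadraticChar F (t * x) * quadraticChar F ((t * x) ^ 2 - t ^ 2) = _
    rw [this, map_mul, map_mul, quadraticChar_sq_one' ht]
    ring
  rw [this, mul_pow, quadraticChar_sq_one ht, one_mul]

lemma sqpS_lower {F : Type*} [Field F] [Fintype F] [DecidableEq F] (hF : ringChar F ≠ 2) :
    ((Fintype.card F : ℤ) - 1) * sqpS F 1 ^ 2 ≤ 2 * ∑ c : F, sqpS F c ^ 2 := by
  have h1 : ((Fintype.card F : ℤ) - 1) * sqpS F 1 ^ 2 ≤ ∑ t : F, sqpS F (t ^ 2) ^ 2 := by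
    have : ((Fintype.card F : ℤ) - 1) * sqpS F 1 ^ 2
        = ∑ t : F, (sqpS F 1 ^ 2 - if t = 0 then sqpS F 1 ^ 2 else 0) := by
      rw [Finset.sum_sub_distrib]; simp; ring
    rw [this]
    refine Finset.sum_le_sum fun t _ => ?_
    by_cases ht : t = 0
    · rw [if_pos ht, sub_self]; positivity
    · rw [if_neg ht, sqpS_sq t ht, sub_zero]
  have h2 : ∑ t : F, sqpS F (t ^ 2) ^ 2
      = ∑ c : F, sqpS F c ^ 2 * (quadraticChar F c + 1) := by
    have : ∀ t : F, sqpS F (t ^ 2) ^ 2 = ∑ c : F, if t ^ 2 = c then sqpS F c ^ 2 else 0 := by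
      intro t; simp
    rw [Finset.sum_congr rfl (fun t _ => this t), Finset.sum_comm]
    refine Finset.sum_congr rfl fun c _ => ?_
    rw [← quadraticChar_card_sqrts hF, ← Finset.sum_filter, Finset.sum_const, nsmul_eq_mul,
      mul_comm]
    congr 3
    ext; simp
  rw [h2] at h1
  refine h1.trans ?_
  rw [Finset.mul_sum]
  refine Finset.sum_le_sum fun c _ => ?_
  nlinarith [(sqp_le_one c).1, sq_nonneg (sqpS F c)]

lemma sqpS_bound {F : Type*} [Field F] [Fintype F] [DecidableEq F] (hF : ringChar F ≠ 2) :
    sqpS F 1 ^ 2 ≤ 4 * Fintype.card F := by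
  have h1 := sqpS_lower hF
  have h2 := sqpS_upper hF
  have h3 : (1 : ℤ) < Fintype.card F := by exact_mod_cast Fintype.one_lt_card
  have : ((Fintype.card F : ℤ) - 1) * sqpS F 1 ^ 2
     ≤ ((Fintype.card F : ℤ) - 1) * (4 * Fintype.card F) := by linarith
  exact le_of_mul_le_mul_left this (by linarith)

lemma sqpS_zero {F : Type*} [Field F] [Fintype F] [DecidableEq F]
    (h : quadraticChar F (-1) = -1) : sqpS F 1 = 0 := by
  have : sqpS F 1 = - sqpS F 1 := by
    conv_lhs => unfold sqpS
    rw [← Equiv.sum_comp (Equiv.neg F), sqpS, ← Finset.sum_neg_distrib]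
    refine Finset.sum_congr rfl fun x _ => ?_
    simp only [Equiv.neg_apply]
    rw [neg_sq, ← neg_one_mul x, map_mul, h]
    ring
  linarith

/-- The weight of a pattern. -/
def sqpW (F : Type*) [Field F] [Fintype F] [DecidableEq F] (e f : ℤ) (a : F) : ℤ :=
  (1 + quadraticChar F a) * (1 + e * quadraticChar F (a + 1)) * (1 + f * quadraticChar F (a + 2))

lemma sqpW_sum {F : Type*} [Field F] [Fintype F] [DecidableEq F] (hF : ringChar F ≠ 2) (e f : ℤ) :
    ∑ a : F, sqpW F e f a = Fintype.card F - e - f - e * f + e * f * sqpS F 1 := by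
  have h2 : (2 : F) ≠ 0 := Ring.two_ne_zero hF
  have s0 := quadraticChar_sum_zero hF
  have s1 : ∑ a : F, quadraticChar F (a + 1) = 0 := by
    rw [← s0]; exact Equiv.sum_comp (Equiv.addRight (1 : F)) (fun y => quadraticChar F y)
  have s2 : ∑ a : F, quadraticChar F (a + 2) = 0 := by
    rw [← s0]; exact Equiv.sum_comp (Equiv.addRight (2 : F)) (fun y => quadraticChar F y)
  have p1 := sqp_pair hF 1 one_ne_zero
  have p2 := sqp_pair hF 2 h2
  have p3 : ∑ a : F, quadraticChar F (a + 1) * quadraticChar F (a + 2) = -1 := by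
    rw [← p1, ← Equiv.sum_comp (Equiv.addRight (1 : F))
      (fun y => quadraticChar F y * quadraticChar F (y + 1))]
    refine Finset.sum_congr rfl fun x _ => ?_
    simp only [Equiv.coe_addRight]
    congr 2; ring
  have p4 : ∑ a : F, quadraticChar F a * quadraticChar F (a + 1) * quadraticChar F (a + 2)
      = sqpS F 1 := by
    rw [sqpS, ← Equiv.sum_comp (Equiv.addRight (1 : F))
      (fun x => quadraticChar F x * quadraticChar F (x ^ 2 - 1))]
    refine Finset.sum_congr rfl fun x _ => ?_
    simp only [Equiv.coe_addRight, ← map_mul]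
    congr 1; ring
  have : ∀ a : F, sqpW F e f a = 1 + quadraticChar F a + e * quadraticChar F (a + 1)
      + f * quadraticChar F (a + 2) + e * (quadraticChar F a * quadraticChar F (a + 1))
      + f * (quadraticChar F a * quadraticChar F (a + 2))
      + e * f * (quadraticChar F (a + 1) * quadraticChar F (a + 2))
      + e * f * (quadraticChar F a * quadraticChar F (a + 1) * quadraticChar F (a + 2)) := by
    intro a; unfold sqpW; ring
  rw [Finset.sum_congr rfl (fun a _ => this a)]
  simp only [Finset.sum_add_distrib, ← Finset.mul_sum, s0, s1, s2, p1, p2, p3, p4]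
  simp
  ring

lemma sqp_roots {F : Type*} [Field F] [Fintype F] [DecidableEq F] (hF : ringChar F ≠ 2) :
    (Finset.univ.filter fun a : F => a ^ 2 + a + 1 = 0 ∧ a ≠ -2).card ≤ 2 ∧
    ((Finset.univ.filter fun a : F => a ^ 2 + a + 1 = 0 ∧ a ≠ -2).card = 0 ∨
      Fintype.card F % 3 = 1) := by
  rcases Finset.eq_empty_or_nonempty
    (Finset.univ.filter fun a : F => a ^ 2 + a + 1 = 0 ∧ a ≠ -2) with h | ⟨w, hw⟩
  · rw [h]; simp
  · simp only [Finset.mem_filter, Finset.mem_univ, true_and] at hw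
    obtain ⟨hw, hw2⟩ := hw
    constructor
    · refine (Finset.card_le_card (t := {w, -1 - w}) ?_).trans Finset.card_le_two
      intro a ha
      simp only [Finset.mem_filter, Finset.mem_univ, true_and] at ha
      simp only [Finset.mem_insert, Finset.mem_singleton]
      have : (a - w) * (a - (-1 - w)) = 0 := by linear_combination ha.1 - hw
      rcases mul_eq_zero.1 this with h | h
      · left; exact sub_eq_zero.1 h
      · right; exact sub_eq_zero.1 h
    · right
      have h3 : w ^ 3 = 1 := by linear_combination (w - 1) * hw
      have h1 : w ≠ 1 := by
        rintro rfl
        apply hw2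
        linear_combination hw
      have hord : orderOf w = 3 := by
        have : Fact (Nat.Prime 3) := ⟨by norm_num⟩
        exact orderOf_eq_prime h3 h1
      have hw0 : w ≠ 0 := by rintro rfl; simp at hw
      have := orderOf_dvd_of_pow_eq_one (FiniteField.pow_card_sub_one_eq_one w hw0)
      rw [hord] at this
      have : 1 < Fintype.card F := Fintype.one_lt_card
      omega

set_option maxHeartbeats 1000000 in
lemma sqp_main {F : Type*} [Field F] [Fintype F] [DecidableEq F] (hF : ringChar F ≠ 2)
    (hcard : 25 < Fintype.card F) (e f : ℤ) (he : e = 1 ∨ e = -1) (hf : f = 1 ∨ f = -1) :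
    ∃ a : F, (a ≠ 0 ∧ a ≠ -1 ∧ a ≠ -2 ∧ a ^ 2 + a + 1 ≠ 0) ∧
      quadraticChar F a = 1 ∧ quadraticChar F (a + 1) = e ∧ quadraticChar F (a + 2) = f := by
  by_contra! hcon
  have h2 : (2 : F) ≠ 0 := Ring.two_ne_zero hF
  have hR := sqp_roots hF
  set R := (Finset.univ.filter fun a : F => a ^ 2 + a + 1 = 0 ∧ a ≠ -2).card with hRdef
  have bnd : ∀ (g : ℤ) (x : F), (g = 1 ∨ g = -1) →
      0 ≤ 1 + g * quadraticChar F x ∧ 1 + g * quadraticChar F x ≤ 2 := by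
    intro g x hg
    have := sqp_le_one x
    rcases hg with rfl | rfl <;> constructor <;> linarith
  have hnn : ∀ a : F, 0 ≤ sqpW F e f a ∧ sqpW F e f a ≤ 8 := by
    intro a
    have h1 := bnd 1 a (Or.inl rfl)
    have h2 := bnd e (a + 1) he
    have h3 := bnd f (a + 2) hf
    rw [one_mul] at h1
    unfold sqpW
    refine ⟨mul_nonneg (mul_nonneg h1.1 h2.1) h3.1, ?_⟩
    have := mul_le_mul (mul_le_mul h1.2 h2.2 h2.1 (by norm_num)) h3.2 h3.1 (by norm_num)
    linarith
  have key : ∀ a : F, sqpW F e f a ≤ (if a = 0 then sqpW F e f 0 else 0)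
      + (if a = -1 then sqpW F e f (-1) else 0) + (if a = -2 then sqpW F e f (-2) else 0)
      + (if a ^ 2 + a + 1 = 0 ∧ a ≠ -2 then 8 else 0) := by
    intro a
    have n0 := (hnn 0).1
    have n1 := (hnn (-1)).1
    have n2 := (hnn (-2)).1
    by_cases a0 : a = 0
    · rw [if_pos a0, a0]; split_ifs <;> linarith
    by_cases a1 : a = -1
    · rw [if_neg a0, if_pos a1, a1]; split_ifs <;> linarith
    by_cases a2 : a = -2
    · rw [if_neg a0, if_neg a1, if_pos a2, a2]; split_ifs <;> linarith
    by_cases a3 : a ^ 2 + a + 1 = 0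
    · rw [if_neg a0, if_neg a1, if_neg a2, if_pos ⟨a3, a2⟩]; linarith [(hnn a).2]
    rw [if_neg a0, if_neg a1, if_neg a2, if_neg (fun h => a3 h.1)]
    have hc := hcon a ⟨a0, a1, a2, a3⟩
    have b1 : a + 1 ≠ 0 := fun h => a1 (eq_neg_of_add_eq_zero_left h)
    have b2 : a + 2 ≠ 0 := fun h => a2 (eq_neg_of_add_eq_zero_left h)
    unfold sqpW
    have opp : ∀ (g : ℤ) (x : F), (g = 1 ∨ g = -1) → x ≠ 0 → quadraticChar F x ≠ g →
        1 + g * quadraticChar F x = 0 := by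
      intro g x hg hx hne
      rcases quadraticChar_dichotomy hx with h | h <;> rw [h] at hne ⊢ <;>
        rcases hg with rfl | rfl
      · exact absurd rfl hne
      · norm_num
      · norm_num
      · exact absurd rfl hne
    by_cases k0 : quadraticChar F a = 1
    · by_cases k1 : quadraticChar F (a + 1) = e
      · rw [opp f _ hf b2 (hc k0 k1)]; simp
      · rw [opp e _ he b1 k1]; simp
    · have := opp 1 _ (Or.inl rfl) a0 k0
      rw [one_mul] at this
      rw [this]; simp
  have hsum := Finset.sum_le_sum (fun a (_ : a ∈ (Finset.univ : Finset F)) => key a)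
  rw [sqpW_sum hF] at hsum
  simp only [Finset.sum_add_distrib, Finset.sum_ite_eq', Finset.mem_univ, if_true] at hsum
  rw [← Finset.sum_filter, Finset.sum_const, ← hRdef, nsmul_eq_mul] at hsum
  have hS := sqpS_bound hF
  have hS0 := sqpS_zero (F := F)
  have c2 := quadraticChar_dichotomy h2
  have c1 := quadraticChar_dichotomy (F := F) (a := -1) (by simp)
  have cm2 : quadraticChar F (-2) = quadraticChar F (-1) * quadraticChar F 2 := by
    rw [← map_mul]; congr 1; ring
  have w0 : sqpW F e f 0 = (1 + e) * (1 + f * quadraticChar F 2) := by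
    simp [sqpW]
  have w1 : sqpW F e f (-1) = (1 + quadraticChar F (-1)) * (1 + f) := by
    have : (-1 + 2 : F) = 1 := by ring
    simp [sqpW, this]
  have w2 : sqpW F e f (-2)
      = (1 + quadraticChar F (-1) * quadraticChar F 2) * (1 + e * quadraticChar F (-1)) := by
    have : (-2 + 1 : F) = -1 := by ring
    simp [sqpW, this, cm2]
  rw [w0, w1, w2] at hsum
  have q1 : quadraticChar F (-1) = 1 → Fintype.card F % 4 = 1 := by
    intro h
    have h3 := FiniteField.isSquare_neg_one_iff.1
      ((quadraticChar_one_iff_isSquare (by simp)).1 h)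
    have := FiniteField.odd_card_of_char_ne_two hF
    omega
  have q2 : quadraticChar F 2 = 1 → Fintype.card F % 8 ≠ 3 ∧ Fintype.card F % 8 ≠ 5 := by
    intro h
    exact FiniteField.isSquare_two_iff.1 ((quadraticChar_one_iff_isSquare h2).1 h)
  generalize quadraticChar F 2 = x2 at *
  generalize quadraticChar F (-1) = x1 at *
  generalize sqpS F 1 = S at *
  generalize Fintype.card F = q at *
  generalize R = r at *
  clear key hnn bnd hcon w0 w1 w2 cm2 hRdef
  obtain ⟨hr2, hr⟩ := hR
  have hq : (25 : ℤ) < q := by exact_mod_cast hcard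
  have hr2' : (r : ℤ) ≤ 2 := by exact_mod_cast hr2
  rcases c1 with rfl | rfl
  · have q1 := q1 rfl
    -- a uniform crude estimate
    have hT : (q : ℤ) - 15 - 8 * r ≤ |S| := by
      have := neg_abs_le S
      have := le_abs_self S
      rcases c2 with rfl | rfl <;> rcases he with rfl | rfl <;> rcases hf with rfl | rfl <;>
        linarith
    have hS' : |S| ^ 2 ≤ 4 * q := by rwa [sq_abs]
    rcases hr with rfl | hr
    · push_cast at hT
      nlinarith
    · by_cases h49 : 49 ≤ q
      · have : (49 : ℤ) ≤ q := by exact_mod_cast h49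
        nlinarith
      · have : q = 37 := by omega
        subst this
        rcases c2 with rfl | rfl
        · have := q2 rfl
          omega
        · have : (14 : ℤ) ≤ |S| := by
            have := neg_abs_le S
            have := le_abs_self S
            push_cast at hsum
            rcases he with rfl | rfl <;> rcases hf with rfl | rfl <;>
              linarith
          push_cast at hS'
          nlinarith
  · have hS0 := hS0 rfl
    subst hS0
    rcases c2 with rfl | rfl <;> rcases he with rfl | rfl <;> rcases hf with rfl | rfl <;> linarith


/-- Lemma 16: in a finite field `F` of characteristic `≠ 2` with more than `25` elements
there exist elements `a00, a01, a10, a11`, each different from `0`, `−1`, `−2` and with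
`a² + a + 1 ≠ 0`, realizing all four square/nonsquare patterns for `(a+1, a+2)`. -/
theorem square_patterns_exist (F : Type*) [Field F] [Fintype F]
    (hchar : ringChar F ≠ 2) (hcard : 25 < Fintype.card F) :
    ∃ a00 a01 a10 a11 : F,
      (∀ a ∈ [a00, a01, a10, a11],
        a ≠ 0 ∧ a ≠ -1 ∧ a ≠ -2 ∧ a ^ 2 + a + 1 ≠ 0) ∧
      (IsSquare a00 ∧ IsSquare (a00 + 1) ∧ IsSquare (a00 + 2)) ∧
      (IsSquare a01 ∧ IsSquare (a01 + 1) ∧ ¬ IsSquare (a01 + 2)) ∧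
      (IsSquare a10 ∧ ¬ IsSquare (a10 + 1) ∧ IsSquare (a10 + 2)) ∧
      (IsSquare a11 ∧ ¬ IsSquare (a11 + 1) ∧ ¬ IsSquare (a11 + 2)) := by

  classical
  have key := sqp_main hchar hcard
  have sqr : ∀ a : F, quadraticChar F a = 1 → IsSquare a := by
    intro a h
    have : a ≠ 0 := by rintro rfl; simp at h
    exact (quadraticChar_one_iff_isSquare this).1 h
  have nsq : ∀ a : F, quadraticChar F a = -1 → ¬ IsSquare a := by
    intro a h
    exact quadraticChar_neg_one_iff_not_isSquare.1 h
  obtain ⟨a, ha, a1, a2, a3⟩ := key 1 1 (Or.inl rfl) (Or.inl rfl)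
  obtain ⟨b, hb, b1, b2, b3⟩ := key 1 (-1) (Or.inl rfl) (Or.inr rfl)
  obtain ⟨c, hc, c1, c2, c3⟩ := key (-1) 1 (Or.inr rfl) (Or.inl rfl)
  obtain ⟨d, hd, d1, d2, d3⟩ := key (-1) (-1) (Or.inr rfl) (Or.inr rfl)
  refine ⟨a, b, c, d, ?_, ⟨sqr _ a1, sqr _ a2, sqr _ a3⟩, ⟨sqr _ b1, sqr _ b2, nsq _ b3⟩,
    ⟨sqr _ c1, nsq _ c2, sqr _ c3⟩, ⟨sqr _ d1, nsq _ d2, nsq _ d3⟩⟩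
  intro x hx
  simp only [List.mem_cons, List.not_mem_nil, or_false] at hx
  rcases hx with rfl | rfl | rfl | rfl <;> assumption
end
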